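/- Let G be a convex triangular grid, B' ⊆ B(G) a set of boundary edges, T a set of little triangles of G, and F = B' ∪ ⋃_{Δ∈T} E(Δ) (where E(Δ) denotes the three edges of the little triangle Δ). Let h₀ : F → ℤ. If the polyhedron C(G,h₀) is nonempty, then it contains an integer point, i.e., there is an integer concave cocirculation h in G with h(e)=h₀(e) for all e ∈ F. -/

import Mathlib

open scoped BigOperators

attribute [local instance] Classical.propDecidable

noncomputable section

/-- Points of the plane. -/
abbrev Pt : Type := ℝ × ℝ

/-- Directed edges: ordered pairs of points. -/
abbrev Ed : Type := Pt × Pt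

/-- The three generating vectors ξ₁ = (1,0), ξ₂ = (−1/2, √3/2), ξ₃ = (−1/2, −√3/2). -/
noncomputable def xiv : Fin 3 → Pt
  | 0 => ((1 : ℝ), (0 : ℝ))
  | 1 => (-(1 / 2 : ℝ), Real.sqrt 3 / 2)
  | 2 => (-(1 / 2 : ℝ), -(Real.sqrt 3 / 2))

/-- A little (lattice) triangle of the triangular grid, given by its base point and
its orientation (`up = true` for an upward triangle). -/
structure GridTriangle : Type where
  base : Pt
  up : Bool

noncomputable def GridTriangle.v0 (T : GridTriangle) : Pt := T.base
noncomputable def GridTriangle.v1 (T : GridTriangle) : Pt := T.base + xiv 0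
noncomputable def GridTriangle.v2 (T : GridTriangle) : Pt :=
  if T.up then T.base + xiv 0 + xiv 1 else T.base + xiv 0 + xiv 2

/-- The three directed edges of the 3-circuit surrounding a little triangle;
each has direction ξ₁, ξ₂ or ξ₃. -/
noncomputable def GridTriangle.e0 (T : GridTriangle) : Ed := (T.v0, T.v1)
noncomputable def GridTriangle.e1 (T : GridTriangle) : Ed := (T.v1, T.v2)
noncomputable def GridTriangle.e2 (T : GridTriangle) : Ed := (T.v2, T.v0)

noncomputable def GridTriangle.edgeFinset (T : GridTriangle) : Finset Ed := {T.e0, T.e1, T.e2}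

/-- The closed region spanned by a little triangle. -/
noncomputable def GridTriangle.region (T : GridTriangle) : Set Pt :=
  convexHull ℝ {T.v0, T.v1, T.v2}

/-- Vectors of the lattice generated by ξ₁ and ξ₂. -/
def IsLatticeVec (p : Pt) : Prop := ∃ m n : ℤ, p = (m : ℝ) • xiv 0 + (n : ℝ) • xiv 1

/-- A convex triangular grid: a finite nonempty set of little triangles of a common
translate of the triangular lattice whose union is a convex polygon.  (Its vertices,
edges, bounded faces and boundary are then those of the planar digraph formed by the
edges of the little triangles.) -/
structure ConvexGrid : Type where
  tris : Finset GridTriangle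
  nonempty : tris.Nonempty
  aligned : ∀ T ∈ tris, ∀ T' ∈ tris, IsLatticeVec (T.base - T'.base)
  convex : Convex ℝ (⋃ T ∈ tris, GridTriangle.region T)

/-- The region R(G) spanned by the grid. -/
noncomputable def ConvexGrid.region (G : ConvexGrid) : Set Pt :=
  ⋃ T ∈ G.tris, GridTriangle.region T

/-- The (directed) edge set E(G) of the grid. -/
noncomputable def ConvexGrid.edges (G : ConvexGrid) : Finset Ed :=
  G.tris.biUnion GridTriangle.edgeFinset

/-- The boundary edges B(G): edges lying in exactly one little triangle. -/
noncomputable def ConvexGrid.boundary (G : ConvexGrid) : Finset Ed :=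
  G.edges.filter fun e => (G.tris.filter fun T => e ∈ T.edgeFinset).card = 1

/-- A cocirculation: `h(e)+h(e')+h(e'')=0` around each little triangle. -/
def IsCocirculation (G : ConvexGrid) (h : Ed → ℝ) : Prop :=
  ∀ T ∈ G.tris, h T.e0 + h T.e1 + h T.e2 = 0

/-- `g` coincides with an affine function on `S`. -/
def AffineOn (g : Pt → ℝ) (S : Set Pt) : Prop :=
  ∃ φ : Pt →ᵃ[ℝ] ℝ, ∀ x ∈ S, g x = φ x

/-- A concave cocirculation: a cocirculation induced by a concave function on R(G)
which is affinely linear within each little triangle. -/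
def IsConcaveCocirculation (G : ConvexGrid) (h : Ed → ℝ) : Prop :=
  IsCocirculation G h ∧
  ∃ g : Pt → ℝ, ConcaveOn ℝ G.region g ∧ (∀ T ∈ G.tris, AffineOn g T.region) ∧
    ∀ e ∈ G.edges, h e = g e.2 - g e.1

/-- The polyhedron C(G,h₀) of concave cocirculations agreeing with h₀ on F. -/
def CC (G : ConvexGrid) (F : Set Ed) (h₀ : Ed → ℝ) : Set (Ed → ℝ) :=
  {h | IsConcaveCocirculation G h ∧ ∀ e ∈ F, h e = h₀ e}

/-- `h` is a vertex (extreme point) of the set `C` of cocirculations, regarded as a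
subset of ℝ^{E(G)} (only the coordinates on the edges of `G` matter). -/
def IsVertexOf (G : ConvexGrid) (C : Set (Ed → ℝ)) (h : Ed → ℝ) : Prop :=
  h ∈ C ∧ ∀ h₁ ∈ C, ∀ h₂ ∈ C,
    (∀ e ∈ G.edges, h e = (h₁ e + h₂ e) / 2) → ∀ e ∈ G.edges, h₁ e = h₂ e

section Part1

abbrev Z3 : Type := Fin 3 → ℤ

/-- unit vectors of ℤ³ -/
def ee (i : Fin 3) : Z3 := fun l => if l = i then 1 else 0

/-- diagonal shift vectors -/
def sh (n : ℤ) : Z3 := fun _ => n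

lemma ee_self (i : Fin 3) : ee i i = 1 := by simp [ee]
lemma ee_ne {i l : Fin 3} (h : l ≠ i) : ee i l = 0 := by simp [ee, h]
lemma sh_apply (n : ℤ) (l : Fin 3) : sh n l = n := rfl

lemma fin3_cases {i j k : Fin 3} (hij : i ≠ j) (hik : i ≠ k) (hjk : j ≠ k) (l : Fin 3) :
    l = i ∨ l = j ∨ l = k := by omega

lemma ext3 {i j k : Fin 3} (hij : i ≠ j) (hik : i ≠ k) (hjk : j ≠ k) {p q : Z3}
    (h1 : p i = q i) (h2 : p j = q j) (h3 : p k = q k) : p = q := by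
  funext l
  rcases fin3_cases hij hik hjk l with rfl | rfl | rfl <;> assumption

lemma exists_third {i j : Fin 3} (hij : i ≠ j) : ∃ k, i ≠ k ∧ j ≠ k := by
  by_cases h0 : i ≠ 0 ∧ j ≠ 0
  · exact ⟨0, h0⟩
  by_cases h1 : i ≠ 1 ∧ j ≠ 1
  · exact ⟨1, h1⟩
  exact ⟨2, by omega, by omega⟩

lemma sum3 {M : Type*} [AddCommMonoid M] {i j k : Fin 3} (hij : i ≠ j) (hik : i ≠ k) (hjk : j ≠ k)
    (x : Fin 3 → M) : ∑ l, x l = x i + x j + x k := by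
  have : (Finset.univ : Finset (Fin 3)) = {i, j, k} := by
    ext l; simp; exact fin3_cases hij hik hjk l
  rw [this, Finset.sum_insert (by simp [hij, hik]), Finset.sum_pair hjk, add_assoc]

lemma ee_sum {i j k : Fin 3} (hij : i ≠ j) (hik : i ≠ k) (hjk : j ≠ k) :
    ee i + ee j + ee k = sh 1 := by
  apply ext3 hij hik hjk <;>
    simp [ee_self, sh_apply, ee_ne, hij, hik, hjk, hij.symm, hik.symm, hjk.symm]

structure Dom (V : Set Z3) : Prop where
  diag : ∀ p n, p ∈ V → p + sh n ∈ V
  inf : ∀ p q, p ∈ V → q ∈ V → p ⊓ q ∈ V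
  sup : ∀ p q, p ∈ V → q ∈ V → p ⊔ q ∈ V
  tri : ∃ u i j, i ≠ j ∧ u ∈ V ∧ u + ee i ∈ V ∧ u + ee i + ee j ∈ V
  fin : {p | p ∈ V ∧ p 2 = 0}.Finite

/-- chain through a triangle -/
def chn (u : Z3) (i j : Fin 3) (n : ℤ) : Z3 := fun l =>
  u l + (n + (if l = i then 2 else if l = j then 1 else 0)) / 3

lemma chn_cases (u : Z3) {i j k : Fin 3} (hij : i ≠ j) (hik : i ≠ k) (hjk : j ≠ k) (n : ℤ) :
    ∃ m, chn u i j n = u + sh m ∨ chn u i j n = u + ee i + sh m ∨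
      chn u i j n = u + ee i + ee j + sh m := by
  refine ⟨n / 3, ?_⟩
  have h : n % 3 = 0 ∨ n % 3 = 1 ∨ n % 3 = 2 := by omega
  rcases h with h | h | h
  · left
    apply ext3 hij hik hjk <;> simp [chn, sh_apply, hij.symm, hik.symm, hjk.symm] <;> omega
  · right; left
    apply ext3 hij hik hjk <;>
     simp [chn, sh_apply, ee_self, ee_ne, hij.symm, hik.symm, hjk.symm] <;> omega
  · right; right
    apply ext3 hij hik hjk <;>
     simp [chn, sh_apply, ee_self, ee_ne, hij, hij.symm, hik.symm, hjk.symm] <;> omega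

lemma chn_succ (u : Z3) {i j k : Fin 3} (hij : i ≠ j) (hik : i ≠ k) (hjk : j ≠ k) (n : ℤ) :
    ∃ m, chn u i j (n + 1) = chn u i j n + ee m := by
  have h : n % 3 = 0 ∨ n % 3 = 1 ∨ n % 3 = 2 := by omega
  rcases h with h | h | h
  · refine ⟨i, ?_⟩
    apply ext3 hij hik hjk <;>
     simp [chn, ee_self, ee_ne, hij.symm, hik.symm, hjk.symm] <;> omega
  · refine ⟨j, ?_⟩
    apply ext3 hij hik hjk <;>
     simp [chn, ee_self, ee_ne, hij, hij.symm, hik.symm, hjk.symm] <;> omega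
  · refine ⟨k, ?_⟩
    apply ext3 hij hik hjk <;>
     simp [chn, ee_self, ee_ne, hij, hik, hjk, hij.symm, hik.symm, hjk.symm] <;> omega

/-- bound -/
def nrm (p : Z3) : ℤ := |p 0| + |p 1| + |p 2|

lemma le_nrm (p : Z3) (l : Fin 3) : |p l| ≤ nrm p := by
  have := abs_nonneg (p 0); have := abs_nonneg (p 1); have := abs_nonneg (p 2)
  fin_cases l <;> simp [nrm] <;> linarith

lemma chn_le (u q : Z3) (i j : Fin 3) : ∃ n, chn u i j n ≤ q := by
  refine ⟨- 3 * (nrm u + nrm q + 1), fun l => ?_⟩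
  have h1 := le_nrm u l; have h2 := le_nrm q l
  rw [abs_le] at h1 h2
  simp only [chn]
  split_ifs <;> omega

lemma le_chn (u q : Z3) (i j : Fin 3) (n : ℤ) : ∃ N : ℕ, q ≤ chn u i j (n + N) := by
  refine ⟨(3 * (nrm u + nrm q + 1) - n).toNat, fun l => ?_⟩
  have h1 := le_nrm u l; have h2 := le_nrm q l
  rw [abs_le] at h1 h2
  have := Int.self_le_toNat (3 * (nrm u + nrm q + 1) - n)
  simp only [chn]
  split_ifs <;> omega

variable {V : Set Z3}

lemma Dom.chn_mem (hV : Dom V) {u : Z3} {i j : Fin 3} (hij : i ≠ j)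
    (h0 : u ∈ V) (h1 : u + ee i ∈ V) (h2 : u + ee i + ee j ∈ V) (n : ℤ) : chn u i j n ∈ V := by
  obtain ⟨k, hik, hjk⟩ := exists_third hij
  obtain ⟨m, h | h | h⟩ := chn_cases u hij hik hjk n <;> rw [h] <;> apply hV.diag <;> assumption

/-- existence of unit steps upward -/
lemma Dom.step_up (hV : Dom V) {r p : Z3} (hr : r ∈ V) (hp : p ∈ V) (hle : r ≤ p) (hne : r ≠ p) :
    ∃ m, r m < p m ∧ r + ee m ∈ V := by
  obtain ⟨u, i, j, hij, h0, h1, h2⟩ := hV.tri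
  obtain ⟨k, hik, hjk⟩ := exists_third hij
  obtain ⟨n, hn⟩ := chn_le u r i j
  obtain ⟨N, hN⟩ := le_chn u p i j n
  have hex : ∃ N : ℕ, ¬ (chn u i j (n + N) ⊓ p ≤ r) := by
    refine ⟨N, fun h => hne (le_antisymm hle ?_)⟩
    rwa [inf_eq_right.2 hN] at h
  have hs := Nat.find_spec hex
  have hmin := fun m => Nat.find_min hex (m := m)
  generalize Nat.find hex = M at hs hmin
  rcases M with _ | M
  · exfalso; apply hs
    simp only [Nat.cast_zero, add_zero]
    exact inf_le_left.trans hn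
  · have hM := not_not.1 (hmin M (Nat.lt_succ_self M))
    obtain ⟨m, hm⟩ := chn_succ u hij hik hjk (n + M)
    have hc : chn u i j (n + M) + ee m ∈ V := hm ▸ hV.chn_mem hij h0 h1 h2 _
    have hs' : ¬ ((chn u i j (n + M) + ee m) ⊓ p ≤ r) := by
      rw [← hm]; push_cast at hs; rwa [← add_assoc] at hs
    generalize chn u i j (n + M) = c at hM hc hs'
    have key : ∀ l, l ≠ m → (c l + ee m l) ⊓ p l ≤ r l := fun l hl => by
      have := hM l; simpa [ee_ne hl] using this
    have hmm : r m < (c m + 1) ⊓ p m := by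
      by_contra hcon
      apply hs'
      intro l
      by_cases hl : l = m
      · subst hl; simp only [Pi.add_apply, Pi.inf_apply, ee_self]; omega
      · simpa using key l hl
    have hM' := hM m
    simp only [Pi.inf_apply] at hM'
    refine ⟨m, lt_of_lt_of_le hmm inf_le_right, ?_⟩
    have : r + ee m = (r ⊔ (c + ee m)) ⊓ p := by
      funext l
      by_cases hl : l = m
      · subst hl; simp only [Pi.add_apply, Pi.inf_apply, Pi.sup_apply, ee_self]; omega
      · have h1 := key l hl; have h2 := hle l
        simp only [Pi.add_apply, Pi.inf_apply, Pi.sup_apply, ee_ne hl] at *; omega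
    rw [this]
    exact hV.inf _ _ (hV.sup _ _ hr hc) hp

/-- existence of unit steps downward -/
lemma Dom.step_down (hV : Dom V) {r p : Z3} (hr : r ∈ V) (hp : p ∈ V) (hle : r ≤ p) (hne : r ≠ p) :
    ∃ m, r m < p m ∧ p - ee m ∈ V := by
  -- induct on the size, using step_up
  have main : ∀ N : ℕ, ∀ r, r ∈ V → r ≤ p → r ≠ p → ((∑ l, (p l - r l)) ≤ N) →
      ∃ m, r m < p m ∧ p - ee m ∈ V := by
    intro N
    induction N with
    | zero =>
      intro r hr hle hne hN
      exfalso; apply hne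
      have h0 : r 0 ≤ p 0 := hle 0
      have h1 : r 1 ≤ p 1 := hle 1
      have h2 : r 2 ≤ p 2 := hle 2
      simp [Fin.sum_univ_three] at hN
      funext l; fin_cases l <;> simp <;> omega
    | succ N ih =>
      intro r hr hle hne hN
      obtain ⟨m, hm, hmV⟩ := hV.step_up hr hp hle hne
      by_cases h : r + ee m = p
      · refine ⟨m, hm, ?_⟩; rw [← h]; simpa using hr
      · have hle' : r + ee m ≤ p := by
          intro l
          by_cases hl : l = m
          · subst hl; simp [ee_self]; omega
          · simpa [ee_ne hl] using hle l
        obtain ⟨m', h1, h2⟩ := ih (r + ee m) hmV hle' h (by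
          have : ∑ l, (p l - (r + ee m) l) = ∑ l, (p l - r l) - 1 := by
            simp [Finset.sum_sub_distrib, Finset.sum_add_distrib, ee]; ring
          rw [this]; push_cast at hN; linarith)
        refine ⟨m', lt_of_le_of_lt ?_ h1, h2⟩
        simp [ee]; split_ifs <;> simp
  exact main (∑ l, (p l - r l)).toNat r hr hle hne (Int.self_le_toNat _)

/-- rhombus inequalities -/
def Rh (V : Set Z3) (f : Z3 → ℝ) : Prop :=
  ∀ p i j, i ≠ j → p ∈ V → p + ee i ∈ V → p + ee j ∈ V → p + ee i + ee j ∈ V →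
    f (p + ee i) + f (p + ee j) ≤ f p + f (p + ee i + ee j)

def DInv (f : Z3 → ℝ) : Prop := ∀ p n, f (p + sh n) = f p

lemma Dom.sup_unit (hV : Dom V) {p : Z3} {i j : Fin 3} (hij : i ≠ j) (h1 : p + ee i ∈ V)
    (h2 : p + ee j ∈ V) : p + ee i + ee j ∈ V := by
  have : p + ee i + ee j = (p + ee i) ⊔ (p + ee j) := by
    funext l
    by_cases hl : l = i
    · subst hl; simp [ee_self, ee_ne hij]
    · by_cases hl' : l = j
      · subst hl'; simp [ee_self, ee_ne hl]
      · simp [ee_ne hl, ee_ne hl']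
  rw [this]; exact hV.sup _ _ h1 h2

lemma Dom.inf_unit (hV : Dom V) {p : Z3} {i j : Fin 3} (hij : i ≠ j) (h1 : p + ee i ∈ V)
    (h2 : p + ee j ∈ V) : p ∈ V := by
  have : p = (p + ee i) ⊓ (p + ee j) := by
    funext l
    by_cases hl : l = i
    · subst hl; simp [ee_self, ee_ne hij]
    · by_cases hl' : l = j
      · subst hl'; simp [ee_self, ee_ne hl]
      · simp [ee_ne hl, ee_ne hl']
  rw [this]; exact hV.inf _ _ h1 h2

lemma sum_step (p r : Z3) (m : Fin 3) : ∑ l, (p l - (r + ee m) l) = ∑ l, (p l - r l) - 1 := by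
  simp [Finset.sum_sub_distrib, Finset.sum_add_distrib, ee]; ring

lemma le_step {r p : Z3} {m : Fin 3} (hle : r ≤ p) (hm : r m < p m) : r + ee m ≤ p := by
  intro l
  by_cases hl : l = m
  · subst hl; simp [ee_self]; omega
  · simpa [ee_ne hl] using hle l

lemma eq_of_sum_le {r p : Z3} (hle : r ≤ p) (hN : (∑ l, (p l - r l)) ≤ 0) : r = p := by
  have h0 : r 0 ≤ p 0 := hle 0
  have h1 : r 1 ≤ p 1 := hle 1
  have h2 : r 2 ≤ p 2 := hle 2
  simp [Fin.sum_univ_three] at hN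
  funext l; fin_cases l <;> simp <;> omega

lemma Rh.step (hV : Dom V) {f : Z3 → ℝ} (hf : Rh V f) {p q : Z3} {i : Fin 3}
    (hp : p ∈ V) (hpi : p + ee i ∈ V) (hq : q ∈ V) (hle : p ≤ q) (hi : q i = p i) :
    f (p + ee i) - f p ≤ f (q + ee i) - f q := by
  have main : ∀ N : ℕ, ∀ p, p ∈ V → p + ee i ∈ V → p ≤ q → q i = p i → (∑ l, (q l - p l)) ≤ N →
     f (p + ee i) - f p ≤ f (q + ee i) - f q := by
    intro N
    induction N with
    | zero =>
      intro p hp hpi hle hi hN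
      rw [eq_of_sum_le hle (by simpa using hN)]
    | succ N ih =>
      intro p hp hpi hle hi hN
      by_cases hpq : p = q
      · rw [hpq]
      obtain ⟨m, hm, hmV⟩ := hV.step_up hp hq hle hpq
      have hmi : m ≠ i := by rintro rfl; omega
      have h3 := hV.sup_unit hmi hmV hpi
      have h4 := hf p m i hmi hp hmV hpi h3
      have h5 := ih (p + ee m) hmV h3 (le_step hle hm) (by simp [ee_ne hmi.symm, hi])
        (by rw [sum_step]; push_cast at hN; linarith)
      linarith
  exact main _ p hp hpi hle hi (Int.self_le_toNat _)

lemma Rh.supermod (hV : Dom V) {f : Z3 → ℝ} (hf : Rh V f) {p q : Z3} (hp : p ∈ V) (hq : q ∈ V) :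
    f p + f q ≤ f (p ⊓ q) + f (p ⊔ q) := by
  have main : ∀ N : ℕ, ∀ r q, r ∈ V → q ∈ V → r ≤ q → r ≤ p → p ⊓ q ≤ r →
      (∑ l, (p l - r l)) ≤ N → f p + f q ≤ f r + f (p ⊔ q) := by
    intro N
    induction N with
    | zero =>
      intro r q hr hq hrq hrp hpq hN
      have := eq_of_sum_le hrp (by simpa using hN)
      subst this
      rw [sup_eq_right.2 hrq]
    | succ N ih =>
      intro r q hr hq hrq hrp hpq hN
      by_cases h : r = p
      · subst h; rw [sup_eq_right.2 hrq]
      obtain ⟨m, hm, hmV⟩ := hV.step_up hr hp hrp h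
      have hqm : q m = r m := by
        have h1 := hpq m
        have h2 : r m ≤ q m := hrq m
        simp only [Pi.inf_apply] at h1; omega
      have hq' : q + ee m = q ⊔ (r + ee m) := by
        funext l
        by_cases hl : l = m
        · subst hl; simp [ee_self]; omega
        · have := hrq l
          simp [ee_ne hl]; omega
      have hq'V : q + ee m ∈ V := hq' ▸ hV.sup _ _ hq hmV
      have h3 := ih (r + ee m) (q + ee m) hmV hq'V (by gcongr) (le_step hrp hm) (by
        intro l
        have h1 := hpq l
        by_cases hl : l = m
        · subst hl; simp [ee_self] at *; omega
        · simpa [ee_ne hl] using h1) (by rw [sum_step]; push_cast at hN; linarith)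
      have h4 := hf.step hV hr hmV hq hrq hqm
      have h5 : p ⊔ (q + ee m) = p ⊔ q := by
        rw [hq', ← sup_assoc, sup_eq_left]
        exact (le_step hrp hm).trans le_sup_left
      rw [h5] at h3
      linarith
  exact main _ (p ⊓ q) q (hV.inf _ _ hp hq) hq inf_le_right inf_le_left le_rfl (Int.self_le_toNat _)

/-- linear functional -/
def dot (P : Fin 3 → ℝ) (v : Z3) : ℝ := ∑ l, P l * v l

lemma dot_add (P : Fin 3 → ℝ) (v w : Z3) : dot P (v + w) = dot P v + dot P w := by
  simp [dot, mul_add, Finset.sum_add_distrib]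
lemma dot_sub (P : Fin 3 → ℝ) (v w : Z3) : dot P (v - w) = dot P v - dot P w := by
  simp [dot, mul_sub, Finset.sum_sub_distrib]
lemma dot_ee (P : Fin 3 → ℝ) (i : Fin 3) : dot P (ee i) = P i := by
  simp [dot, ee]
lemma dot_sh {P : Fin 3 → ℝ} (hP : ∑ l, P l = 0) (n : ℤ) : dot P (sh n) = 0 := by
  simp [dot, sh, ← Finset.sum_mul, hP]

/-- contact set of a gradient -/
def QQ (V : Set Z3) (f : Z3 → ℝ) (P : Fin 3 → ℝ) : Set Z3 :=
  {v | v ∈ V ∧ ∀ v' ∈ V, f v' - dot P v' ≤ f v - dot P v}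

lemma Rh.subdot {f : Z3 → ℝ} (hf : Rh V f) (P : Fin 3 → ℝ) : Rh V (fun v => f v - dot P v) := by
  intro p i j hij h0 h1 h2 h3
  have := hf p i j hij h0 h1 h2 h3
  simp only [dot_add]
  linarith

lemma Rh.max_of_chain (hV : Dom V) {f : Z3 → ℝ} (hf : Rh V f) (hinv : DInv f) {u : Z3} {i j : Fin 3}
    (hij : i ≠ j) (h0 : u ∈ V) (h1 : u + ee i ∈ V) (h2 : u + ee i + ee j ∈ V)
    (e1 : f (u + ee i) = f u) (e2 : f (u + ee i + ee j) = f u) {q : Z3} (hq : q ∈ V) :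
    f q ≤ f u := by
  obtain ⟨k, hik, hjk⟩ := exists_third hij
  have hc : ∀ n, f (chn u i j n) = f u := by
    intro n
    obtain ⟨m, h | h | h⟩ := chn_cases u hij hik hjk n <;> rw [h, hinv]
    · exact e1
    · exact e2
  have hcV := hV.chn_mem hij h0 h1 h2
  have main : ∀ N : ℕ, ∀ q ∈ V, ∀ n : ℤ, chn u i j n ≤ q → q ≤ chn u i j (n + N) → f q ≤ f u := by
    intro N
    induction N with
    | zero =>
      intro q hq n hn hn'
      have : q = chn u i j n := le_antisymm (by simpa using hn') hn
      rw [this, hc]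
    | succ N ih =>
      intro q hq n hn hn'
      obtain ⟨m, hm⟩ := chn_succ u hij hik hjk (n + N)
      have h3 := hf.supermod hV hq (hcV (n + N))
      have hmono : chn u i j n ≤ chn u i j (n + N) := by
        intro l; simp only [chn]; split_ifs <;> omega
      have h4 := ih (q ⊓ chn u i j (n + N)) (hV.inf _ _ hq (hcV _)) n (le_inf hn hmono) inf_le_right
      have h5 : f (q ⊔ chn u i j (n + N)) = f u := by
        have h6 : q ≤ chn u i j (n + N) + ee m := by
          rw [← hm]; push_cast at hn'; rwa [← add_assoc] at hn'
        by_cases h7 : q m ≤ chn u i j (n + N) m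
        · have : q ⊔ chn u i j (n + N) = chn u i j (n + N) := by
            rw [sup_eq_right]
            intro l
            by_cases hl : l = m
            · subst hl; exact h7
            · simpa [ee_ne hl] using h6 l
          rw [this, hc]
        · have : q ⊔ chn u i j (n + N) = chn u i j (n + N + 1) := by
            rw [hm]
            funext l
            have := h6 l
            by_cases hl : l = m
            · subst hl; simp [ee_self] at *; omega
            · simp [ee_ne hl] at *; omega
          rw [this, hc]
      rw [hc, h5] at h3
      linarith
  obtain ⟨n, hn⟩ := chn_le u q i j
  obtain ⟨N, hN⟩ := le_chn u q i j n
  exact main N q hq n hn hN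

lemma DInv.subdot {f : Z3 → ℝ} (hf : DInv f) {P : Fin 3 → ℝ} (hP : ∑ l, P l = 0) :
    DInv (fun v => f v - dot P v) := by
  intro p n; simp only [dot_add, dot_sh hP, hf p n, add_zero]

/-- contact sets are again domains as soon as they contain a triangle -/
lemma QQ_dom (hV : Dom V) {f : Z3 → ℝ} (hf : Rh V f) (hinv : DInv f) {P : Fin 3 → ℝ}
    (hP : ∑ l, P l = 0)
    (ht : ∃ u i j, i ≠ j ∧ u ∈ QQ V f P ∧ u + ee i ∈ QQ V f P ∧ u + ee i + ee j ∈ QQ V f P) :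
    Dom (QQ V f P) where
  diag p n hp := by
    refine ⟨hV.diag _ _ hp.1, fun v' hv' => ?_⟩
    have := (hinv.subdot hP) p n
    simp only at this
    rw [this]; exact hp.2 v' hv'
  inf p q hp hq := by
    refine ⟨hV.inf _ _ hp.1 hq.1, fun v' hv' => ?_⟩
    have h1 := (hf.subdot P).supermod hV hp.1 hq.1
    have h2 := hp.2 _ (hV.sup _ _ hp.1 hq.1)
    have h3 := hq.2 v' hv'
    linarith
  sup p q hp hq := by
    refine ⟨hV.sup _ _ hp.1 hq.1, fun v' hv' => ?_⟩
    have h1 := (hf.subdot P).supermod hV hp.1 hq.1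
    have h2 := hp.2 _ (hV.inf _ _ hp.1 hq.1)
    have h3 := hq.2 v' hv'
    linarith
  tri := ht
  fin := hV.fin.subset (fun p hp => ⟨hp.1.1, hp.2⟩)

/-- gradient of the triangle (u; i, j) -/
def grad (f : Z3 → ℝ) (u : Z3) (i j : Fin 3) : Fin 3 → ℝ := fun l =>
  if l = i then f (u + ee i) - f u else if l = j then f (u + ee i + ee j) - f (u + ee i)
    else f u - f (u + ee i + ee j)

lemma grad_sum (f : Z3 → ℝ) (u : Z3) {i j : Fin 3} (hij : i ≠ j) : ∑ l, grad f u i j l = 0 := by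
  obtain ⟨k, hik, hjk⟩ := exists_third hij
  rw [sum3 hij hik hjk]; simp [grad, hij.symm, hik.symm, hjk.symm]

lemma grad_i (f : Z3 → ℝ) (u : Z3) (i j : Fin 3) : grad f u i j i = f (u + ee i) - f u := by
  simp [grad]
lemma grad_j (f : Z3 → ℝ) (u : Z3) {i j : Fin 3} (hij : i ≠ j) :
    grad f u i j j = f (u + ee i + ee j) - f (u + ee i) := by
  simp [grad, hij.symm]

lemma grad_mem (hV : Dom V) {f : Z3 → ℝ} (hf : Rh V f) (hinv : DInv f) {u : Z3} {i j : Fin 3}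
    (hij : i ≠ j) (h0 : u ∈ V) (h1 : u + ee i ∈ V) (h2 : u + ee i + ee j ∈ V) :
    u ∈ QQ V f (grad f u i j) ∧ u + ee i ∈ QQ V f (grad f u i j) ∧
      u + ee i + ee j ∈ QQ V f (grad f u i j) := by
  set P := grad f u i j with hPd
  have hP : ∑ l, P l = 0 := grad_sum f u hij
  have e1 : f (u + ee i) - dot P (u + ee i) = f u - dot P u := by
    rw [dot_add, dot_ee, hPd, grad_i]; ring
  have e2 : f (u + ee i + ee j) - dot P (u + ee i + ee j) = f u - dot P u := by
    rw [dot_add, dot_add, dot_ee, dot_ee, hPd, grad_i, grad_j f u hij]; ring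
  have h := fun q hq => (hf.subdot P).max_of_chain hV (hinv.subdot hP) hij h0 h1 h2 e1 e2 (q := q) hq
  refine ⟨⟨h0, h⟩, ⟨h1, ?_⟩, ⟨h2, ?_⟩⟩
  · rw [e1]; exact h
  · rw [e2]; exact h
end Part1

section Part2

def bi (d : ℤ) : ℤ := if d = 0 then 1 else 0
def Fz (a b c d e f A B C D E F : ℤ) : ℤ :=
  if bi a + bi b + bi c + bi d + bi e + bi f = 0 then A + B + C + D + E + F
  else if bi a + bi b + bi c + bi d + bi e + bi f = 1 then
    2 * (bi a * A + bi b * B + bi c * C + bi d * D + bi e * E + bi f * F) else 0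

lemma bi0 {d : ℤ} (h : d = 0) : bi d = 1 := by simp [bi, h]
lemma bi1 {d : ℤ} (h : d ≠ 0) : bi d = 0 := by simp [bi, h]
lemma bi_nn (d : ℤ) : 0 ≤ bi d := by unfold bi; split_ifs <;> simp
lemma bi_01 (d : ℤ) : bi d = 0 ∨ bi d = 1 := by unfold bi; split_ifs <;> simp

set_option maxHeartbeats 4000000 in
lemma Fz_super {a b c d e f x y z : ℤ} (ha : 1 ≤ a) (hb : 1 ≤ b) (hc : 1 ≤ c) (hd : 0 ≤ d)
    (he : 1 ≤ e) (hf : 0 ≤ f) (h1 : 0 ≤ c + f - a) (h2 : 0 ≤ e + d - b) (h3 : 0 ≤ a + e - c)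
    (h4 : 0 ≤ f + b - d) (h5 : 0 ≤ b + c - e) (h6 : 0 ≤ d + a - f)
    (hx : x = 0 ∨ x = 1) (hy : y = 0 ∨ y = 1) (hz : z = 0 ∨ z = 1) (hs : x + y + z ≠ 1) :
    Fz (a-1) (b+1) (c-1) (d+1) e f (z * (c+f-a)) (z * (e+d-b)) (y * (a+e-c)) (y * (f+b-d))
        (x * (b+c-e)) (x * (d+a-f)) +
    Fz (a+1) (b-1) c d (e-1) (f+1) (z * (c+f-a)) (z * (e+d-b)) (y * (a+e-c)) (y * (f+b-d))
        (x * (b+c-e)) (x * (d+a-f)) ≤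
    Fz a b c d e f (z * (c+f-a)) (z * (e+d-b)) (y * (a+e-c)) (y * (f+b-d))
        (x * (b+c-e)) (x * (d+a-f)) +
    Fz a b (c-1) (d+1) (e-1) (f+1) (z * (c+f-a)) (z * (e+d-b)) (y * (a+e-c)) (y * (f+b-d))
        (x * (b+c-e)) (x * (d+a-f)) := by
  have ra : bi a = 0 := bi1 (by omega)
  have rb : bi b = 0 := bi1 (by omega)
  have rc : bi c = 0 := bi1 (by omega)
  have re : bi e = 0 := bi1 (by omega)
  have rb' : bi (b+1) = 0 := bi1 (by omega)
  have ra' : bi (a+1) = 0 := bi1 (by omega)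
  have rd' : bi (d+1) = 0 := bi1 (by omega)
  have rf' : bi (f+1) = 0 := bi1 (by omega)
  have qa : (bi (a-1) = 1 ∧ a = 1) ∨ (bi (a-1) = 0 ∧ 2 ≤ a) := by
    by_cases h : a = 1
    · exact Or.inl ⟨bi0 (by omega), h⟩
    · exact Or.inr ⟨bi1 (by omega), by omega⟩
  have qb : (bi (b-1) = 1 ∧ b = 1) ∨ (bi (b-1) = 0 ∧ 2 ≤ b) := by
    by_cases h : b = 1
    · exact Or.inl ⟨bi0 (by omega), h⟩
    · exact Or.inr ⟨bi1 (by omega), by omega⟩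
  have qc : (bi (c-1) = 1 ∧ c = 1) ∨ (bi (c-1) = 0 ∧ 2 ≤ c) := by
    by_cases h : c = 1
    · exact Or.inl ⟨bi0 (by omega), h⟩
    · exact Or.inr ⟨bi1 (by omega), by omega⟩
  have qe : (bi (e-1) = 1 ∧ e = 1) ∨ (bi (e-1) = 0 ∧ 2 ≤ e) := by
    by_cases h : e = 1
    · exact Or.inl ⟨bi0 (by omega), h⟩
    · exact Or.inr ⟨bi1 (by omega), by omega⟩
  have qd : (bi d = 1 ∧ d = 0) ∨ (bi d = 0 ∧ 1 ≤ d) := by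
    by_cases h : d = 0
    · exact Or.inl ⟨bi0 (by omega), h⟩
    · exact Or.inr ⟨bi1 (by omega), by omega⟩
  have qf : (bi f = 1 ∧ f = 0) ∨ (bi f = 0 ∧ 1 ≤ f) := by
    by_cases h : f = 0
    · exact Or.inl ⟨bi0 (by omega), h⟩
    · exact Or.inr ⟨bi1 (by omega), by omega⟩
  unfold Fz
  simp only [ra, rb, rc, re, ra', rb', rd', rf']
  generalize bi (a-1) = A at *
  generalize bi (b-1) = B at *
  generalize bi (c-1) = C at *
  generalize bi (e-1) = E at *
  generalize bi d = D at *
  generalize bi f = F at *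
  clear ra rb rc re ra' rb' rd' rf'
  rcases hx with rfl | rfl <;> rcases hy with rfl | rfl <;> rcases hz with rfl | rfl <;>
  first
  | (exfalso; omega)
  | (rcases qa with ⟨rfl, qa⟩ | ⟨rfl, qa⟩ <;> rcases qb with ⟨rfl, qb⟩ | ⟨rfl, qb⟩ <;>
     rcases qc with ⟨rfl, qc⟩ | ⟨rfl, qc⟩ <;> rcases qd with ⟨rfl, qd⟩ | ⟨rfl, qd⟩ <;>
     rcases qe with ⟨rfl, qe⟩ | ⟨rfl, qe⟩ <;> rcases qf with ⟨rfl, qf⟩ | ⟨rfl, qf⟩ <;>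
     norm_num <;> omega)
end Part2

section Part3
variable {V Q : Set Z3}

/-- support numbers of a domain -/
def gam (Q : Set Z3) (i j : Fin 3) : ℤ := sSup ((fun v : Z3 => v i - v j) '' Q)

lemma Dom.nonempty (hQ : Dom Q) : Q.Nonempty := by
  obtain ⟨u, i, j, -, h, -⟩ := hQ.tri; exact ⟨u, h⟩

lemma Dom.norm_rep (hQ : Dom Q) {v : Z3} (hv : v ∈ Q) : v + sh (- v 2) ∈ {p | p ∈ Q ∧ p 2 = 0} :=
  ⟨hQ.diag _ _ hv, by simp [sh_apply]⟩

lemma Dom.bdd (hQ : Dom Q) (i j : Fin 3) : BddAbove ((fun v : Z3 => v i - v j) '' Q) := by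
  have : ((fun v : Z3 => v i - v j) '' Q) ⊆ ((fun v : Z3 => v i - v j) '' {p | p ∈ Q ∧ p 2 = 0}) := by
    rintro _ ⟨v, hv, rfl⟩
    exact ⟨_, hQ.norm_rep hv, by simp [sh_apply]⟩
  exact ((hQ.fin.image _).bddAbove).mono this

lemma Dom.gam_ge (hQ : Dom Q) {v : Z3} (hv : v ∈ Q) (i j : Fin 3) : v i - v j ≤ gam Q i j :=
  le_csSup (hQ.bdd i j) ⟨v, hv, rfl⟩

lemma Dom.gam_att (hQ : Dom Q) (i j : Fin 3) : ∃ v ∈ Q, v i - v j = gam Q i j :=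
  Int.csSup_mem (hQ.nonempty.image _) (hQ.bdd i j)

lemma Dom.mem_iff (hQ : Dom Q) {z : Z3} : z ∈ Q ↔ ∀ i j, z i - z j ≤ gam Q i j := by
  refine ⟨fun h i j => hQ.gam_ge h i j, fun h => ?_⟩
  -- points p i j with i-th coordinate z i and j-th coordinate ≥ z j
  have h1 : ∀ i j, ∃ p ∈ Q, p i = z i ∧ z j ≤ p j := by
    intro i j
    obtain ⟨v, hv, hvg⟩ := hQ.gam_att j i
    refine ⟨v + sh (z i - v i), hQ.diag _ _ hv, by simp [sh_apply], ?_⟩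
    have := h j i
    simp only [Pi.add_apply, sh_apply]; omega
  choose p hp hpi hpj using h1
  have h2 : ∀ i, ∃ q ∈ Q, q i = z i ∧ z ≤ q := by
    intro i
    refine ⟨p i 0 ⊔ p i 1 ⊔ p i 2, hQ.sup _ _ (hQ.sup _ _ (hp _ _) (hp _ _)) (hp _ _), ?_, ?_⟩
    · simp [hpi]
    · intro l
      fin_cases l
      · exact (hpj i 0).trans (by simp)
      · exact (hpj i 1).trans (by simp)
      · exact (hpj i 2).trans (by simp)
  choose q hq hqi hqz using h2
  have : z = q 0 ⊓ q 1 ⊓ q 2 := by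
    apply le_antisymm
    · exact le_inf (le_inf (hqz 0) (hqz 1)) (hqz 2)
    · intro l
      fin_cases l
      · exact le_trans (by simp) (hqi 0).le
      · exact le_trans (by simp) (hqi 1).le
      · exact le_trans (by simp) (hqi 2).le
  rw [this]
  exact hQ.inf _ _ (hQ.inf _ _ (hq _) (hq _)) (hq _)

lemma Dom.mem_iff3 (hQ : Dom Q) {i j k : Fin 3} (hij : i ≠ j) (hik : i ≠ k) (hjk : j ≠ k) {z : Z3} :
    z ∈ Q ↔ (z i - z j ≤ gam Q i j ∧ z j - z i ≤ gam Q j i ∧ z i - z k ≤ gam Q i k ∧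
      z k - z i ≤ gam Q k i ∧ z j - z k ≤ gam Q j k ∧ z k - z j ≤ gam Q k j) := by
  rw [hQ.mem_iff]
  constructor
  · intro h; exact ⟨h _ _, h _ _, h _ _, h _ _, h _ _, h _ _⟩
  · rintro ⟨h1, h2, h3, h4, h5, h6⟩ a b
    have h0 : ∀ a, 0 ≤ gam Q a a := by
      intro a; obtain ⟨v, hv⟩ := hQ.nonempty; simpa using hQ.gam_ge hv a a
    rcases fin3_cases hij hik hjk a with rfl | rfl | rfl <;>
    rcases fin3_cases hij hik hjk b with rfl | rfl | rfl <;> first | assumption | simpa using h0 _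

lemma Dom.gam_tri (hQ : Dom Q) (i j k : Fin 3) : gam Q i j ≤ gam Q i k + gam Q k j := by
  obtain ⟨v, hv, h⟩ := hQ.gam_att i j
  have := hQ.gam_ge hv i k; have := hQ.gam_ge hv k j; omega

/-- every point is the base of a triangle -/
lemma Dom.tri_at (hQ : Dom Q) {v : Z3} (hv : v ∈ Q) :
    ∃ i j, i ≠ j ∧ v + ee i ∈ Q ∧ v + ee i + ee j ∈ Q := by
  have h1 : v + sh 1 ∈ Q := hQ.diag _ _ hv
  obtain ⟨i, hi, hiV⟩ := hQ.step_up hv h1 (fun l => by simp [sh_apply]) (fun h => by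
    have := congrFun h 0; simp [sh_apply] at this)
  obtain ⟨j, hj, hjV⟩ := hQ.step_up hiV h1 (fun l => by simp [sh_apply, ee]; split_ifs <;> simp)
    (fun h => by
      have h0 := congrFun h (i+1); simp [sh_apply, ee] at h0)
  refine ⟨i, j, ?_, hiV, hjV⟩
  rintro rfl
  simp [ee_self, sh_apply] at hj

/-- every edge lies in a triangle -/
lemma Dom.tri_edge (hQ : Dom Q) {v : Z3} {i : Fin 3} (hv : v ∈ Q) (hi : v + ee i ∈ Q) :
    ∃ j, i ≠ j ∧ v + ee i + ee j ∈ Q := by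
  have h1 : v + sh 1 ∈ Q := hQ.diag _ _ hv
  obtain ⟨j, hj, hjV⟩ := hQ.step_up hi h1 (fun l => by simp [sh_apply, ee]; split_ifs <;> simp)
    (fun h => by
      have h0 := congrFun h (i+1); simp [sh_apply, ee] at h0)
  refine ⟨j, ?_, hjV⟩
  rintro rfl
  simp [ee_self, sh_apply] at hj

lemma Dom.gam_width (hQ : Dom Q) {i j : Fin 3} (hij : i ≠ j) : 1 ≤ gam Q i j + gam Q j i := by
  obtain ⟨v, hv⟩ := hQ.nonempty
  obtain ⟨a, b, hab, h1, h2⟩ := hQ.tri_at hv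
  have g1 := hQ.gam_ge hv i j
  have g2 := hQ.gam_ge h1 i j
  have g3 := hQ.gam_ge h2 i j
  have g4 := hQ.gam_ge hv j i
  have g5 := hQ.gam_ge h1 j i
  have g6 := hQ.gam_ge h2 j i
  simp only [Pi.add_apply, ee] at g1 g2 g3 g4 g5 g6
  have : (a = i ∨ a = j) ∨ (b = i ∨ b = j) := by omega
  rcases this with (rfl | rfl) | (rfl | rfl) <;>
   simp [hij, hij.symm, hab, hab.symm] at g1 g2 g3 g4 g5 g6 <;> first | omega | (split_ifs at * <;> omega)

/-- side lengths -/
def ww (Q : Set Z3) (i j k : Fin 3) : ℤ := gam Q i k + gam Q k j - gam Q i j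

lemma Dom.ww_nn (hQ : Dom Q) (i j k : Fin 3) : 0 ≤ ww Q i j k := by
  have := hQ.gam_tri i j k; unfold ww; omega

/-- the points of the side: lower endpoint -/
def side (Q : Set Z3) (i j k : Fin 3) : Z3 := fun l =>
  if l = i then gam Q i j else if l = j then 0 else gam Q i j - gam Q i k

lemma side_i (Q : Set Z3) {i j k : Fin 3} : side Q i j k i = gam Q i j := by simp [side]
lemma side_j (Q : Set Z3) {i j k : Fin 3} (hij : i ≠ j) : side Q i j k j = 0 := by
  simp [side, hij.symm]
lemma side_k (Q : Set Z3) {i j k : Fin 3} (hik : i ≠ k) (hjk : j ≠ k) :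
    side Q i j k k = gam Q i j - gam Q i k := by
  simp [side, hik.symm, hjk.symm]

lemma Dom.side_mem (hQ : Dom Q) {i j k : Fin 3} (hij : i ≠ j) (hik : i ≠ k) (hjk : j ≠ k) :
    side Q i j k ∈ Q := by
  rw [hQ.mem_iff3 hij hik hjk, side_i, side_j Q hij, side_k Q hik hjk]
  have h1 := hQ.gam_width hij
  have h2 := hQ.gam_width hik
  have h3 := hQ.gam_tri j k i
  have h4 := hQ.gam_tri k j i
  have h5 := hQ.gam_tri i j k
  have h6 := hQ.gam_tri i k j
  omega

/-- any point of the side is a shift of lower endpoint plus a multiple of ee k;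
the extreme point -/
lemma Dom.side_mem_top (hQ : Dom Q) {i j k : Fin 3} (hij : i ≠ j) (hik : i ≠ k) (hjk : j ≠ k) {t : ℤ}
    (ht : 0 ≤ t) (ht' : t ≤ ww Q i j k) :
    side Q i j k + (fun l => if l = k then t else 0) ∈ Q := by
  rw [hQ.mem_iff3 hij hik hjk]
  simp only [Pi.add_apply, side_i, side_j Q hij, side_k Q hik hjk, if_neg hik, if_neg hjk, if_true]
  unfold ww at ht'
  have h1 := hQ.gam_width hij
  have h2 := hQ.gam_width hik
  have h3 := hQ.gam_tri j k i
  have h4 := hQ.gam_tri k i j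
  have h5 := hQ.gam_tri i j k
  have h6 := hQ.gam_tri i k j
  have h7 := hQ.gam_tri j i k
  have h8 := hQ.gam_tri k j i
  omega

/-- the side function -/
def FF (Q : Set Z3) (ν : Fin 3 → ℤ) (v : Z3) : ℤ :=
  Fz (gam Q 0 1 - v 0 + v 1) (gam Q 1 0 - v 1 + v 0) (gam Q 0 2 - v 0 + v 2) (gam Q 2 0 - v 2 + v 0)
    (gam Q 1 2 - v 1 + v 2) (gam Q 2 1 - v 2 + v 1)
    (ν 2 * ww Q 0 1 2) (ν 2 * ww Q 1 0 2) (ν 1 * ww Q 0 2 1) (ν 1 * ww Q 2 0 1)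
    (ν 0 * ww Q 1 2 0) (ν 0 * ww Q 2 1 0)

lemma FF_eq (Q : Set Z3) (ν : Fin 3 → ℤ) (v : Z3) {i j k : Fin 3}
    (hij : i ≠ j) (hik : i ≠ k) (hjk : j ≠ k) : FF Q ν v =
  Fz (gam Q i j - v i + v j) (gam Q j i - v j + v i) (gam Q i k - v i + v k) (gam Q k i - v k + v i)
    (gam Q j k - v j + v k) (gam Q k j - v k + v j)
    (ν k * ww Q i j k) (ν k * ww Q j i k) (ν j * ww Q i k j) (ν j * ww Q k i j)
    (ν i * ww Q j k i) (ν i * ww Q k j i) := by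
  unfold FF Fz
  fin_cases i <;> fin_cases j <;> fin_cases k <;> 
    first
    | (exfalso; simp at hij hik hjk; done)
    | rfl
    | (simp only [Fin.zero_eta, Fin.mk_one, Fin.reduceFinMk]; congr 1
       · apply propext; constructor <;> intro h <;> linarith
       · ring
       · congr 1
         · apply propext; constructor <;> intro h <;> linarith
         · ring)

lemma FF_super (hQ : Dom Q) {ν : Fin 3 → ℤ} (hν : ∀ l, ν l = 0 ∨ ν l = 1) (hs : ∑ l, ν l ≠ 1)
    {p : Z3} {i j : Fin 3} (hij : i ≠ j) (h0 : p ∈ Q) (h1 : p + ee i ∈ Q) (h2 : p + ee j ∈ Q)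
    (h3 : p + ee i + ee j ∈ Q) :
    FF Q ν (p + ee i) + FF Q ν (p + ee j) ≤ FF Q ν p + FF Q ν (p + ee i + ee j) := by
  obtain ⟨k, hik, hjk⟩ := exists_third hij
  rw [hQ.mem_iff3 hij hik hjk] at h0 h1 h2 h3
  rw [sum3 hij hik hjk] at hs
  have g1 := hQ.ww_nn i j k
  have g2 := hQ.ww_nn j i k
  have g3 := hQ.ww_nn i k j
  have g4 := hQ.ww_nn k i j
  have g5 := hQ.ww_nn j k i
  have g6 := hQ.ww_nn k j i
  simp only [Pi.add_apply, ee_self, ee_ne hij, ee_ne hij.symm, ee_ne hik.symm, ee_ne hjk.symm]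
    at h0 h1 h2 h3
  simp only [ww] at g1 g2 g3 g4 g5 g6
  have := Fz_super (a := gam Q i j - p i + p j) (b := gam Q j i - p j + p i)
    (c := gam Q i k - p i + p k) (d := gam Q k i - p k + p i) (e := gam Q j k - p j + p k)
    (f := gam Q k j - p k + p j) (by omega) (by omega) (by omega) (by omega) (by omega) (by omega)
    (by omega) (by omega) (by omega) (by omega) (by omega) (by omega) (hν i) (hν j) (hν k) hs
  simp only [FF_eq Q ν _ hij hik hjk, ww, Pi.add_apply, ee_self, ee_ne hij, ee_ne hij.symm,
    ee_ne hik.symm, ee_ne hjk.symm]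
  convert this using 2 <;> congr 1 <;> ring
end Part3

section Part4
variable {V Q : Set Z3}

def Intr (Q : Set Z3) (v : Z3) : Prop := ∀ i j, i ≠ j → v i - v j < gam Q i j

def Mid (Q : Set Z3) (v : Z3) (i j k : Fin 3) : Prop :=
  (i ≠ j ∧ i ≠ k ∧ j ≠ k) ∧ v i - v j = gam Q i j ∧ v j - v i < gam Q j i ∧ v i - v k < gam Q i k ∧
    v k - v i < gam Q k i ∧ v j - v k < gam Q j k ∧ v k - v j < gam Q k j

lemma FF_intr {ν : Fin 3 → ℤ} {v : Z3} (h : Intr Q v) {i j k : Fin 3}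
    (hij : i ≠ j) (hik : i ≠ k) (hjk : j ≠ k) : FF Q ν v =
    ν k * ww Q i j k + ν k * ww Q j i k + ν j * ww Q i k j + ν j * ww Q k i j +
    ν i * ww Q j k i + ν i * ww Q k j i := by
  rw [FF_eq Q ν v hij hik hjk]
  have h1 := h i j hij
  have h2 := h j i hij.symm
  have h3 := h i k hik
  have h4 := h k i hik.symm
  have h5 := h j k hjk
  have h6 := h k j hjk.symm
  unfold Fz
  rw [bi1, bi1, bi1, bi1, bi1, bi1]
  · simp
  all_goals omega

lemma FF_mid {ν : Fin 3 → ℤ} {v : Z3} {i j k : Fin 3} (h : Mid Q v i j k) :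
    FF Q ν v = 2 * (ν k * ww Q i j k) := by
  obtain ⟨⟨hij, hik, hjk⟩, h1, h2, h3, h4, h5, h6⟩ := h
  rw [FF_eq Q ν v hij hik hjk]
  unfold Fz
  rw [bi0, bi1, bi1, bi1, bi1, bi1]
  · simp
  all_goals omega

lemma FF_other (hQ : Dom Q) {ν : Fin 3 → ℤ} {v : Z3} (hv : v ∈ Q) (h1 : ¬ Intr Q v)
    (h2 : ¬ ∃ i j k, Mid Q v i j k) : FF Q ν v = 0 := by
  have e01 : (0 : Fin 3) ≠ 1 := by simp
  have e02 : (0 : Fin 3) ≠ 2 := by simp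
  have e12 : (1 : Fin 3) ≠ 2 := by simp
  rw [hQ.mem_iff3 e01 e02 e12] at hv
  obtain ⟨v1, v2, v3, v4, v5, v6⟩ := hv
  have bz : ∀ {d : ℤ}, bi d = 0 → d ≠ 0 := by
    intro d h h'; rw [bi0 h'] at h; omega
  have bo : ∀ {d : ℤ}, bi d = 1 → d = 0 := by
    intro d h; by_contra h'; rw [bi1 h'] at h; omega
  have n1 := bi_nn (gam Q 0 1 - v 0 + v 1)
  have n2 := bi_nn (gam Q 1 0 - v 1 + v 0)
  have n3 := bi_nn (gam Q 0 2 - v 0 + v 2)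
  have n4 := bi_nn (gam Q 2 0 - v 2 + v 0)
  have n5 := bi_nn (gam Q 1 2 - v 1 + v 2)
  have n6 := bi_nn (gam Q 2 1 - v 2 + v 1)
  unfold FF Fz
  split_ifs with ha hb
  · exfalso; apply h1
    have z1 := bz (d := gam Q 0 1 - v 0 + v 1) (by omega)
    have z2 := bz (d := gam Q 1 0 - v 1 + v 0) (by omega)
    have z3 := bz (d := gam Q 0 2 - v 0 + v 2) (by omega)
    have z4 := bz (d := gam Q 2 0 - v 2 + v 0) (by omega)
    have z5 := bz (d := gam Q 1 2 - v 1 + v 2) (by omega)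
    have z6 := bz (d := gam Q 2 1 - v 2 + v 1) (by omega)
    intro i j hij
    fin_cases i <;> fin_cases j <;>
      simp only [Fin.zero_eta, Fin.mk_one, Fin.reduceFinMk] at hij ⊢ <;> first | omega | exact absurd rfl hij
  · exfalso; apply h2
    by_cases c1 : bi (gam Q 0 1 - v 0 + v 1) = 1
    · have z1 := bo c1
      have z2 := bz (d := gam Q 1 0 - v 1 + v 0) (by omega)
      have z3 := bz (d := gam Q 0 2 - v 0 + v 2) (by omega)
      have z4 := bz (d := gam Q 2 0 - v 2 + v 0) (by omega)
      have z5 := bz (d := gam Q 1 2 - v 1 + v 2) (by omega)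
      have z6 := bz (d := gam Q 2 1 - v 2 + v 1) (by omega)
      exact ⟨0, 1, 2, ⟨e01, e02, e12⟩, by omega, by omega, by omega, by omega, by omega, by omega⟩
    by_cases c2 : bi (gam Q 1 0 - v 1 + v 0) = 1
    · have z2 := bo c2
      have z1 := bz (d := gam Q 0 1 - v 0 + v 1) (by omega)
      have z3 := bz (d := gam Q 0 2 - v 0 + v 2) (by omega)
      have z4 := bz (d := gam Q 2 0 - v 2 + v 0) (by omega)
      have z5 := bz (d := gam Q 1 2 - v 1 + v 2) (by omega)
      have z6 := bz (d := gam Q 2 1 - v 2 + v 1) (by omega)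
      exact ⟨1, 0, 2, ⟨e01.symm, e12, e02⟩, by omega, by omega, by omega, by omega, by omega, by omega⟩
    by_cases c3 : bi (gam Q 0 2 - v 0 + v 2) = 1
    · have z3 := bo c3
      have z1 := bz (d := gam Q 0 1 - v 0 + v 1) (by omega)
      have z2 := bz (d := gam Q 1 0 - v 1 + v 0) (by omega)
      have z4 := bz (d := gam Q 2 0 - v 2 + v 0) (by omega)
      have z5 := bz (d := gam Q 1 2 - v 1 + v 2) (by omega)
      have z6 := bz (d := gam Q 2 1 - v 2 + v 1) (by omega)
      exact ⟨0, 2, 1, ⟨e02, e01, e12.symm⟩, by omega, by omega, by omega, by omega, by omega, by omega⟩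
    by_cases c4 : bi (gam Q 2 0 - v 2 + v 0) = 1
    · have z4 := bo c4
      have z1 := bz (d := gam Q 0 1 - v 0 + v 1) (by omega)
      have z2 := bz (d := gam Q 1 0 - v 1 + v 0) (by omega)
      have z3 := bz (d := gam Q 0 2 - v 0 + v 2) (by omega)
      have z5 := bz (d := gam Q 1 2 - v 1 + v 2) (by omega)
      have z6 := bz (d := gam Q 2 1 - v 2 + v 1) (by omega)
      exact ⟨2, 0, 1, ⟨e02.symm, e12.symm, e01⟩, by omega, by omega, by omega, by omega, by omega, by omega⟩
    by_cases c5 : bi (gam Q 1 2 - v 1 + v 2) = 1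
    · have z5 := bo c5
      have z1 := bz (d := gam Q 0 1 - v 0 + v 1) (by omega)
      have z2 := bz (d := gam Q 1 0 - v 1 + v 0) (by omega)
      have z3 := bz (d := gam Q 0 2 - v 0 + v 2) (by omega)
      have z4 := bz (d := gam Q 2 0 - v 2 + v 0) (by omega)
      have z6 := bz (d := gam Q 2 1 - v 2 + v 1) (by omega)
      exact ⟨1, 2, 0, ⟨e12, e01.symm, e02.symm⟩, by omega, by omega, by omega, by omega, by omega, by omega⟩
    · have r1 := bi_01 (gam Q 0 1 - v 0 + v 1)
      have r2 := bi_01 (gam Q 1 0 - v 1 + v 0)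
      have r3 := bi_01 (gam Q 0 2 - v 0 + v 2)
      have r4 := bi_01 (gam Q 2 0 - v 2 + v 0)
      have r5 := bi_01 (gam Q 1 2 - v 1 + v 2)
      have z6 := bo (d := gam Q 2 1 - v 2 + v 1) (by omega)
      have z1 := bz (d := gam Q 0 1 - v 0 + v 1) (by omega)
      have z2 := bz (d := gam Q 1 0 - v 1 + v 0) (by omega)
      have z3 := bz (d := gam Q 0 2 - v 0 + v 2) (by omega)
      have z4 := bz (d := gam Q 2 0 - v 2 + v 0) (by omega)
      have z5 := bz (d := gam Q 1 2 - v 1 + v 2) (by omega)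
      exact ⟨2, 1, 0, ⟨e12.symm, e02.symm, e01.symm⟩, by omega, by omega, by omega, by omega, by omega, by omega⟩
  · rfl

lemma FF_cases (hQ : Dom Q) {v : Z3} (hv : v ∈ Q) :
    Intr Q v ∨ (∃ i j k, Mid Q v i j k) ∨ (∀ ν, FF Q ν v = 0) := by
  by_cases h1 : Intr Q v
  · exact Or.inl h1
  by_cases h2 : ∃ i j k, Mid Q v i j k
  · exact Or.inr (Or.inl h2)
  · exact Or.inr (Or.inr fun ν => FF_other hQ hv h1 h2)

lemma FF_nn (hQ : Dom Q) {ν : Fin 3 → ℤ} (hν : ∀ l, ν l = 0 ∨ ν l = 1) {v : Z3} (hv : v ∈ Q) :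
    0 ≤ FF Q ν v := by
  have hw : ∀ i j k, 0 ≤ ν k * ww Q i j k := fun i j k =>
    mul_nonneg (by rcases hν k with h | h <;> omega) (hQ.ww_nn _ _ _)
  rcases FF_cases hQ hv with h | ⟨i, j, k, h⟩ | h
  · have e01 : (0 : Fin 3) ≠ 1 := by simp
    have e02 : (0 : Fin 3) ≠ 2 := by simp
    have e12 : (1 : Fin 3) ≠ 2 := by simp
    rw [FF_intr h e01 e02 e12]
    have := hw 0 1 2; have := hw 1 0 2; have := hw 0 2 1; have := hw 2 0 1; have := hw 1 2 0
    have := hw 2 1 0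
    omega
  · rw [FF_mid h]; have := hw i j k; omega
  · rw [h]

lemma FF_zero_of (hQ : Dom Q) {ν : Fin 3 → ℤ} (hν : ∀ l, ν l = 0) {v : Z3} (hv : v ∈ Q) :
    FF Q ν v = 0 := by
  rcases FF_cases hQ hv with h | ⟨i, j, k, h⟩ | h
  · have e01 : (0 : Fin 3) ≠ 1 := by simp
    have e02 : (0 : Fin 3) ≠ 2 := by simp
    have e12 : (1 : Fin 3) ≠ 2 := by simp
    rw [FF_intr h e01 e02 e12]; simp [hν]
  · rw [FF_mid h]; simp [hν]
  · rw [h]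

/-- if v lies on an integer side then `FF` vanishes -/
lemma FF_side (hQ : Dom Q) {ν : Fin 3 → ℤ} {v : Z3} (hv : v ∈ Q) {i j k : Fin 3}
    (hij : i ≠ j) (hik : i ≠ k) (hjk : j ≠ k) (h : v i - v j = gam Q i j) (hk : ν k = 0) :
    FF Q ν v = 0 := by
  rcases FF_cases hQ hv with h1 | ⟨a, b, c, h1⟩ | h1
  · exact absurd h (h1 i j hij).ne
  · rw [FF_mid h1]
    obtain ⟨⟨hab, hac, hbc⟩, g1, g2, g3, g4, g5, g6⟩ := h1
    have : c = k := by
      rcases fin3_cases hab hac hbc i with rfl | rfl | rfl <;>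
      rcases fin3_cases hab hac hbc j with rfl | rfl | rfl <;> first | omega | (exfalso; omega)
    subst this; simp [hk]
  · exact h1 ν

lemma Intr.add_mem (hQ : Dom Q) {v : Z3} (h : Intr Q v) (i : Fin 3) : v + ee i ∈ Q ∧ v - ee i ∈ Q := by
  have h0 : ∀ a, 0 ≤ gam Q a a := by
    intro a; obtain ⟨v, hv⟩ := hQ.nonempty; simpa using hQ.gam_ge hv a a
  simp only [hQ.mem_iff, Pi.add_apply, Pi.sub_apply, ee]
  constructor
  all_goals
    intro a b
    by_cases hab : a = b
    · subst hab; simpa using h0 a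
    · have := h a b hab
      split_ifs <;> omega

lemma Mid.moves (hQ : Dom Q) {v : Z3} {i j k : Fin 3} (h : Mid Q v i j k) :
    v + ee k ∈ Q ∧ v - ee k ∈ Q ∧ v - ee i ∈ Q ∧ v + ee j ∈ Q := by
  obtain ⟨⟨hij, hik, hjk⟩, h1, h2, h3, h4, h5, h6⟩ := h
  simp only [hQ.mem_iff3 hij hik hjk, Pi.add_apply, Pi.sub_apply, ee_self, ee_ne hij, ee_ne hij.symm,
    ee_ne hik, ee_ne hik.symm, ee_ne hjk, ee_ne hjk.symm]
  omega

/-- P is a gradient of f -/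
def Gr (V : Set Z3) (f : Z3 → ℝ) (P : Fin 3 → ℝ) : Prop :=
  ∑ l, P l = 0 ∧
  ∃ u i j, i ≠ j ∧ u ∈ QQ V f P ∧ u + ee i ∈ QQ V f P ∧ u + ee i + ee j ∈ QQ V f P

lemma Gr.dom {f : Z3 → ℝ} {P : Fin 3 → ℝ} (h : Gr V f P) (hV : Dom V) (hf : Rh V f) (hinv : DInv f) :
    Dom (QQ V f P) := QQ_dom hV hf hinv h.1 h.2

lemma grad_gr (hV : Dom V) {f : Z3 → ℝ} (hf : Rh V f) (hinv : DInv f) {u : Z3} {i j : Fin 3}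
    (hij : i ≠ j) (h0 : u ∈ V) (h1 : u + ee i ∈ V) (h2 : u + ee i + ee j ∈ V) :
    Gr V f (grad f u i j) :=
  ⟨grad_sum f u hij, u, i, j, hij, grad_mem hV hf hinv hij h0 h1 h2⟩

variable {f : Z3 → ℝ} {P P' : Fin 3 → ℝ}

lemma QQ_eq {x y : Z3} (hx : x ∈ QQ V f P) (hy : y ∈ QQ V f P) :
    f x - dot P x = f y - dot P y := le_antisymm (hy.2 x hx.1) (hx.2 y hy.1)

lemma QQ_of_eq {x y : Z3} (hx : x ∈ QQ V f P) (hy : y ∈ V) (h : f x - dot P x = f y - dot P y) :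
    y ∈ QQ V f P := ⟨hy, fun v' hv' => h ▸ hx.2 v' hv'⟩

lemma QQ_diff {v : Z3} {i : Fin 3} (hx : v ∈ QQ V f P) (hy : v + ee i ∈ QQ V f P) :
    f (v + ee i) - f v = P i := by
  have := QQ_eq hx hy; rw [dot_add, dot_ee] at this; linarith

lemma QQ_diff' {v : Z3} {i : Fin 3} (hx : v ∈ QQ V f P) (hy : v - ee i ∈ QQ V f P) :
    f v - f (v - ee i) = P i := by
  have := QQ_eq hx hy; rw [dot_sub, dot_ee] at this; linarith

lemma QQ_le {v : Z3} {i : Fin 3} (hv' : v ∈ QQ V f P') (hx : v ∈ QQ V f P)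
    (hy : v + ee i ∈ QQ V f P) : P i ≤ P' i := by
  have h1 := QQ_diff hx hy
  have h2 := hv'.2 _ hy.1
  rw [dot_add, dot_ee] at h2; linarith

lemma QQ_ge {v : Z3} {i : Fin 3} (hv' : v ∈ QQ V f P') (hx : v ∈ QQ V f P)
    (hy : v - ee i ∈ QQ V f P) : P' i ≤ P i := by
  have h1 := QQ_diff' hx hy
  have h2 := hv'.2 _ hy.1
  rw [dot_sub, dot_ee] at h2; linarith

/-- a triangle determines the gradient -/
lemma QQ_tri {u : Z3} {i j : Fin 3} (hij : i ≠ j) (hP : ∑ l, P l = 0)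
    (h0 : u ∈ QQ V f P) (h1 : u + ee i ∈ QQ V f P) (h2 : u + ee i + ee j ∈ QQ V f P) :
    P = grad f u i j := by
  obtain ⟨k, hik, hjk⟩ := exists_third hij
  have e1 := QQ_diff h0 h1
  have e2 := QQ_diff h1 h2
  rw [sum3 hij hik hjk] at hP
  funext l
  rcases fin3_cases hij hik hjk l with rfl | rfl | rfl
  · rw [grad_i, e1]
  · rw [grad_j f u hij, e2]
  · simp [grad, hik.symm, hjk.symm]; linarith

lemma dot3 {i j k : Fin 3} (hij : i ≠ j) (hik : i ≠ k) (hjk : j ≠ k) (v : Z3) :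
    dot P v = P i * v i + P j * v j + P k * v k := sum3 hij hik hjk _

lemma intr_eq (hQ : Dom (QQ V f P)) (hP : ∑ l, P l = 0) (hP' : ∑ l, P' l = 0) {v : Z3}
    (hv : v ∈ QQ V f P) (hv' : v ∈ QQ V f P') (h : Intr (QQ V f P) v) : P = P' := by
  have hle : ∀ l, P l ≤ P' l := fun l => QQ_le hv' hv (h.add_mem hQ l).1
  have hge : ∀ l, P' l ≤ P l := fun l => QQ_ge hv' hv (h.add_mem hQ l).2
  funext l; exact le_antisymm (hle l) (hge l)

lemma mid_aux (hQ : Dom (QQ V f P)) (hQ' : Dom (QQ V f P')) (hP : ∑ l, P l = 0)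
    (hP' : ∑ l, P' l = 0) (hne : P ≠ P') {v : Z3} {i j k : Fin 3}
    (hv : v ∈ QQ V f P) (hv' : v ∈ QQ V f P') (h : Mid (QQ V f P) v i j k) :
    P k = P' k ∧ Mid (QQ V f P') v j i k ∧ ww (QQ V f P) i j k ≤ ww (QQ V f P') j i k := by
  obtain ⟨m1, m2, m3, m4⟩ := h.moves hQ
  obtain ⟨⟨hij, hik, hjk⟩, h1, h2, h3, h4, h5, h6⟩ := h
  have ek : P k = P' k := le_antisymm (QQ_le hv' hv m1) (QQ_ge hv' hv m2)
  have ei : P' i ≤ P i := QQ_ge hv' hv m3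
  rw [sum3 hij hik hjk] at hP hP'
  have hlt : P' i < P i := by
    apply lt_of_le_of_ne ei
    intro h'
    apply hne
    funext l
    rcases fin3_cases hij hik hjk l with rfl | rfl | rfl
    · exact h'.symm
    · linarith
    · exact ek
  have hdiff : ∀ x : Z3, dot P x - dot P' x = (P i - P' i) * (x i - x j) := by
    intro x
    rw [dot3 hij hik hjk, dot3 hij hik hjk, ek]
    have : P j = - P i - P' k := by rw [← ek]; linarith
    rw [this]
    have : P' j = - P' i - P' k := by linarith
    rw [this]; ring
  have hslice : ∀ x ∈ QQ V f P, x i - x j = v i - v j → x ∈ QQ V f P' := by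
    intro x hx hxx
    apply QQ_of_eq hv' hx.1
    have e1 := QQ_eq hx hv
    have e2 := hdiff x
    have e3 := hdiff v
    have : ((x i : ℝ) - x j) = v i - v j := by exact_mod_cast hxx
    rw [this] at e2
    linarith
  have hgji : v j - v i = gam (QQ V f P') j i := by
    apply le_antisymm (hQ'.gam_ge hv' j i)
    obtain ⟨x, hx, hxg⟩ := hQ'.gam_att j i
    rw [← hxg]
    have e1 := QQ_eq hx hv'
    have e2 := hv.2 x hx.1
    have e3 := hdiff x
    have e4 := hdiff v
    have : (P i - P' i) * ((v i : ℝ) - v j) ≤ (P i - P' i) * (x i - x j) := by linarith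
    have := le_of_mul_le_mul_left this (by linarith)
    have : v i - v j ≤ x i - x j := by exact_mod_cast this
    omega
  refine ⟨ek, ⟨⟨hij.symm, hjk, hik⟩, hgji, ?_⟩, ?_⟩
  · have k1 := hslice _ m1 (by simp [ee_ne hik, ee_ne hjk])
    have k2 := hslice _ m2 (by simp [ee_ne hik, ee_ne hjk])
    have w := hQ'.gam_width hij
    rw [hQ'.mem_iff3 hij hik hjk] at k1 k2
    simp only [Pi.add_apply, Pi.sub_apply, ee_self, ee_ne hik, ee_ne hjk] at k1 k2
    omega
  · have s1 := hQ.side_mem_top hij hik hjk (t := 0) le_rfl (hQ.ww_nn _ _ _)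
    have s2 := hQ.side_mem_top hij hik hjk (t := ww (QQ V f P) i j k) (hQ.ww_nn _ _ _) le_rfl
    have s1' := hslice _ s1 (by simp [hik, hjk, side_i, side_j _ hij, h1])
    have s2' := hslice _ s2 (by simp [hik, hjk, side_i, side_j _ hij, h1])
    have g1 := hQ'.gam_ge s1' j k
    have g2 := hQ'.gam_ge s2' k i
    simp only [Pi.add_apply, side_i, side_j _ hij, side_k _ hik hjk, if_neg hik, if_neg hjk, if_true]
      at g1 g2
    have e : ww (QQ V f P') j i k = gam (QQ V f P') j k + gam (QQ V f P') k i - gam (QQ V f P') j i := rfl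
    rw [e, ← hgji]
    omega

def nu (P : Fin 3 → ℝ) (l : Fin 3) : ℤ := if ∃ z : ℤ, P l = z then 0 else 1

lemma nu01 (P : Fin 3 → ℝ) (l : Fin 3) : nu P l = 0 ∨ nu P l = 1 := by
  unfold nu; split_ifs <;> simp

lemma nu_zero {P : Fin 3 → ℝ} {l : Fin 3} : nu P l = 0 ↔ ∃ z : ℤ, P l = z := by
  unfold nu; split_ifs with h <;> simp [h]

lemma nu_two {P : Fin 3 → ℝ} (hP : ∑ l, P l = 0) {i j k : Fin 3}
    (hij : i ≠ j) (hik : i ≠ k) (hjk : j ≠ k) (hi : nu P i = 0) (hj : nu P j = 0) : nu P k = 0 := by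
  rw [nu_zero] at *
  obtain ⟨a, ha⟩ := hi
  obtain ⟨b, hb⟩ := hj
  rw [sum3 hij hik hjk] at hP
  exact ⟨-a - b, by push_cast; linarith⟩

lemma nu_sum {P : Fin 3 → ℝ} (hP : ∑ l, P l = 0) : ∑ l, nu P l ≠ 1 := by
  have e01 : (0 : Fin 3) ≠ 1 := by simp
  have e02 : (0 : Fin 3) ≠ 2 := by simp
  have e12 : (1 : Fin 3) ≠ 2 := by simp
  rw [sum3 e01 e02 e12]
  have h1 := nu_two hP e01 e02 e12
  have h2 := nu_two hP e02 e01 e12.symm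
  have h3 := nu_two hP e12 e01.symm e02.symm
  have := nu01 P 0; have := nu01 P 1; have := nu01 P 2
  omega

lemma FF_indep (hQ : Dom (QQ V f P)) (hQ' : Dom (QQ V f P')) (hP : ∑ l, P l = 0)
    (hP' : ∑ l, P' l = 0) {v : Z3} (hv : v ∈ QQ V f P) (hv' : v ∈ QQ V f P') :
    FF (QQ V f P) (nu P) v = FF (QQ V f P') (nu P') v := by
  by_cases hne : P = P'
  · rw [hne]
  rcases FF_cases hQ hv with h | ⟨i, j, k, h⟩ | h
  · exact absurd (intr_eq hQ hP hP' hv hv' h) hne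
  · obtain ⟨h1, h2, h3⟩ := mid_aux hQ hQ' hP hP' hne hv hv' h
    obtain ⟨-, -, h4⟩ := mid_aux hQ' hQ hP' hP (Ne.symm hne) hv' hv h2
    rw [FF_mid h, FF_mid h2, le_antisymm h3 h4]
    have : nu P k = nu P' k := by simp [nu, h1]
    rw [this]
  · rcases FF_cases hQ' hv' with h' | ⟨i, j, k, h'⟩ | h'
    · exact absurd (intr_eq hQ' hP' hP hv' hv h').symm hne
    · obtain ⟨h1, h2, h3⟩ := mid_aux hQ' hQ hP' hP (Ne.symm hne) hv' hv h'
      obtain ⟨-, -, h4⟩ := mid_aux hQ hQ' hP hP' hne hv hv' h2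
      rw [FF_mid h', FF_mid h2, le_antisymm h3 h4]
      have : nu P' k = nu P k := by simp [nu, h1]
      rw [this]
    · rw [h, h']

/-- consequences of the vanishing of FF -/
lemma FF_no_intr (hQ : Dom (QQ V f P)) (hP : ∑ l, P l = 0)
    (hF : ∀ v ∈ QQ V f P, FF (QQ V f P) (nu P) v = 0) {l : Fin 3} (hl : nu P l ≠ 0) {v : Z3}
    (hv : v ∈ QQ V f P) : ¬ Intr (QQ V f P) v := by
  intro h
  obtain ⟨m, hlm, hm⟩ : ∃ m, l ≠ m ∧ nu P m ≠ 0 := by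
    by_contra hcon
    push Not at hcon
    obtain ⟨m, hlm⟩ : ∃ m, l ≠ m := ⟨l + 1, by simp⟩
    obtain ⟨n, hln, hmn⟩ := exists_third hlm
    exact hl (nu_two hP hmn hlm.symm hln.symm (hcon m hlm) (hcon n hln))
  obtain ⟨n, hln, hmn⟩ := exists_third hlm
  have h0 := hF v hv
  rw [FF_intr h hlm hln hmn] at h0
  have a1 : nu P l = 1 := (nu01 P l).resolve_left hl
  have a2 : nu P m = 1 := (nu01 P m).resolve_left hm
  have hw : ∀ i j k, 0 ≤ nu P k * ww (QQ V f P) i j k := fun i j k =>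
    mul_nonneg (by rcases nu01 P k with h | h <;> omega) (hQ.ww_nn _ _ _)
  have := hw l m n
  have := hw m l n
  have := hQ.ww_nn l n m
  have := hQ.ww_nn n l m
  have := hQ.ww_nn m n l
  have := hQ.ww_nn n m l
  have w1 : ww (QQ V f P) l n m + ww (QQ V f P) m n l = gam (QQ V f P) l m + gam (QQ V f P) m l := by
    unfold ww; ring
  have w2 := hQ.gam_width hlm
  rw [a1, a2] at h0
  omega

lemma FF_short (hQ : Dom (QQ V f P))
    (hF : ∀ v ∈ QQ V f P, FF (QQ V f P) (nu P) v = 0) {i j k : Fin 3}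
    (hij : i ≠ j) (hik : i ≠ k) (hjk : j ≠ k) (hl : nu P k ≠ 0) : ww (QQ V f P) i j k ≤ 1 := by
  by_contra hcon
  push Not at hcon
  have s := hQ.side_mem_top hij hik hjk (t := 1) (by norm_num) hcon.le
  have h1 := hQ.gam_width hij
  have h2 := hQ.gam_width hik
  have h3 := hQ.gam_tri j k i
  have h4 := hQ.gam_tri k j i
  have h5 := hQ.gam_tri i j k
  have h6 := hQ.gam_tri i k j
  have hm : Mid (QQ V f P) (side (QQ V f P) i j k + (fun l => if l = k then 1 else 0)) i j k := by
    refine ⟨⟨hij, hik, hjk⟩, ?_⟩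
    simp only [Pi.add_apply, side_i, side_j _ hij, side_k _ hik hjk, if_neg hik, if_neg hjk, if_true]
    unfold ww at hcon
    omega
  have h0 := hF _ s
  rw [FF_mid hm, (nu01 P k).resolve_left hl] at h0
  omega
end Part4

section Part5
variable {V Q : Set Z3}

def Wf (V : Set Z3) (c : Z3 → Fin 3 → ℝ) (r : Z3) : ℕ → Z3 → ℝ
  | 0, _ => 0
  | N + 1, p => if h : ∃ m, r m < p m ∧ p - ee m ∈ V then
      Wf V c r N (p - ee h.choose) + c (p - ee h.choose) h.choose else 0

lemma sum_step' (p r : Z3) (m : Fin 3) : ∑ l, ((p - ee m) l - r l) = ∑ l, (p l - r l) - 1 := by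
  simp [Finset.sum_sub_distrib, ee]; ring

lemma step_le {r p : Z3} {m : Fin 3} (hle : r ≤ p) (hm : r m < p m) : r ≤ p - ee m := by
  intro l
  by_cases hl : l = m
  · subst hl; simp [ee_self]; omega
  · simpa [ee_ne hl] using hle l

lemma sq_comm (hV : Dom V) {c : Z3 → Fin 3 → ℝ}
    (hc : ∀ u i j k, i ≠ j → i ≠ k → j ≠ k → u ∈ V → u + ee i ∈ V → u + ee i + ee j ∈ V →
      c u i + c (u + ee i) j + c (u + ee i + ee j) k = 0) {q : Z3} {i m : Fin 3} (him : i ≠ m)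
    (h1 : q + ee i ∈ V) (h2 : q + ee m ∈ V) : c q i + c (q + ee i) m = c q m + c (q + ee m) i := by
  obtain ⟨k, hik, hmk⟩ := exists_third him
  have h0 := hV.inf_unit him h1 h2
  have h3 := hV.sup_unit him h1 h2
  have h4 := hV.sup_unit him.symm h2 h1
  have e1 := hc q i m k him hik hmk h0 h1 h3
  have e2 := hc q m i k him.symm hmk hik h0 h2 h4
  have : q + ee m + ee i = q + ee i + ee m := by abel
  rw [this] at e2
  linarith

lemma Wf_step (hV : Dom V) {c : Z3 → Fin 3 → ℝ}
    (hc : ∀ u i j k, i ≠ j → i ≠ k → j ≠ k → u ∈ V → u + ee i ∈ V → u + ee i + ee j ∈ V →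
      c u i + c (u + ee i) j + c (u + ee i + ee j) k = 0) (r : Z3) :
    ∀ N : ℕ, ∀ p, p ∈ V → r ≤ p → ∑ l, (p l - r l) = N + 1 → ∀ i, r i < p i → p - ee i ∈ V →
      Wf V c r (N + 1) p = Wf V c r N (p - ee i) + c (p - ee i) i := by
  intro N
  induction N with
  | zero =>
    intro p hp hle hs i hi hiV
    have h : ∃ m, r m < p m ∧ p - ee m ∈ V := ⟨i, hi, hiV⟩
    have hm := h.choose_spec
    have e : h.choose = i := by
      by_contra hne
      obtain ⟨k, hik, hmk⟩ := exists_third hne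
      rw [sum3 hne hik hmk] at hs
      have h1 : r k ≤ p k := hle k
      have := hm.1
      push_cast at hs
      omega
    have h2 : Wf V c r (0 + 1) p = Wf V c r 0 (p - ee h.choose) + c (p - ee h.choose) h.choose :=
      dif_pos h
    rw [h2, e]
  | succ N ih =>
    intro p hp hle hs i hi hiV
    have h : ∃ m, r m < p m ∧ p - ee m ∈ V := ⟨i, hi, hiV⟩
    have hm := h.choose_spec
    rw [Wf, dif_pos h]
    generalize h.choose = m at hm
    obtain ⟨hm, hmV⟩ := hm
    by_cases hne : m = i
    · rw [hne]
    have a1 : p - ee i - ee m + ee i = p - ee m := by abel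
    have a2 : p - ee i - ee m + ee m = p - ee i := by abel
    have a3 : p - ee m - ee i = p - ee i - ee m := by abel
    have hq : p - ee i - ee m ∈ V := by
      apply hV.inf_unit (Ne.symm hne)
      · rw [a1]; exact hmV
      · rw [a2]; exact hiV
    have e1 := ih (p - ee i) hiV (step_le hle hi) (by rw [sum_step', hs]; push_cast; ring) m
      (by simpa [ee_ne hne] using hm) hq
    have e2 := ih (p - ee m) hmV (step_le hle hm) (by rw [sum_step', hs]; push_cast; ring) i
      (by simpa [ee_ne (Ne.symm hne)] using hi) (a3 ▸ hq)
    have e3 := sq_comm hV hc (q := p - ee i - ee m) (Ne.symm hne) (a1.symm ▸ hmV) (a2.symm ▸ hiV)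
    rw [a1, a2] at e3
    rw [a3] at e2
    rw [e1, e2]; linarith

lemma exactness (hV : Dom V) {c : Z3 → Fin 3 → ℝ}
    (hc : ∀ u i j k, i ≠ j → i ≠ k → j ≠ k → u ∈ V → u + ee i ∈ V → u + ee i + ee j ∈ V →
      c u i + c (u + ee i) j + c (u + ee i + ee j) k = 0)
    (hci : ∀ u n i, c (u + sh n) i = c u i) :
    ∃ T : Z3 → ℝ, DInv T ∧ ∀ u i, u ∈ V → u + ee i ∈ V → T (u + ee i) - T u = c u i := by
  obtain ⟨r, hr⟩ := hV.nonempty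
  set T0 : Z3 → ℝ := fun p => Wf V c r (∑ l, (p l - r l)).toNat p with hT0
  have h0 : ∀ p i, p ∈ V → p + ee i ∈ V → r ≤ p → T0 (p + ee i) - T0 p = c p i := by
    intro p i hp hpi hle
    have a : p + ee i - ee i = p := by abel
    have hnn : 0 ≤ ∑ l, (p l - r l) := Finset.sum_nonneg fun l _ => sub_nonneg.2 (hle l)
    have hsum : ∑ l, ((p + ee i) l - r l) = ∑ l, (p l - r l) + 1 := by
      simp [Finset.sum_sub_distrib, Finset.sum_add_distrib, ee]; ring
    have h := Wf_step hV hc r (∑ l, (p l - r l)).toNat (p + ee i) hpi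
      (hle.trans (fun l => by simp [ee]; split_ifs <;> simp))
      (by rw [hsum, Int.toNat_of_nonneg hnn]) i (by
        have : r i ≤ p i := hle i
        simp [ee_self]; omega) (by rw [a]; exact hp)
    rw [a] at h
    have e : (∑ l, ((p + ee i) l - r l)).toNat = (∑ l, (p l - r l)).toNat + 1 := by
      rw [hsum]; omega
    simp only [hT0]
    rw [e, h]; ring
  have h1 : ∀ p, p ∈ V → r ≤ p → T0 (p + sh 1) = T0 p := by
    intro p hp hle
    obtain ⟨i, j, hij, hi, hj⟩ := hV.tri_at hp
    obtain ⟨k, hik, hjk⟩ := exists_third hij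
    have hs : p + ee i + ee j + ee k = p + sh 1 := by rw [← ee_sum hij hik hjk]; abel
    have le1 : ∀ (q : Z3) m, r ≤ q → r ≤ q + ee m := fun q m h =>
      h.trans (fun l => by simp [ee]; split_ifs <;> simp)
    have e1 := h0 p i hp hi hle
    have e2 := h0 _ j hi hj (le1 _ _ hle)
    have e3 := h0 _ k hj (by rw [hs]; exact hV.diag _ _ hp) (le1 _ _ (le1 _ _ hle))
    have e4 := hc p i j k hij hik hjk hp hi hj
    rw [hs] at e3
    linarith
  have h2 : ∀ n : ℕ, ∀ p, p ∈ V → r ≤ p → T0 (p + sh n) = T0 p := by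
    intro n
    induction n with
    | zero => intro p _ _; congr 1; funext l; simp [sh_apply]
    | succ n ih =>
      intro p hp hle
      have : p + sh ((n + 1 : ℕ) : ℤ) = p + sh n + sh 1 := by
        funext l; simp [sh_apply]; ring
      rw [this, h1 _ (hV.diag _ _ hp) (hle.trans (fun l => by simp [sh_apply])), ih p hp hle]
  have hs1 : ∀ p n m, p + sh n + sh m = p + sh (n + m) := by
    intro p n m; funext l; simp [sh_apply]; ring
  -- T p = T0 (p + n) for any n large
  have h3 : ∀ p ∈ V, ∀ n m : ℤ, r ≤ p + sh n → r ≤ p + sh m → T0 (p + sh n) = T0 (p + sh m) := by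
    have : ∀ p ∈ V, ∀ n m : ℤ, n ≤ m → r ≤ p + sh n → T0 (p + sh m) = T0 (p + sh n) := by
      intro p hp n m hnm hle
      have := h2 (m - n).toNat (p + sh n) (hV.diag _ _ hp) hle
      rw [hs1, Int.toNat_of_nonneg (by omega)] at this
      rw [← this]; congr 2; congr 1; omega
    intro p hp n m h h'
    rcases le_total n m with hnm | hnm
    · exact (this p hp n m hnm h).symm
    · exact this p hp m n hnm h'
  have hbig : ∀ p : Z3, r ≤ p + sh (nrm r + nrm p) := by
    intro p l
    have a1 := le_nrm r l; have a2 := le_nrm p l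
    rw [abs_le] at a1 a2
    simp only [Pi.add_apply, sh_apply]; omega
  refine ⟨fun p => if p ∈ V then T0 (p + sh (nrm r + nrm p)) else 0, ?_, ?_⟩
  · intro p n
    have hiff : p + sh n ∈ V ↔ p ∈ V := by
      refine ⟨fun h => ?_, hV.diag _ _⟩
      have := hV.diag _ (-n) h
      rw [hs1] at this
      convert this using 1; funext l; simp [sh_apply]
    by_cases hp : p ∈ V
    · simp only [hp, hiff, if_true]
      rw [hs1]
      apply h3 p hp
      · rw [← hs1]; exact hbig _
      · exact hbig _
    · simp [hp, hiff]
  · intro u i hu hui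
    simp only [hu, hui, if_true]
    set n := nrm r + nrm u with hn
    set m := nrm r + nrm (u + ee i) with hm
    have b1 : r ≤ u + sh n := hbig u
    have e1 := h0 (u + sh n) i (hV.diag _ _ hu) (by
      have := hV.diag _ n hui
      convert this using 1; abel) b1
    have : u + sh n + ee i = u + ee i + sh n := by abel
    rw [hci, this] at e1
    rw [h3 (u + ee i) hui m n (hbig _) (by
      rw [← this]; exact b1.trans (fun l => by simp only [Pi.add_apply, ee]; split_ifs <;> simp))]
    exact e1

/-- circulations in graphs whose nodes have degree at least two -/
lemma circulation {α β δ : Type*} (Y : Finset α) (hY : Y.Nonempty) (ed : α → β) (sg : α → Bool)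
    (nd : α → δ)
    (hinj : ∀ y ∈ Y, ∀ y' ∈ Y, ed y = ed y' → sg y = sg y' → y = y')
    (hfib : ∀ y ∈ Y, ∃ y' ∈ Y, y' ≠ y ∧ nd y' = nd y) :
    ∃ T : β → ℝ, (∃ y ∈ Y, T (ed y) ≠ 0) ∧
      ∀ y0 ∈ Y, ∑ y ∈ Y with nd y = nd y0, (if sg y then (1:ℝ) else -1) * T (ed y) = 0 := by
  set E := Y.image ed with hE
  set N := Y.image nd with hN
  have hedE : ∀ y ∈ Y, ed y ∈ E := fun y hy => Finset.mem_image_of_mem _ hy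
  let ext : (E → ℝ) → β → ℝ := fun T e => if h : e ∈ E then T ⟨e, h⟩ else 0
  let A : (E → ℝ) →ₗ[ℝ] (N → ℝ) :=
    { toFun := fun T n => ∑ y ∈ Y with nd y = n, (if sg y then (1:ℝ) else -1) * ext T (ed y)
      map_add' := by
        intro T T'; funext n
        simp only [Pi.add_apply, ← Finset.sum_add_distrib]
        apply Finset.sum_congr rfl; intro y hy
        simp only [ext]; split_ifs <;> simp <;> ring
      map_smul' := by
        intro a T; funext n
        simp only [Pi.smul_apply, smul_eq_mul, RingHom.id_apply, Finset.mul_sum]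
        apply Finset.sum_congr rfl; intro y hy
        simp only [ext]; split_ifs <;> simp }
  have hcard1 : 2 * N.card ≤ Y.card := by
    apply Finset.mul_card_image_le_card_of_maps_to (f := nd) (s := Y) (t := N)
    · intro y hy; exact Finset.mem_image_of_mem _ hy
    · intro n hn
      obtain ⟨y, hy, rfl⟩ := Finset.mem_image.1 hn
      obtain ⟨y', hy', hne, hnd⟩ := hfib y hy
      have : ({y, y'} : Finset α) ⊆ Y.filter (fun z => nd z = nd y) := by
        intro z hz
        simp only [Finset.mem_insert, Finset.mem_singleton] at hz
        rcases hz with rfl | rfl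
        · simp [hy]
        · simp [hy', hnd]
      calc 2 = ({y, y'} : Finset α).card := (Finset.card_pair hne.symm).symm
        _ ≤ _ := Finset.card_le_card this
  have himg : Y.image (fun y => (ed y, sg y)) ⊆ E ×ˢ (Finset.univ : Finset Bool) := by
    intro z hz
    obtain ⟨y, hy, rfl⟩ := Finset.mem_image.1 hz
    simp [hedE y hy]
  have hcardI : (Y.image (fun y => (ed y, sg y))).card = Y.card := by
    apply Finset.card_image_of_injOn
    intro y hy y' hy' h
    simp only [Prod.mk.injEq] at h
    exact hinj y hy y' hy' h.1 h.2
  have hcardP : (E ×ˢ (Finset.univ : Finset Bool)).card = 2 * E.card := by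
    rw [Finset.card_product]; simp [mul_comm]
  have hcard2 : Y.card ≤ 2 * E.card := by
    rw [← hcardI, ← hcardP]; exact Finset.card_le_card himg
  have hnotinj : ¬ Function.Injective A := by
    rcases lt_or_ge N.card E.card with hlt | hge
    · intro hi
      have := LinearMap.finrank_le_finrank_of_injective hi
      simp at this
      omega
    · have hNE : N.card = E.card := by omega
      have hI : Y.image (fun y => (ed y, sg y)) = E ×ˢ (Finset.univ : Finset Bool) := by
        apply Finset.eq_of_subset_of_card_le himg
        rw [hcardI, hcardP]; omega
      rw [LinearMap.injective_iff_surjective_of_finrank_eq_finrank (by simp [hNE])]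
      intro hs
      obtain ⟨T, hT⟩ := hs (fun _ => 1)
      have h1 : ∑ n : N, A T n = ∑ y ∈ Y, (if sg y then (1:ℝ) else -1) * ext T (ed y) := by
        rw [← Finset.sum_fiberwise_of_maps_to (s := Y) (t := N) (g := nd)
          (fun y hy => Finset.mem_image_of_mem _ hy)]
        rw [← Finset.sum_coe_sort N]
        rfl
      have h2 : ∑ y ∈ Y, (if sg y then (1:ℝ) else -1) * ext T (ed y) = 0 := by
        have : ∑ z ∈ Y.image (fun y => (ed y, sg y)), (if z.2 then (1:ℝ) else -1) * ext T z.1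
            = ∑ y ∈ Y, (if sg y then (1:ℝ) else -1) * ext T (ed y) := by
          rw [Finset.sum_image]
          intro y hy y' hy' h
          simp only [Prod.mk.injEq] at h
          exact hinj y hy y' hy' h.1 h.2
        rw [← this, hI, Finset.sum_product]
        apply Finset.sum_eq_zero
        intro e he
        simp
      rw [h2, hT] at h1
      simp at h1
      rw [h1] at hN
      exact hY.ne_empty (Finset.image_eq_empty.1 hN.symm)
  rw [← LinearMap.ker_eq_bot, Submodule.eq_bot_iff] at hnotinj
  push Not at hnotinj
  obtain ⟨T, hT, hT0⟩ := hnotinj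
  refine ⟨ext T, ?_, ?_⟩
  · by_contra hcon
    push Not at hcon
    apply hT0
    funext ⟨e, he⟩
    obtain ⟨y, hy, rfl⟩ := Finset.mem_image.1 he
    have := hcon y hy
    simpa [ext, hedE y hy] using this
  · intro y0 hy0
    have := congrFun (LinearMap.mem_ker.1 hT) ⟨nd y0, Finset.mem_image_of_mem _ hy0⟩
    exact this
end Part5

section Part6
variable {V Q : Set Z3}

def Bd (V : Set Z3) (u : Z3) (k : Fin 3) : Prop := ∃ i, i ≠ k ∧ u + ee k + ee i ∉ V

def Tt (V : Set Z3) (f : Z3 → ℝ) (u : Z3) (k : Fin 3) : Prop :=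
  ∀ i j, i ≠ j → i ≠ k → j ≠ k → u + ee k + ee i ∈ V ∧ u + ee k + ee j ∈ V ∧
    f u + f (u + ee k) = f (u + ee k + ee i) + f (u + ee k + ee j)

lemma Bd.not_tt {f : Z3 → ℝ} {u : Z3} {k : Fin 3} (h : Bd V u k) : ¬ Tt V f u k := by
  obtain ⟨i, hik, hi⟩ := h
  intro ht
  obtain ⟨j, hij, hkj⟩ := exists_third hik
  exact hi (ht i j hij hik hkj.symm).1

structure Good (V : Set Z3) (f D : Z3 → ℝ) : Prop where
  dinv : DInv D
  rh : ∀ p i j, i ≠ j → p ∈ V → p + ee i ∈ V → p + ee j ∈ V → p + ee i + ee j ∈ V →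
    f (p + ee i) + f (p + ee j) = f p + f (p + ee i + ee j) →
    D (p + ee i) + D (p + ee j) ≤ D p + D (p + ee i + ee j)
  fix : ∀ u k, u ∈ V → u + ee k ∈ V → (∃ z : ℤ, f (u + ee k) - f u = z) → ¬ Tt V f u k →
    D (u + ee k) = D u
  tri : ∀ u i j, i ≠ j → u ∈ V → u + ee i ∈ V → u + ee i + ee j ∈ V →
    (∃ z : ℤ, f (u + ee i) - f u = z) → (∃ z : ℤ, f (u + ee i + ee j) - f (u + ee i) = z) →
    D (u + ee i) = D u ∧ D (u + ee i + ee j) = D u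

structure Pc (V : Set Z3) (g0 : Z3 → ℝ) (v0 : Z3) (M0 : ℤ) (g : Z3 → ℝ) : Prop where
  dinv : DInv g
  off : ∀ v, v ∉ V → g v = 0
  zero : g v0 = 0
  rh : Rh V g
  bd : ∀ u k, u ∈ V → u + ee k ∈ V → Bd V u k → (∃ z : ℤ, g0 (u + ee k) - g0 u = z) →
    g (u + ee k) - g u = g0 (u + ee k) - g0 u
  tri : ∀ u i j, i ≠ j → u ∈ V → u + ee i ∈ V → u + ee i + ee j ∈ V →
    (∃ z : ℤ, g0 (u + ee i) - g0 u = z) → (∃ z : ℤ, g0 (u + ee i + ee j) - g0 (u + ee i) = z) →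
    g (u + ee i) - g u = g0 (u + ee i) - g0 u ∧
    g (u + ee i + ee j) - g (u + ee i) = g0 (u + ee i + ee j) - g0 (u + ee i)
  box0 : ∀ u k, u ∈ V → u + ee k ∈ V → Bd V u k → g (u + ee k) - g u ≤ M0 ∧ -M0 ≤ g (u + ee k) - g u
  box : ∀ u k, u ∈ V → u + ee k ∈ V → g (u + ee k) - g u ≤ 2 * M0 + 1

lemma Pc_closed (V : Set Z3) (g0 : Z3 → ℝ) (v0 : Z3) (M0 : ℤ) : IsClosed {g | Pc V g0 v0 M0 g} := by
  have : {g | Pc V g0 v0 M0 g} = {g | DInv g} ∩ {g | ∀ v, v ∉ V → g v = 0} ∩ {g | g v0 = 0} ∩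
      {g | Rh V g} ∩ {g | ∀ u k, u ∈ V → u + ee k ∈ V → Bd V u k →
        (∃ z : ℤ, g0 (u + ee k) - g0 u = z) → g (u + ee k) - g u = g0 (u + ee k) - g0 u} ∩
      {g | ∀ u i j, i ≠ j → u ∈ V → u + ee i ∈ V → u + ee i + ee j ∈ V →
    (∃ z : ℤ, g0 (u + ee i) - g0 u = z) → (∃ z : ℤ, g0 (u + ee i + ee j) - g0 (u + ee i) = z) →
    g (u + ee i) - g u = g0 (u + ee i) - g0 u ∧
    g (u + ee i + ee j) - g (u + ee i) = g0 (u + ee i + ee j) - g0 (u + ee i)} ∩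
      {g | ∀ u k, u ∈ V → u + ee k ∈ V → Bd V u k →
        g (u + ee k) - g u ≤ M0 ∧ -M0 ≤ g (u + ee k) - g u} ∩
      {g | ∀ u k, u ∈ V → u + ee k ∈ V → g (u + ee k) - g u ≤ 2 * M0 + 1} := by
    ext g
    constructor
    · intro h
      exact ⟨⟨⟨⟨⟨⟨⟨h.dinv, h.off⟩, h.zero⟩, h.rh⟩, h.bd⟩, h.tri⟩, h.box0⟩, h.box⟩
    · rintro ⟨⟨⟨⟨⟨⟨⟨a, b⟩, c⟩, d⟩, e⟩, f⟩, g⟩, h⟩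
      exact ⟨a, b, c, d, e, f, g, h⟩
  rw [this]
  simp only [DInv, Rh, Set.ofPred_forall, Set.ofPred_and]
  repeat' first
    | apply IsClosed.inter
    | (refine isClosed_iInter fun _ => ?_)
    | (refine isClosed_eq ?_ ?_ <;> fun_prop)
    | (refine isClosed_le ?_ ?_ <;> fun_prop)

lemma abs_of_sum {P : Fin 3 → ℝ} (hP : ∑ l, P l = 0) {M : ℝ} (h : ∀ l, P l ≤ M) (l : Fin 3) :
    |P l| ≤ 2 * M := by
  rw [Fin.sum_univ_three] at hP
  have h0 := h 0; have h1 := h 1; have h2 := h 2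
  rw [abs_le]
  fin_cases l <;> constructor <;> simp <;> linarith

lemma dot_abs {P : Fin 3 → ℝ} {M : ℝ} (h : ∀ l, |P l| ≤ M) (v : Z3) :
    dot P v ≤ ∑ l, M * |(v l : ℝ)| := by
  apply Finset.sum_le_sum
  intro l _
  calc P l * v l ≤ |P l * v l| := le_abs_self _
    _ = |P l| * |(v l : ℝ)| := abs_mul _ _
    _ ≤ _ := mul_le_mul_of_nonneg_right (h l) (abs_nonneg _)

def Kb (v0 : Z3) (M0 : ℤ) (v : Z3) : ℝ := ∑ l, (2 * (2 * M0 + 1) : ℝ) * |((v - v0) l : ℝ)|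

lemma grad_le (hV : Dom V) {g : Z3 → ℝ} (hinv : DInv g) {M : ℝ}
    (hb : ∀ u k, u ∈ V → u + ee k ∈ V → g (u + ee k) - g u ≤ M) {u : Z3} {i j : Fin 3}
    (hij : i ≠ j) (h0 : u ∈ V) (h1 : u + ee i ∈ V) (h2 : u + ee i + ee j ∈ V) (l : Fin 3) :
    grad g u i j l ≤ M := by
  obtain ⟨k, hik, hjk⟩ := exists_third hij
  unfold grad
  split_ifs with h h'
  · exact hb u i h0 h1
  · exact hb _ j h1 h2
  · have e : u + ee i + ee j + ee k = u + sh 1 := by rw [← ee_sum hij hik hjk]; abel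
    have := hb (u + ee i + ee j) k h2 (by rw [e]; exact hV.diag _ _ h0)
    rw [e, hinv] at this
    exact this

lemma Pc.bound (hV : Dom V) {g0 g : Z3 → ℝ} {v0 : Z3} {M0 : ℤ} (hv0 : v0 ∈ V)
    (h : Pc V g0 v0 M0 g) (v : Z3) (hv : v ∈ V) : |g v| ≤ Kb v0 M0 v := by
  have key : ∀ x y, x ∈ V → y ∈ V → g y - g x ≤ ∑ l, (2 * (2 * M0 + 1) : ℝ) * |((y - x) l : ℝ)| := by
    intro x y hx hy
    obtain ⟨i, j, hij, h1, h2⟩ := hV.tri_at hx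
    have h3 := (grad_mem hV h.rh h.dinv hij hx h1 h2).1.2 y hy
    have h4 := dot_abs (fun l => abs_of_sum (grad_sum g x hij)
      (grad_le hV h.dinv h.box hij hx h1 h2) l) (y - x)
    rw [dot_sub] at h4
    simp only [Pi.sub_apply] at h4 ⊢
    linarith
  rw [abs_le]
  have h1 := key v0 v hv0 hv
  have h2 := key v v0 hv hv0
  rw [h.zero] at h1 h2
  have : ∑ l, (2 * (2 * M0 + 1) : ℝ) * |((v0 - v) l : ℝ)| = Kb v0 M0 v := by
    unfold Kb
    apply Finset.sum_congr rfl; intro l _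
    congr 1
    simp only [Pi.sub_apply]; push_cast; rw [abs_sub_comm]
  rw [this] at h2
  constructor
  · linarith
  · unfold Kb; linarith

lemma Pc_compact (hV : Dom V) {g0 : Z3 → ℝ} {v0 : Z3} {M0 : ℤ} (hv0 : v0 ∈ V) :
    IsCompact {g | Pc V g0 v0 M0 g} := by
  apply IsCompact.of_isClosed_subset (isCompact_univ_pi (fun v : Z3 =>
    isCompact_Icc (a := -|Kb v0 M0 v|) (b := |Kb v0 M0 v|))) (Pc_closed _ _ _ _)
  intro g hg v _
  by_cases hv : v ∈ V
  · have := hg.bound hV hv0 v hv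
    have := this.trans (le_abs_self _)
    rwa [abs_le] at this
  · rw [hg.off v hv]; simp

lemma ev_lin {a b : ℝ} (ha : 0 ≤ a) (hb : a = 0 → 0 ≤ b) :
    ∀ᶠ ε in nhdsWithin (0:ℝ) (Set.Ioi 0), 0 ≤ a + ε * b := by
  rcases ha.eq_or_lt with h | h
  · filter_upwards [self_mem_nhdsWithin] with ε hε
    rw [← h, zero_add]
    exact mul_nonneg (le_of_lt hε) (hb h.symm)
  · have : Filter.Tendsto (fun ε : ℝ => a + ε * b) (nhds 0) (nhds (a + 0 * b)) :=
      Continuous.tendsto (by fun_prop) 0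
    have h2 : ∀ᶠ ε in nhds (0:ℝ), 0 < a + ε * b := this.eventually (lt_mem_nhds (by simpa using h))
    filter_upwards [h2.filter_mono nhdsWithin_le_nhds] with ε hε
    exact hε.le

lemma Dom.mem_sh (hV : Dom V) {u : Z3} {n : ℤ} : u + sh n ∈ V ↔ u ∈ V := by
  refine ⟨fun h => ?_, hV.diag _ _⟩
  have := hV.diag _ (-n) h
  convert this using 1; funext l; simp [sh_apply]

lemma red (hV : Dom V) {R : Z3 → Prop} (h : ∀ u ∈ hV.fin.toFinset, R u)
    (hs : ∀ u n, R u → R (u + sh n)) (u : Z3) (hu : u ∈ V) : R u := by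
  have h1 := hV.norm_rep hu
  have := hs _ (u 2) (h _ (hV.fin.mem_toFinset.2 h1))
  convert this using 1; funext l; simp [sh_apply]

lemma sh_c1 (u : Z3) (n : ℤ) (i : Fin 3) : u + sh n + ee i = u + ee i + sh n := by abel

/-- box constraint is preserved -/
lemma box_dir (hV : Dom V) {g0 g D : Z3 → ℝ} {v0 : Z3} {M0 : ℤ}
    (h : Pc V g0 v0 M0 g) (hD : Good V g D) : ∀ n : ℕ, ∀ u i j k, i ≠ j → i ≠ k → j ≠ k →
    (gam V j i - u j + u i) + (gam V k i - u k + u i) < n → u ∈ V → u + ee i ∈ V →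
    g (u + ee i) - g u = 2 * M0 + 1 → D (u + ee i) ≤ D u := by
  intro n
  induction n with
  | zero =>
    intro u i j k hij hik hjk hn hu
    have h1 := hV.gam_ge hu j i
    have h2 := hV.gam_ge hu k i
    push_cast at hn; omega
  | succ n ih =>
    have main : ∀ u i j k, i ≠ j → i ≠ k → j ≠ k →
      (gam V j i - u j + u i) + (gam V k i - u k + u i) < (n + 1 : ℕ) → u ∈ V → u + ee i ∈ V →
      u + ee j ∈ V → g (u + ee i) - g u = 2 * M0 + 1 → D (u + ee i) ≤ D u := by
      intro u i j k hij hik hjk hn hu hui huj he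
      have h3 := hV.sup_unit hij hui huj
      have e : u + ee i + ee j = u + ee j + ee i := by abel
      have r := h.rh u i j hij hu hui huj h3
      have b := h.box (u + ee j) i huj (e ▸ h3)
      rw [← e] at b
      have t : g (u + ee i) + g (u + ee j) = g u + g (u + ee i + ee j) := by linarith
      have d := hD.rh u i j hij hu hui huj h3 t
      have := ih (u + ee j) i j k hij hik hjk (by
        simp only [Pi.add_apply, ee_self, ee_ne hij, ee_ne hjk.symm]
        push_cast at hn; omega) huj (e ▸ h3) (by rw [← e]; linarith)
      rw [← e] at this
      linarith
    intro u i j k hij hik hjk hn hu hui he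
    by_cases huj : u + ee j ∈ V
    · exact main u i j k hij hik hjk hn hu hui huj he
    by_cases huk : u + ee k ∈ V
    · exact main u i k j hik hij hjk.symm (by omega) hu hui huk he
    by_cases ht : Tt V g u i
    · exfalso
      obtain ⟨t1, t2, t3⟩ := ht j k hjk hij.symm hik.symm
      have e1 : u + ee i + ee j + ee k = u + sh 1 := by rw [← ee_sum hij hik hjk]; abel
      have e2 : u + ee i + ee k + ee j = u + sh 1 := by rw [← ee_sum hij hik hjk]; abel
      have b1 := h.box0 (u + ee i + ee j) k t1 (by rw [e1]; exact hV.diag _ _ hu)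
        ⟨j, hjk, by rw [e1, sh_c1, hV.mem_sh]; exact huj⟩
      have b2 := h.box0 (u + ee i + ee k) j t2 (by rw [e2]; exact hV.diag _ _ hu)
        ⟨k, hjk.symm, by rw [e2, sh_c1, hV.mem_sh]; exact huk⟩
      rw [e1, h.dinv] at b1
      rw [e2, h.dinv] at b2
      linarith [b1.1, b1.2, b2.1, b2.2]
    · exact (hD.fix u i hu hui ⟨2 * M0 + 1, by rw [he]; push_cast; ring⟩ ht).le

lemma eps_step (hV : Dom V) {g0 g D : Z3 → ℝ} {v0 : Z3} {M0 : ℤ}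
    (h : Pc V g0 v0 M0 g) (hD : Good V g D) (hoff : ∀ v, v ∉ V → D v = 0) (hz : D v0 = 0) :
    ∀ᶠ ε in nhdsWithin (0:ℝ) (Set.Ioi 0), Pc V g0 v0 M0 (fun v => g v + ε * D v) := by
  have e4 : ∀ u i j, ∀ᶠ ε in nhdsWithin (0:ℝ) (Set.Ioi 0), i ≠ j → u ∈ V → u + ee i ∈ V →
      u + ee j ∈ V → u + ee i + ee j ∈ V → 0 ≤ (g u + g (u + ee i + ee j) - g (u + ee i)
        - g (u + ee j)) + ε * (D u + D (u + ee i + ee j) - D (u + ee i) - D (u + ee j)) := by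
    intro u i j
    by_cases hh : i ≠ j ∧ u ∈ V ∧ u + ee i ∈ V ∧ u + ee j ∈ V ∧ u + ee i + ee j ∈ V
    · obtain ⟨a, b, c, d, e⟩ := hh
      have r := h.rh u i j a b c d e
      filter_upwards [ev_lin (a := g u + g (u + ee i + ee j) - g (u + ee i) - g (u + ee j))
        (b := D u + D (u + ee i + ee j) - D (u + ee i) - D (u + ee j)) (by linarith)
        (fun h0 => by
          have := hD.rh u i j a b c d e (by linarith)
          linarith)] with ε hε _ _ _ _ _
      exact hε
    · filter_upwards with ε a b c d e
      exact absurd ⟨a, b, c, d, e⟩ hh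
  have e7 : ∀ u k, ∀ᶠ ε in nhdsWithin (0:ℝ) (Set.Ioi 0), u ∈ V → u + ee k ∈ V → Bd V u k →
      0 ≤ (M0 - (g (u + ee k) - g u)) + ε * (-(D (u + ee k) - D u)) ∧
      0 ≤ (M0 + (g (u + ee k) - g u)) + ε * (D (u + ee k) - D u) := by
    intro u k
    by_cases hh : u ∈ V ∧ u + ee k ∈ V ∧ Bd V u k
    · obtain ⟨a, b, c⟩ := hh
      have r := h.box0 u k a b c
      filter_upwards [ev_lin (a := M0 - (g (u + ee k) - g u)) (b := -(D (u + ee k) - D u))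
        (by linarith [r.1]) (fun h0 => by
          have := hD.fix u k a b ⟨M0, by linarith⟩ c.not_tt
          linarith), ev_lin (a := M0 + (g (u + ee k) - g u)) (b := (D (u + ee k) - D u))
        (by linarith [r.2]) (fun h0 => by
          have := hD.fix u k a b ⟨-M0, by push_cast; linarith⟩ c.not_tt
          linarith)] with ε h1 h2 _ _ _
      exact ⟨h1, h2⟩
    · filter_upwards with ε a b c
      exact absurd ⟨a, b, c⟩ hh
  have e8 : ∀ u k, ∀ᶠ ε in nhdsWithin (0:ℝ) (Set.Ioi 0), u ∈ V → u + ee k ∈ V →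
      0 ≤ (2 * M0 + 1 - (g (u + ee k) - g u)) + ε * (-(D (u + ee k) - D u)) := by
    intro u k
    by_cases hh : u ∈ V ∧ u + ee k ∈ V
    · obtain ⟨a, b⟩ := hh
      have r := h.box u k a b
      filter_upwards [ev_lin (a := 2 * M0 + 1 - (g (u + ee k) - g u)) (b := -(D (u + ee k) - D u))
        (by linarith) (fun h0 => by
          obtain ⟨i, hi⟩ : ∃ i, k ≠ i := exists_ne k |>.imp fun _ h => h.symm
          obtain ⟨j, hkj, hij⟩ := exists_third hi
          have := box_dir hV h hD ((gam V i k - u i + u k) + (gam V j k - u j + u k) + 1).toNat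
            u k i j hi hkj hij (by omega) a b (by linarith)
          linarith)] with ε h1 _ _
      exact h1
    · filter_upwards with ε a b
      exact absurd ⟨a, b⟩ hh
  have f4 : ∀ᶠ ε in nhdsWithin (0:ℝ) (Set.Ioi 0), ∀ u ∈ hV.fin.toFinset, ∀ i j, i ≠ j →
      u ∈ V → u + ee i ∈ V →
      u + ee j ∈ V → u + ee i + ee j ∈ V → 0 ≤ (g u + g (u + ee i + ee j) - g (u + ee i)
        - g (u + ee j)) + ε * (D u + D (u + ee i + ee j) - D (u + ee i) - D (u + ee j)) := by
    rw [Filter.eventually_all_finset]; intro u _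
    rw [Filter.eventually_all]; intro i
    rw [Filter.eventually_all]; intro j
    exact e4 u i j
  have f7 : ∀ᶠ ε in nhdsWithin (0:ℝ) (Set.Ioi 0), ∀ u ∈ hV.fin.toFinset, ∀ k,
      u ∈ V → u + ee k ∈ V → Bd V u k →
      0 ≤ (M0 - (g (u + ee k) - g u)) + ε * (-(D (u + ee k) - D u)) ∧
      0 ≤ (M0 + (g (u + ee k) - g u)) + ε * (D (u + ee k) - D u) := by
    rw [Filter.eventually_all_finset]; intro u _
    rw [Filter.eventually_all]; intro i
    exact e7 u i
  have f8 : ∀ᶠ ε in nhdsWithin (0:ℝ) (Set.Ioi 0), ∀ u ∈ hV.fin.toFinset, ∀ k,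
      u ∈ V → u + ee k ∈ V →
      0 ≤ (2 * M0 + 1 - (g (u + ee k) - g u)) + ε * (-(D (u + ee k) - D u)) := by
    rw [Filter.eventually_all_finset]; intro u _
    rw [Filter.eventually_all]; intro i
    exact e8 u i
  filter_upwards [f4, f7, f8] with ε g4 g7 g8
  have dD := hD.dinv
  have dg := h.dinv
  refine ⟨?_, ?_, ?_, ?_, ?_, ?_, ?_, ?_⟩
  · intro p n
    simp only [dD p n, dg p n]
  · intro v hv
    simp [h.off v hv, hoff v hv]
  · simp [h.zero, hz]
  · intro u i j hij hu hi hj hs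
    have := red hV g4 (by
      intro u n hR i j
      have := hR i j
      simp only [sh_c1, hV.mem_sh, dD _ n, dg _ n]
      exact this) u hu i j hij hu hi hj hs
    linarith
  · intro u k hu hk hb hz
    have e := h.bd u k hu hk hb hz
    have := hD.fix u k hu hk (by rw [e]; exact hz) hb.not_tt
    simp only [this]; linarith
  · intro u i j hij hu hi hj hz hz'
    obtain ⟨e1, e2⟩ := h.tri u i j hij hu hi hj hz hz'
    obtain ⟨d1, d2⟩ := hD.tri u i j hij hu hi hj (by rw [e1]; exact hz) (by rw [e2]; exact hz')
    simp only [d1, d2]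
    constructor <;> linarith
  · intro u k hu hk hb
    have := red hV g7 (by
      intro u n hR i
      have := hR i
      simp only [Bd, sh_c1, hV.mem_sh, dD _ n, dg _ n] at this ⊢
      exact this) u hu k hu hk hb
    constructor <;> linarith [this.1, this.2]
  · intro u k hu hk
    have := red hV g8 (by
      intro u n hR i
      have := hR i
      simp only [sh_c1, hV.mem_sh, dD _ n, dg _ n] at this ⊢
      exact this) u hu k hu hk
    linarith

lemma corner (hV : Dom V) : ∃ v0 ∈ V, ∀ k, ¬ (v0 + ee k ∈ V ∧ v0 - ee k ∈ V) := by
  have h00 : gam V 0 0 = 0 := by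
    obtain ⟨v, hv, e⟩ := hV.gam_att 0 0
    omega
  refine ⟨fun l => - gam V 0 l, ?_, ?_⟩
  · rw [hV.mem_iff]
    intro i j
    have := hV.gam_tri 0 j i
    omega
  · rintro k ⟨h1, h2⟩
    by_cases hk : k = 0
    · subst hk
      have := hV.gam_ge h1 0 1
      simp [ee_self, ee_ne (show (1 : Fin 3) ≠ 0 by simp)] at this
      omega
    · have := hV.gam_ge h2 0 k
      simp [ee_self, ee_ne (Ne.symm hk)] at this
      omega

theorem exists_max (hV : Dom V) {g0 : Z3 → ℝ} (hg0 : Rh V g0) (hinv0 : DInv g0) :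
    ∃ v0 ∈ V, (∀ k, ¬ (v0 + ee k ∈ V ∧ v0 - ee k ∈ V)) ∧ ∃ g, Rh V g ∧ DInv g ∧
    (∀ u k, u ∈ V → u + ee k ∈ V → Bd V u k → (∃ z : ℤ, g0 (u + ee k) - g0 u = z) →
      g (u + ee k) - g u = g0 (u + ee k) - g0 u) ∧
    (∀ u i j, i ≠ j → u ∈ V → u + ee i ∈ V → u + ee i + ee j ∈ V →
    (∃ z : ℤ, g0 (u + ee i) - g0 u = z) → (∃ z : ℤ, g0 (u + ee i + ee j) - g0 (u + ee i) = z) →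
    g (u + ee i) - g u = g0 (u + ee i) - g0 u ∧
    g (u + ee i + ee j) - g (u + ee i) = g0 (u + ee i + ee j) - g0 (u + ee i)) ∧
    ∀ D, Good V g D → (∀ v, v ∉ V → D v = 0) → D v0 = 0 →
      ((∀ v, 0 ≤ D v) ∨ Good V g (fun v => - D v)) → ∀ v, D v = 0 := by
  obtain ⟨v0, hv0, hc⟩ := corner hV
  refine ⟨v0, hv0, hc, ?_⟩
  set S := hV.fin.toFinset with hS
  set B : ℝ := ∑ u ∈ S, ∑ k, |g0 (u + ee k) - g0 u| with hB
  have hBd : ∀ u ∈ V, ∀ k, |g0 (u + ee k) - g0 u| ≤ B := by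
    refine red hV (R := fun u => ∀ k, |g0 (u + ee k) - g0 u| ≤ B) ?_ ?_
    · intro u hu k
      calc |g0 (u + ee k) - g0 u| ≤ ∑ k, |g0 (u + ee k) - g0 u| :=
            Finset.single_le_sum (f := fun k => |g0 (u + ee k) - g0 u|)
              (fun _ _ => abs_nonneg _) (Finset.mem_univ k)
        _ ≤ B := Finset.single_le_sum (f := fun u => ∑ k, |g0 (u + ee k) - g0 u|)
              (fun _ _ => Finset.sum_nonneg fun _ _ => abs_nonneg _) hu
    · intro u n hR k
      simp only [sh_c1, hinv0 _ n]
      exact hR k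
  have hB0 : 0 ≤ B := Finset.sum_nonneg fun _ _ => Finset.sum_nonneg fun _ _ => abs_nonneg _
  set M0 : ℤ := ⌈B⌉ with hM0
  have hM : B ≤ M0 := Int.le_ceil B
  have hne : Pc V g0 v0 M0 (fun v => if v ∈ V then g0 v - g0 v0 else 0) := by
    refine ⟨?_, ?_, ?_, ?_, ?_, ?_, ?_, ?_⟩
    · intro p n; simp only [hV.mem_sh, hinv0 p n]
    · intro v hv; simp [hv]
    · simp
    · intro p i j hij h1 h2 h3 h4
      simp only [h1, h2, h3, h4, if_true]
      linarith [hg0 p i j hij h1 h2 h3 h4]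
    · intro u k h1 h2 _ _
      simp only [h1, h2, if_true]; ring
    · intro u i j hij h1 h2 h3 _ _
      simp only [h1, h2, h3, if_true]; constructor <;> ring
    · intro u k h1 h2 _
      simp only [h1, h2, if_true]
      have := hBd u h1 k
      rw [abs_le] at this
      constructor <;> linarith [this.1, this.2]
    · intro u k h1 h2
      simp only [h1, h2, if_true]
      have := hBd u h1 k
      rw [abs_le] at this
      linarith [this.1, this.2]
  set Φ : (Z3 → ℝ) → ℝ := fun g => ∑ v ∈ S, (g v + |Kb v0 M0 v|) ^ 2 with hΦ
  have hcont : Continuous Φ := by fun_prop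
  obtain ⟨g, hg, hmax⟩ := (Pc_compact hV (g0 := g0) (M0 := M0) hv0).exists_isMaxOn
    ⟨_, hne⟩ hcont.continuousOn
  refine ⟨g, hg.rh, hg.dinv, hg.bd, hg.tri, ?_⟩
  intro D hD hoff hz hcase
  have hall : (∀ v ∈ S, D v = 0) → ∀ v, D v = 0 := by
    intro h v
    by_cases hv : v ∈ V
    · exact red hV h (fun u n hR => by rw [hD.dinv]; exact hR) v hv
    · exact hoff v hv
  apply hall
  by_contra hcon
  push Not at hcon
  obtain ⟨w, hw, hwne⟩ := hcon
  have hsq : 0 < ∑ v ∈ S, D v ^ 2 := by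
    apply Finset.sum_pos' (fun _ _ => sq_nonneg _) ⟨w, hw, by positivity⟩
  have hexp : ∀ ε : ℝ, Φ (fun v => g v + ε * D v) = Φ g +
      2 * ε * ∑ v ∈ S, (g v + |Kb v0 M0 v|) * D v + ε ^ 2 * ∑ v ∈ S, D v ^ 2 := by
    intro ε
    simp only [hΦ, Finset.mul_sum, ← Finset.sum_add_distrib]
    apply Finset.sum_congr rfl; intro v _; ring
  rcases hcase with hnn | hneg
  · have e1 := eps_step hV hg hD hoff hz
    obtain ⟨ε, hε, hpos⟩ := (e1.and self_mem_nhdsWithin).exists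
    have h1 : Φ (fun v => g v + ε * D v) ≤ Φ g := hmax hε
    rw [hexp] at h1
    have h2 : 0 ≤ ∑ v ∈ S, (g v + |Kb v0 M0 v|) * D v := by
      apply Finset.sum_nonneg
      intro v hv
      apply mul_nonneg _ (hnn v)
      have := hg.bound hV hv0 v ((hV.fin.mem_toFinset.1 hv).1)
      have := this.trans (le_abs_self _)
      rw [abs_le] at this
      linarith [this.1]
    have hε0 : 0 < ε := hpos
    have h3 : 0 < ε ^ 2 * ∑ v ∈ S, D v ^ 2 := by positivity
    have h4 : 0 ≤ 2 * ε * ∑ v ∈ S, (g v + |Kb v0 M0 v|) * D v := by positivity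
    linarith
  · have e1 := eps_step hV hg hD hoff hz
    have e2 := eps_step hV hg hneg (fun v hv => by simp [hoff v hv]) (by simp [hz])
    obtain ⟨ε, ⟨hε, hε'⟩, hpos⟩ := ((e1.and e2).and self_mem_nhdsWithin).exists
    have h1 : Φ (fun v => g v + ε * D v) ≤ Φ g := hmax hε
    have h2 : Φ (fun v => g v + ε * (- D v)) ≤ Φ g := hmax hε'
    have h2' : (fun v => g v + ε * (- D v)) = (fun v => g v + (-ε) * D v) := by
      funext v; ring
    rw [h2', hexp] at h2
    rw [hexp] at h1
    have hε0 : 0 < ε := hpos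
    have h3 : 0 < ε ^ 2 * ∑ v ∈ S, D v ^ 2 := by positivity
    nlinarith
end Part6

section Part7
variable {V Q : Set Z3} {g : Z3 → ℝ}

def OO (V : Set Z3) (g : Z3 → ℝ) (v : Z3) : ℝ :=
  if h : ∃ P, Gr V g P ∧ v ∈ QQ V g P then (FF (QQ V g h.choose) (nu h.choose) v : ℝ) else 0

lemma OO_eq (hV : Dom V) (hg : Rh V g) (hinv : DInv g) {P : Fin 3 → ℝ} (hP : Gr V g P) {v : Z3}
    (hv : v ∈ QQ V g P) : OO V g v = FF (QQ V g P) (nu P) v := by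
  have h : ∃ P, Gr V g P ∧ v ∈ QQ V g P := ⟨P, hP, hv⟩
  rw [OO, dif_pos h]
  have hs := h.choose_spec
  rw [FF_indep (hs.1.dom hV hg hinv) (hP.dom hV hg hinv) hs.1.1 hP.1 hs.2 hv]

lemma FF_sh (Q : Set Z3) (ν : Fin 3 → ℤ) (v : Z3) (n : ℤ) : FF Q ν (v + sh n) = FF Q ν v := by
  have h : ∀ a x y : ℤ, a - (x + n) + (y + n) = a - x + y := fun a x y => by ring
  simp only [FF, Pi.add_apply, sh_apply, h]

lemma exists_gr (hV : Dom V) (hg : Rh V g) (hinv : DInv g) {v : Z3} (hv : v ∈ V) :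
    ∃ P, Gr V g P ∧ v ∈ QQ V g P := by
  obtain ⟨i, j, hij, h1, h2⟩ := hV.tri_at hv
  exact ⟨_, grad_gr hV hg hinv hij hv h1 h2, (grad_mem hV hg hinv hij hv h1 h2).1⟩

lemma grad_j' (f : Z3 → ℝ) (u : Z3) {i j : Fin 3} (hij : i ≠ j) :
    grad f u i j j = f (u + ee i + ee j) - f (u + ee i) := by
  simp [grad, hij.symm]

/-- a tight edge from membership in one linearity domain -/
lemma tt_of_mem {P : Fin 3 → ℝ} (hP : ∑ l, P l = 0) {u : Z3} {i j k : Fin 3}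
    (hij : i ≠ j) (hik : i ≠ k) (hjk : j ≠ k) (h0 : u ∈ QQ V g P) (h1 : u + ee k ∈ QQ V g P)
    (h2 : u + ee k + ee i ∈ QQ V g P) (h3 : u + ee k + ee j ∈ QQ V g P) : Tt V g u k := by
  have e1 := QQ_diff h0 h1
  have e2 := QQ_diff h1 h2
  have e3 := QQ_diff h1 h3
  rw [sum3 hij hik hjk] at hP
  intro a b hab hak hbk
  rcases fin3_cases hij hik hjk a with rfl | rfl | rfl
  · rcases fin3_cases hij hik hjk b with rfl | rfl | rfl
    · exact absurd rfl hab
    · exact ⟨h2.1, h3.1, by linarith⟩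
    · exact absurd rfl hbk
  · rcases fin3_cases hij hik hjk b with rfl | rfl | rfl
    · exact ⟨h3.1, h2.1, by linarith⟩
    · exact absurd rfl hab
    · exact absurd rfl hbk
  · exact absurd rfl hak

lemma on_side (hQ : Dom Q) {u : Z3} {i j k : Fin 3}
    (hij : i ≠ j) (hik : i ≠ k) (hjk : j ≠ k) (h0 : u ∈ Q) (h1 : u + ee k ∈ Q)
    (h2 : u + ee k + ee i ∉ Q) : u i - u j = gam Q i j := by
  rw [hQ.mem_iff3 hij hik hjk] at h0 h1 h2
  simp only [Pi.add_apply, ee_self, ee_ne hij, ee_ne hij.symm, ee_ne hik, ee_ne hik.symm, ee_ne hjk,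
    ee_ne hjk.symm] at h0 h1 h2
  omega

lemma OO_good (hV : Dom V) (hg : Rh V g) (hinv : DInv g) : Good V g (OO V g) := by
  refine ⟨?_, ?_, ?_, ?_⟩
  · intro p n
    by_cases hp : p ∈ V
    · obtain ⟨P, hP, hpP⟩ := exists_gr hV hg hinv hp
      rw [OO_eq hV hg hinv hP hpP, OO_eq hV hg hinv hP ((hP.dom hV hg hinv).diag _ n hpP), FF_sh]
    · rw [OO, dif_neg, OO, dif_neg]
      · rintro ⟨P, _, h⟩; exact hp h.1
      · rintro ⟨P, _, h⟩; exact hp (hV.mem_sh.1 h.1)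
  · intro p i j hij h0 h1 h2 h3 ht
    have hP := grad_gr hV hg hinv hij h0 h1 h3
    obtain ⟨m0, m1, m3⟩ := grad_mem hV hg hinv hij h0 h1 h3
    have m2 : p + ee j ∈ QQ V g (grad g p i j) := by
      apply QQ_of_eq m0 h2
      rw [dot_add, dot_ee, grad_j' _ _ hij]; linarith
    rw [OO_eq hV hg hinv hP m0, OO_eq hV hg hinv hP m1, OO_eq hV hg hinv hP m2,
      OO_eq hV hg hinv hP m3]
    exact_mod_cast FF_super (hP.dom hV hg hinv) (nu01 _) (nu_sum hP.1) hij m0 m1 m2 m3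
  · intro u k h0 h1 hz ht
    obtain ⟨j, hkj, h2⟩ := hV.tri_edge h0 h1
    obtain ⟨i, hki, hji⟩ := exists_third hkj
    have hP := grad_gr hV hg hinv hkj h0 h1 h2
    obtain ⟨m0, m1, m2⟩ := grad_mem hV hg hinv hkj h0 h1 h2
    have hQ := hP.dom hV hg hinv
    have hnot : u + ee k + ee i ∉ QQ V g (grad g u k j) := fun m3 =>
      ht (tt_of_mem hP.1 hji.symm hki.symm hkj.symm m0 m1 m3 m2)
    have hs := on_side hQ hji.symm hki.symm hkj.symm m0 m1 hnot
    have hn : nu (grad g u k j) k = 0 := by rw [nu_zero, grad_i]; exact hz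
    rw [OO_eq hV hg hinv hP m0, OO_eq hV hg hinv hP m1,
      FF_side hQ m0 hji.symm hki.symm hkj.symm hs hn, FF_side hQ m1 hji.symm hki.symm hkj.symm _ hn]
    simp [ee_ne hki.symm, ee_ne hkj.symm, hs]
  · intro u i j hij h0 h1 h2 hz hz'
    obtain ⟨k, hik, hjk⟩ := exists_third hij
    have hP := grad_gr hV hg hinv hij h0 h1 h2
    obtain ⟨m0, m1, m2⟩ := grad_mem hV hg hinv hij h0 h1 h2
    have hQ := hP.dom hV hg hinv
    have hi : nu (grad g u i j) i = 0 := by rw [nu_zero, grad_i]; exact hz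
    have hj : nu (grad g u i j) j = 0 := by rw [nu_zero, grad_j' _ _ hij]; exact hz'
    have hn : ∀ l, nu (grad g u i j) l = 0 := by
      intro l
      rcases fin3_cases hij hik hjk l with rfl | rfl | rfl
      · exact hi
      · exact hj
      · exact nu_two hP.1 hij hik hjk hi hj
    rw [OO_eq hV hg hinv hP m0, OO_eq hV hg hinv hP m1, OO_eq hV hg hinv hP m2,
      FF_zero_of hQ hn m0, FF_zero_of hQ hn m1, FF_zero_of hQ hn m2]
    simp

lemma step1 (hV : Dom V) (hg : Rh V g) (hinv : DInv g) {v0 : Z3} (hv0 : v0 ∈ V)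
    (hc : ∀ k, ¬ (v0 + ee k ∈ V ∧ v0 - ee k ∈ V))
    (hmax : ∀ D, Good V g D → (∀ v, v ∉ V → D v = 0) → D v0 = 0 →
      ((∀ v, 0 ≤ D v) ∨ Good V g (fun v => - D v)) → ∀ v, D v = 0)
    {P : Fin 3 → ℝ} (hP : Gr V g P) {v : Z3} (hv : v ∈ QQ V g P) :
    FF (QQ V g P) (nu P) v = 0 := by
  have := hmax (OO V g) (OO_good hV hg hinv) ?_ ?_ (Or.inl ?_) v
  · rw [OO_eq hV hg hinv hP hv] at this
    exact_mod_cast this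
  · intro v hv
    rw [OO, dif_neg]
    rintro ⟨P, _, h⟩; exact hv h.1
  · obtain ⟨P, hP, hm⟩ := exists_gr hV hg hinv hv0
    have hQ := hP.dom hV hg hinv
    rw [OO_eq hV hg hinv hP hm]
    rcases FF_cases hQ hm with h | ⟨i, j, k, h⟩ | h
    · exact absurd ⟨(h.add_mem hQ 0).1.1, (h.add_mem hQ 0).2.1⟩ (hc 0)
    · exact absurd ⟨(h.moves hQ).1.1, (h.moves hQ).2.1.1⟩ (hc k)
    · rw [h]; simp
  · intro v
    by_cases hv : v ∈ V
    · obtain ⟨P, hP, hm⟩ := exists_gr hV hg hinv hv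
      rw [OO_eq hV hg hinv hP hm]
      exact_mod_cast FF_nn (hP.dom hV hg hinv) (nu01 _) hm
    · rw [OO, dif_neg]
      rintro ⟨P, _, h⟩; exact hv h.1
end Part7

section Part8
variable {V Q : Set Z3} {g : Z3 → ℝ}

def si (k : Fin 3) (b : Bool) : Fin 3 := if b = true then k + 2 else k + 1
def sj (k : Fin 3) (b : Bool) : Fin 3 := if b = true then k + 1 else k + 2

lemma sij (k : Fin 3) (b : Bool) : si k b ≠ sj k b ∧ si k b ≠ k ∧ sj k b ≠ k := by
  cases b <;> fin_cases k <;> simp [si, sj]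

lemma sij_ex {i j k : Fin 3} (hij : i ≠ j) (hik : i ≠ k) (hjk : j ≠ k) :
    ∃ b, i = si k b ∧ j = sj k b ∧ j = si k (!b) ∧ i = sj k (!b) := by
  fin_cases i <;> fin_cases j <;> fin_cases k <;> simp [si, sj] at hij hik hjk ⊢

def wP (Q : Set Z3) (k : Fin 3) (b : Bool) : ℤ := ww Q (si k b) (sj k b) k

def EE (Q : Set Z3) : ℤ := gam Q 0 1 + gam Q 1 2 + gam Q 2 0 - (gam Q 1 0 + gam Q 0 2 + gam Q 2 1)

lemma w_diff (Q : Set Z3) (k : Fin 3) : wP Q k true - wP Q k false = EE Q := by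
  fin_cases k <;> simp [wP, ww, si, sj, EE] <;> ring

lemma w_pair (hQ : Dom Q) {k k' : Fin 3} (hk : k ≠ k') (b : Bool) :
    1 ≤ wP Q k b + wP Q k' (!b) := by
  have h01 := hQ.gam_width (show (0 : Fin 3) ≠ 1 by simp)
  have h02 := hQ.gam_width (show (0 : Fin 3) ≠ 2 by simp)
  have h12 := hQ.gam_width (show (1 : Fin 3) ≠ 2 by simp)
  cases b <;> fin_cases k <;> fin_cases k' <;> simp [wP, ww, si, sj] at hk ⊢ <;> omega

lemma w_nn (hQ : Dom Q) (k : Fin 3) (b : Bool) : 0 ≤ wP Q k b := hQ.ww_nn _ _ _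

lemma intr_of (hQ : Dom Q) (h : ∀ i j k, i ≠ j → i ≠ k → j ≠ k → 1 ≤ ww Q i j k) :
    Intr Q (side Q 0 1 2 - ee 0) ∧ side Q 0 1 2 - ee 0 ∈ Q := by
  have n01 : (0 : Fin 3) ≠ 1 := by simp
  have n02 : (0 : Fin 3) ≠ 2 := by simp
  have n12 : (1 : Fin 3) ≠ 2 := by simp
  have s0 : (side Q 0 1 2 - ee 0) 0 = gam Q 0 1 - 1 := by simp [side, ee]
  have s1 : (side Q 0 1 2 - ee 0) 1 = 0 := by simp [side, ee]
  have s2 : (side Q 0 1 2 - ee 0) 2 = gam Q 0 1 - gam Q 0 2 := by simp [side, ee]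
  have a1 := h 0 1 2 n01 n02 n12
  have a2 := h 0 2 1 n02 n01 n12.symm
  have a3 := h 1 2 0 n12 n01.symm n02.symm
  have a4 := h 1 0 2 n01.symm n12 n02
  have a5 := h 2 0 1 n02.symm n12.symm n01
  have a6 := h 2 1 0 n12.symm n02.symm n01.symm
  unfold ww at a1 a2 a3 a4 a5 a6
  have key : Intr Q (side Q 0 1 2 - ee 0) := by
    intro i j hij
    fin_cases i <;> fin_cases j <;>
      simp only [Fin.zero_eta, Fin.mk_one, Fin.reduceFinMk, s0, s1, s2] <;>
      first | exact absurd rfl hij | omega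
  refine ⟨key, ?_⟩
  rw [hQ.mem_iff]
  intro i j
  by_cases hij : i = j
  · subst hij
    obtain ⟨v, hv, e⟩ := hQ.gam_att i i
    omega
  · exact (key i j hij).le

/-- the packaged facts about a non-integer gradient after step 1 -/
lemma absent {P : Fin 3 → ℝ} (hP : ∑ l, P l = 0)
    (hF : ∀ v ∈ QQ V g P, FF (QQ V g P) (nu P) v = 0) (hQ : Dom (QQ V g P))
    {l : Fin 3} (hl : nu P l ≠ 0) : ∃ k b, wP (QQ V g P) k b = 0 := by
  by_contra hcon
  push Not at hcon
  obtain ⟨h1, h2⟩ := intr_of hQ (by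
    intro i j k hij hik hjk
    obtain ⟨b, rfl, rfl, _⟩ := sij_ex hij hik hjk
    have h3 := hcon k b
    have h4 := w_nn hQ k b
    unfold wP at h3 h4
    omega)
  exact FF_no_intr hQ hP hF hl h2 h1

def nz (u : Z3) : Z3 := u + sh (- u 2)

lemma nz_sh (u : Z3) (n : ℤ) : nz (u + sh n) = nz u := by
  funext l; simp [nz, sh_apply]

def edg (V : Set Z3) (g : Z3 → ℝ) (y : (Fin 3 → ℝ) × Fin 3 × Bool) : Z3 × Fin 3 :=
  (nz (side (QQ V g y.1) (si y.2.1 y.2.2) (sj y.2.1 y.2.2) y.2.1), y.2.1)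

lemma side_tri (hQ : Dom Q) {i j k : Fin 3} (hij : i ≠ j) (hik : i ≠ k) (hjk : j ≠ k) :
    side Q i j k + ee k + ee j ∈ Q := by
  rw [hQ.mem_iff3 hij hik hjk]
  have h1 := hQ.gam_width hij
  have h2 := hQ.gam_width hik
  have h3 := hQ.gam_tri i j k
  have h4 := hQ.gam_tri i k j
  simp only [Pi.add_apply, ee_self, ee_ne hij, ee_ne hik, ee_ne hjk,
    ee_ne hjk.symm, side_i, side_j Q hij, side_k Q hik hjk]
  omega

lemma side_edge (hQ : Dom Q) {i j k : Fin 3} (hij : i ≠ j) (hik : i ≠ k) (hjk : j ≠ k)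
    (hw : 0 < ww Q i j k) : side Q i j k + ee k ∈ Q :=
  hQ.side_mem_top hij hik hjk (t := 1) (by omega) (by omega)

lemma side_pos (hQ : Dom Q) {u : Z3} {i j k : Fin 3} (hjk : j ≠ k)
    (h0 : u ∈ Q) (h1 : u + ee k ∈ Q) (hs : u i - u j = gam Q i j) : 0 < ww Q i j k := by
  have a := hQ.gam_ge h0 i k
  have b := hQ.gam_ge h1 k j
  simp only [Pi.add_apply, ee_self, ee_ne hjk] at b
  unfold ww; omega

lemma side_eq (hQ : Dom Q) {u : Z3} {i j k : Fin 3} (hij : i ≠ j) (hik : i ≠ k) (hjk : j ≠ k)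
    (h0 : u ∈ Q) (h1 : u + ee k ∈ Q) (hs : u i - u j = gam Q i j) (hw : ww Q i j k ≤ 1) :
    nz (side Q i j k) = nz u := by
  have a := hQ.gam_ge h0 i k
  have b := hQ.gam_ge h1 k j
  simp only [Pi.add_apply, ee_self, ee_ne hjk] at b
  unfold ww at hw
  have : u = side Q i j k + sh (u j) := by
    apply ext3 hij hik hjk <;>
      simp only [Pi.add_apply, sh_apply, side_i, side_j Q hij, side_k Q hik hjk] <;> omega
  conv_rhs => rw [this]
  rw [nz_sh]
end Part8

section Part9
variable {V Q : Set Z3} {g : Z3 → ℝ}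

lemma w_short {P : Fin 3 → ℝ} (hQ : Dom (QQ V g P))
    (hF : ∀ v ∈ QQ V g P, FF (QQ V g P) (nu P) v = 0) {k : Fin 3} (hl : nu P k ≠ 0) (b : Bool) :
    wP (QQ V g P) k b ≤ 1 :=
  FF_short hQ hF (sij k b).1 (sij k b).2.1 (sij k b).2.2 hl

lemma theta {P : Fin 3 → ℝ} (hQ : Dom (QQ V g P)) (hP : ∑ l, P l = 0)
    (hF : ∀ v ∈ QQ V g P, FF (QQ V g P) (nu P) v = 0) (T : Z3 × Fin 3 → ℝ)
    (hn1 : EE (QQ V g P) ≠ 0 → (∃ l, nu P l ≠ 0) → ∀ b, (∀ k, nu P k ≠ 0 → 0 < wP (QQ V g P) k b) →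
      ∑ k, (if nu P k ≠ 0 then T (edg V g (P, k, b)) else 0) = 0)
    (hn2 : EE (QQ V g P) = 0 → ∀ k, nu P k ≠ 0 → 0 < wP (QQ V g P) k true →
      T (edg V g (P, k, true)) = T (edg V g (P, k, false))) :
    ∃ θ : Fin 3 → ℝ, ∑ k, θ k = 0 ∧ (∀ k b, 0 < wP (QQ V g P) k b →
      θ k = if nu P k ≠ 0 then T (edg V g (P, k, b)) else 0) ∧
      ((∀ k, nu P k = 0) → ∀ k, θ k = 0) := by
  by_cases hall : ∀ k, nu P k = 0
  · refine ⟨fun _ => 0, by simp, ?_, fun _ _ => rfl⟩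
    intro k b _
    simp [hall k]
  push Not at hall
  obtain ⟨l, hl⟩ := hall
  have hw1 : ∀ k, nu P k ≠ 0 → ∀ b, wP (QQ V g P) k b ≤ 1 := fun k hk b => w_short hQ hF hk b
  rcases lt_trichotomy (EE (QQ V g P)) 0 with hE | hE | hE
  · refine ⟨fun k => if nu P k ≠ 0 then T (edg V g (P, k, false)) else 0,
      hn1 hE.ne ⟨l, hl⟩ false ?_, ?_, fun h => absurd (h l) hl⟩
    · intro k hk
      have := w_diff (QQ V g P) k
      have := w_nn hQ k true
      omega
    · intro k b hb
      by_cases hk : nu P k = 0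
      · simp [hk]
      · cases b with
        | false => rfl
        | true =>
          have := w_diff (QQ V g P) k
          have := hw1 k hk false
          omega
  · obtain ⟨k0, b0, h0⟩ := absent hP hF hQ hl
    have h0' : ∀ b, wP (QQ V g P) k0 b = 0 := by
      have := w_diff (QQ V g P) k0
      intro b
      cases b <;> cases b0 <;> omega
    obtain ⟨k1, h01⟩ : ∃ k1, k0 ≠ k1 := exists_ne k0 |>.imp fun _ h => h.symm
    obtain ⟨k2, h02, h12⟩ := exists_third h01
    set base : Fin 3 → ℝ := fun k => if nu P k ≠ 0 then T (edg V g (P, k, true)) else 0 with hbase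
    refine ⟨fun k => if k = k0 then -(base k1 + base k2) else base k, ?_, ?_,
      fun h => absurd (h l) hl⟩
    · rw [sum3 h01 h02 h12]
      simp [h01.symm, h02.symm]
    · intro k b hb
      have hk0 : k ≠ k0 := by
        rintro rfl
        have := h0' b
        omega
      simp only [hk0, if_false, hbase]
      by_cases hk : nu P k = 0
      · simp [hk]
      · cases b with
        | true => rfl
        | false =>
          have := w_diff (QQ V g P) k
          rw [hn2 hE k hk (by omega)]
  · refine ⟨fun k => if nu P k ≠ 0 then T (edg V g (P, k, true)) else 0,
      hn1 hE.ne' ⟨l, hl⟩ true ?_, ?_, fun h => absurd (h l) hl⟩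
    · intro k hk
      have := w_diff (QQ V g P) k
      have := w_nn hQ k false
      omega
    · intro k b hb
      by_cases hk : nu P k = 0
      · simp [hk]
      · cases b with
        | true => rfl
        | false =>
          have := w_diff (QQ V g P) k
          have := hw1 k hk true
          omega

lemma gr_finite (hV : Dom V) (hg : Rh V g) (hinv : DInv g) : {P | Gr V g P}.Finite := by
  apply ((hV.fin.prod (Set.finite_univ (α := Fin 3 × Fin 3))).image
    (fun x : Z3 × Fin 3 × Fin 3 => grad g x.1 x.2.1 x.2.2)).subset
  rintro P hP
  obtain ⟨u, i, j, hij, h0, h1, h2⟩ := hP.2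
  have hQ := hP.dom hV hg hinv
  refine ⟨(u + sh (- u 2), i, j), ⟨hV.norm_rep h0.1, trivial⟩, ?_⟩
  have e1 := hQ.diag _ (- u 2) h0
  have e2 := hQ.diag _ (- u 2) h1
  have e3 := hQ.diag _ (- u 2) h2
  rw [← sh_c1] at e2
  rw [← sh_c1, ← sh_c1] at e3
  exact (QQ_tri hij hP.1 e1 e2 e3).symm

lemma edg_inj (hV : Dom V) (hg : Rh V g) (hinv : DInv g) {P P' : Fin 3 → ℝ} (hP : Gr V g P)
    (hP' : Gr V g P') {k k' : Fin 3} {b : Bool} (hw : 0 < wP (QQ V g P) k b)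
    (hw' : 0 < wP (QQ V g P') k' b) (he : edg V g (P, k, b) = edg V g (P', k', b)) :
    P = P' ∧ k = k' := by
  simp only [edg, Prod.mk.injEq] at he
  obtain ⟨he, rfl⟩ := he
  refine ⟨?_, rfl⟩
  obtain ⟨hij, hik, hjk⟩ := sij k b
  have key : ∀ {P : Fin 3 → ℝ}, Gr V g P → 0 < wP (QQ V g P) k b →
      P = grad g (nz (side (QQ V g P) (si k b) (sj k b) k)) k (sj k b) := by
    intro P hP hw
    have hQ := hP.dom hV hg hinv
    have h0 := hQ.side_mem hij hik hjk
    have h1 := side_edge hQ hij hik hjk hw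
    have h2 := side_tri hQ hij hik hjk
    set u := side (QQ V g P) (si k b) (sj k b) k
    have e1 := hQ.diag _ (- u 2) h0
    have e2 := hQ.diag _ (- u 2) h1
    have e3 := hQ.diag _ (- u 2) h2
    rw [← sh_c1] at e2
    rw [← sh_c1, ← sh_c1] at e3
    exact QQ_tri hjk.symm hP.1 e1 e2 e3
  rw [key hP hw, key hP' hw', he]

/-- the set of non-integer maximal sides -/
lemma exists_T (hV : Dom V) (hg : Rh V g) (hinv : DInv g)
    (hF : ∀ P, Gr V g P → ∀ v ∈ QQ V g P, FF (QQ V g P) (nu P) v = 0)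
    (hY : ∃ P k b, Gr V g P ∧ nu P k ≠ 0 ∧ 0 < wP (QQ V g P) k b) :
    ∃ T : Z3 × Fin 3 → ℝ, (∃ P k b, Gr V g P ∧ nu P k ≠ 0 ∧ 0 < wP (QQ V g P) k b ∧
      T (edg V g (P, k, b)) ≠ 0) ∧ ∀ P, Gr V g P → 
    (EE (QQ V g P) ≠ 0 → (∃ l, nu P l ≠ 0) → ∀ b, (∀ k, nu P k ≠ 0 → 0 < wP (QQ V g P) k b) →
      ∑ k, (if nu P k ≠ 0 then T (edg V g (P, k, b)) else 0) = 0) ∧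
    (EE (QQ V g P) = 0 → ∀ k, nu P k ≠ 0 → 0 < wP (QQ V g P) k true →
      T (edg V g (P, k, true)) = T (edg V g (P, k, false))) := by
  set Y : Finset ((Fin 3 → ℝ) × Fin 3 × Bool) :=
    ((gr_finite hV hg hinv).toFinset ×ˢ (Finset.univ ×ˢ Finset.univ)).filter
      (fun y => nu y.1 y.2.1 ≠ 0 ∧ 0 < wP (QQ V g y.1) y.2.1 y.2.2) with hYdef
  have memY : ∀ P k b, (P, k, b) ∈ Y ↔ Gr V g P ∧ nu P k ≠ 0 ∧ 0 < wP (QQ V g P) k b := by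
    intro P k b
    simp [hYdef]
  set nd : (Fin 3 → ℝ) × Fin 3 × Bool → (Fin 3 → ℝ) × Option (Fin 3) := fun y =>
    (y.1, if EE (QQ V g y.1) = 0 then some y.2.1 else none) with hnd
  have hYne : Y.Nonempty := by
    obtain ⟨P, k, b, h⟩ := hY
    exact ⟨(P, k, b), (memY P k b).2 h⟩
  have uniq : ∀ P k b k' b', EE (QQ V g P) ≠ 0 → (P, k, b) ∈ Y → (P, k', b') ∈ Y → b = b' := by
    intro P k b k' b' hE h h'
    rw [memY] at h h'
    have hQ := h.1.dom hV hg hinv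
    have a1 := w_diff (QQ V g P) k
    have a2 := w_diff (QQ V g P) k'
    have a3 := fun b => w_short hQ (hF P h.1) h.2.1 b
    have a4 := fun b => w_short hQ (hF P h.1) h'.2.1 b
    have a3t := a3 true; have a3f := a3 false; have a4t := a4 true; have a4f := a4 false
    cases b <;> cases b' <;> first | rfl | omega
  have H1 : ∀ y ∈ Y, ∀ y' ∈ Y, edg V g y = edg V g y' → y.2.2 = y'.2.2 → y = y' := by
    rintro ⟨P, k, b⟩ hy ⟨P', k', b'⟩ hy' he hb
    simp only at hb
    subst hb
    rw [memY] at hy hy'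
    obtain ⟨rfl, rfl⟩ := edg_inj hV hg hinv hy.1 hy'.1 hy.2.2 hy'.2.2 he
    rfl
  have H2 : ∀ y ∈ Y, ∃ y' ∈ Y, y' ≠ y ∧ nd y' = nd y := by
    rintro ⟨P, k, b⟩ hy
    have hy0 := hy
    rw [memY] at hy
    obtain ⟨hP, hk, hw⟩ := hy
    have hQ := hP.dom hV hg hinv
    have a1 := w_diff (QQ V g P) k
    by_cases hE : EE (QQ V g P) = 0
    · refine ⟨(P, k, !b), (memY _ _ _).2 ⟨hP, hk, ?_⟩, by simp, by simp [hnd]⟩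
      cases b <;> simp <;> omega
    · obtain ⟨k', hkk', hk'⟩ : ∃ k', k' ≠ k ∧ nu P k' ≠ 0 := by
        by_contra hcon
        push Not at hcon
        obtain ⟨k1, h01⟩ : ∃ k1, k ≠ k1 := exists_ne k |>.imp fun _ h => h.symm
        obtain ⟨k2, h02, h12⟩ := exists_third h01
        exact hk (nu_two hP.1 h12 h01.symm h02.symm (hcon k1 h01.symm) (hcon k2 h02.symm))
      refine ⟨(P, k', b), (memY _ _ _).2 ⟨hP, hk', ?_⟩, by simp [hkk'], by simp [hnd, hE]⟩
      have a2 := w_diff (QQ V g P) k'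
      have a3 := w_short hQ (hF P hP) hk true
      have a4 := w_short hQ (hF P hP) hk false
      have a5 := w_nn hQ k' true
      have a6 := w_nn hQ k' false
      cases b <;> omega
  obtain ⟨T, ⟨y, hy, hTy⟩, hT⟩ := circulation Y hYne (edg V g) (fun y => y.2.2) nd H1 H2
  refine ⟨T, ?_, ?_⟩
  · obtain ⟨P, k, b⟩ := y
    rw [memY] at hy
    exact ⟨P, k, b, hy.1, hy.2.1, hy.2.2, hTy⟩
  · intro P hP
    have hQ := hP.dom hV hg hinv
    constructor
    · rintro hE ⟨l, hl⟩ b hb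
      have h0 : (P, l, b) ∈ Y := (memY _ _ _).2 ⟨hP, hl, hb l hl⟩
      have h : ∑ y ∈ Y.filter (fun y => nd y = nd (P, l, b)),
          (if y.2.2 = true then (1:ℝ) else -1) * T (edg V g y) = 0 := by
        convert hT _ h0
      have hset : Y.filter (fun y => nd y = nd (P, l, b)) =
          (Finset.univ.filter (fun k => nu P k ≠ 0)).image (fun k => (P, k, b)) := by
        ext ⟨P', k', b'⟩
        simp only [Finset.mem_filter, Finset.mem_image, Finset.mem_univ, true_and]
        constructor
        · rintro ⟨hy, hn⟩
          simp only [hnd, Prod.mk.injEq] at hn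
          obtain ⟨rfl, _⟩ := hn
          exact ⟨k', ((memY _ _ _).1 hy).2.1, by rw [uniq _ _ _ _ _ hE h0 hy]⟩
        · rintro ⟨k, hk, he⟩
          simp only [Prod.mk.injEq] at he
          obtain ⟨rfl, rfl, rfl⟩ := he
          exact ⟨(memY _ _ _).2 ⟨hP, hk, hb k hk⟩, by simp [hnd, hE]⟩
      rw [hset, Finset.sum_image (by
        intro a _ b _ hab
        simpa using hab)] at h
      have h : ∑ x with nu P x ≠ 0, (if b = true then (1:ℝ) else -1) * T (edg V g (P, x, b)) = 0 := h
      rw [← Finset.mul_sum] at h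
      rw [Finset.sum_filter] at h
      rcases mul_eq_zero.1 h with h | h
      · split_ifs at h <;> norm_num at h
      · exact h
    · intro hE k hk hw
      have a1 := w_diff (QQ V g P) k
      have h0 : (P, k, true) ∈ Y := (memY _ _ _).2 ⟨hP, hk, hw⟩
      have h1 : (P, k, false) ∈ Y := (memY _ _ _).2 ⟨hP, hk, by omega⟩
      have h : ∑ y ∈ Y.filter (fun y => nd y = nd (P, k, true)),
          (if y.2.2 = true then (1:ℝ) else -1) * T (edg V g y) = 0 := by
        convert hT _ h0
      have hset : Y.filter (fun y => nd y = nd (P, k, true)) = {(P, k, true), (P, k, false)} := by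
        ext ⟨P', k', b'⟩
        simp only [Finset.mem_filter, Finset.mem_insert, Finset.mem_singleton]
        constructor
        · rintro ⟨hy, hn⟩
          simp only [hnd, Prod.mk.injEq] at hn
          obtain ⟨rfl, hn⟩ := hn
          simp only [hE, if_true, Option.some.injEq] at hn
          subst hn
          cases b' <;> simp
        · rintro (he | he)
          · rw [he]; exact ⟨h0, rfl⟩
          · rw [he]; exact ⟨h1, by simp [hnd]⟩
      rw [hset, Finset.sum_pair (by simp)] at h
      simp at h
      linarith
end Part9

section Part10
variable {V Q : Set Z3} {g : Z3 → ℝ}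

lemma rhomb_mem (hV : Dom V) (hg : Rh V g) (hinv : DInv g) {p : Z3} {i j : Fin 3} (hij : i ≠ j)
    (h0 : p ∈ V) (h1 : p + ee i ∈ V) (h2 : p + ee j ∈ V) (h3 : p + ee i + ee j ∈ V)
    (ht : g (p + ee i) + g (p + ee j) = g p + g (p + ee i + ee j)) :
    p + ee j ∈ QQ V g (grad g p i j) := by
  apply QQ_of_eq (grad_mem hV hg hinv hij h0 h1 h3).1 h2
  rw [dot_add, dot_ee, grad_j' _ _ hij]; linarith

lemma step2 (hV : Dom V) (hg : Rh V g) (hinv : DInv g) {v0 : Z3} (hv0 : v0 ∈ V)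
    (hmax : ∀ D, Good V g D → (∀ v, v ∉ V → D v = 0) → D v0 = 0 →
      ((∀ v, 0 ≤ D v) ∨ Good V g (fun v => - D v)) → ∀ v, D v = 0)
    (hF : ∀ P, Gr V g P → ∀ v ∈ QQ V g P, FF (QQ V g P) (nu P) v = 0) :
    ¬ ∃ P k b, Gr V g P ∧ nu P k ≠ 0 ∧ 0 < wP (QQ V g P) k b := by
  intro hY
  obtain ⟨T, ⟨P0, k0, b0, hP0, hk0, hw0, hT0⟩, hT⟩ := exists_T hV hg hinv hF hY
  have hth : ∀ P, ∃ θ : Fin 3 → ℝ, Gr V g P → ∑ k, θ k = 0 ∧ (∀ k b, 0 < wP (QQ V g P) k b →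
      θ k = if nu P k ≠ 0 then T (edg V g (P, k, b)) else 0) ∧
      ((∀ k, nu P k = 0) → ∀ k, θ k = 0) := by
    intro P
    by_cases hP : Gr V g P
    · obtain ⟨θ, h⟩ := theta (hP.dom hV hg hinv) hP.1 (hF P hP) T (hT P hP).1 (hT P hP).2
      exact ⟨θ, fun _ => h⟩
    · exact ⟨0, fun h => absurd h hP⟩
  choose θ hθ using hth
  -- value on an edge lying on a side
  have hval : ∀ P, Gr V g P → ∀ u i j k, i ≠ j → i ≠ k → j ≠ k → u ∈ QQ V g P →
      u + ee k ∈ QQ V g P → u + ee k + ee i ∉ QQ V g P →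
      θ P k = if nu P k ≠ 0 then T (nz u, k) else 0 := by
    intro P hP u i j k hij hik hjk h0 h1 h2
    have hQ := hP.dom hV hg hinv
    have hs := on_side hQ hij hik hjk h0 h1 h2
    have hw := side_pos hQ hjk h0 h1 hs
    obtain ⟨b, hi, hj, _⟩ := sij_ex hij hik hjk
    have hw' : 0 < wP (QQ V g P) k b := by unfold wP; rw [← hi, ← hj]; exact hw
    rw [(hθ P hP).2.1 k b hw']
    by_cases hk : nu P k = 0
    · simp [hk]
    · simp only [hk, ne_eq, not_false_eq_true, if_true]
      have hsh := FF_short hQ (hF P hP) hij hik hjk hk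
      have := side_eq hQ hij hik hjk h0 h1 hs hsh
      unfold edg
      simp only [← hi, ← hj]
      rw [this]
  have hwd : ∀ P P', Gr V g P → Gr V g P' → ∀ u k, u ∈ QQ V g P → u + ee k ∈ QQ V g P →
      u ∈ QQ V g P' → u + ee k ∈ QQ V g P' → θ P k = θ P' k := by
    intro P P' hP hP' u k h0 h1 h0' h1'
    have hQ := hP.dom hV hg hinv
    have hQ' := hP'.dom hV hg hinv
    by_cases hne : P = P'
    · rw [hne]
    have hk : P k = P' k := by rw [← QQ_diff h0 h1, ← QQ_diff h0' h1']
    have hnu : nu P k = nu P' k := by unfold nu; rw [hk]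
    obtain ⟨j, hkj, hj⟩ := hQ.tri_edge h0 h1
    obtain ⟨i, hki, hji⟩ := exists_third hkj
    have n1 : u + ee k + ee j ∉ QQ V g P' := fun h =>
      hne ((QQ_tri hkj hP.1 h0 h1 hj).trans (QQ_tri hkj hP'.1 h0' h1' h).symm)
    have hi : u + ee k + ee i ∈ QQ V g P' := by
      obtain ⟨m, hkm, hm⟩ := hQ'.tri_edge h0' h1'
      rcases fin3_cases hkj hki hji m with rfl | rfl | rfl
      · exact absurd rfl hkm
      · exact absurd hm n1
      · exact hm
    have n2 : u + ee k + ee i ∉ QQ V g P := fun h =>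
      hne ((QQ_tri hki hP.1 h0 h1 h).trans (QQ_tri hki hP'.1 h0' h1' hi).symm)
    rw [hval P hP u i j k hji.symm hki.symm hkj.symm h0 h1 n2,
      hval P' hP' u j i k hji hkj.symm hki.symm h0' h1' n1, hnu]
  let Ex : Z3 → Fin 3 → Prop := fun u k => ∃ P, Gr V g P ∧ u ∈ QQ V g P ∧ u + ee k ∈ QQ V g P
  let c : Z3 → Fin 3 → ℝ := fun u k => if h : Ex u k then θ h.choose k else 0
  have hcv : ∀ P, Gr V g P → ∀ u k, u ∈ QQ V g P → u + ee k ∈ QQ V g P → c u k = θ P k := by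
    intro P hP u k h0 h1
    have h : Ex u k := ⟨P, hP, h0, h1⟩
    have hs := h.choose_spec
    have : c u k = θ h.choose k := dif_pos h
    rw [this]
    exact hwd _ _ hs.1 hP u k hs.2.1 hs.2.2 h0 h1
  have hsh : ∀ P, Gr V g P → ∀ u n, u + sh n ∈ QQ V g P ↔ u ∈ QQ V g P := fun P hP u n =>
    (hP.dom hV hg hinv).mem_sh
  obtain ⟨S, hS1, hS2⟩ := exactness hV (c := c) (by
    intro u i j k hij hik hjk h0 h1 h2
    have hP := grad_gr hV hg hinv hij h0 h1 h2
    obtain ⟨m0, m1, m2⟩ := grad_mem hV hg hinv hij h0 h1 h2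
    have e : u + ee i + ee j + ee k = u + sh 1 := by rw [← ee_sum hij hik hjk]; abel
    rw [hcv _ hP _ _ m0 m1, hcv _ hP _ _ m1 m2, hcv _ hP _ _ m2 (by rw [e, hsh _ hP]; exact m0),
      ← sum3 hij hik hjk]
    exact (hθ _ hP).1) (by
    intro u n k
    by_cases h : Ex u k
    · obtain ⟨P, hP, h0, h1⟩ := h
      rw [hcv P hP u k h0 h1, hcv P hP (u + sh n) k ((hsh P hP _ _).2 h0)
        (by rw [sh_c1, hsh P hP]; exact h1)]
    · have h' : ¬ Ex (u + sh n) k := by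
        rintro ⟨P, hP, h0, h1⟩
        rw [sh_c1, hsh P hP] at h1
        rw [hsh P hP] at h0
        exact h ⟨P, hP, h0, h1⟩
      have e1 : c u k = 0 := dif_neg h
      have e2 : c (u + sh n) k = 0 := dif_neg h'
      rw [e1, e2])
  have hS3 : ∀ P, Gr V g P → ∀ u k, u ∈ QQ V g P → u + ee k ∈ QQ V g P →
      S (u + ee k) - S u = θ P k := by
    intro P hP u k h0 h1
    rw [hS2 u k h0.1 h1.1, hcv P hP u k h0 h1]
  have hgood : ∀ s : ℝ, Good V g (fun v => if v ∈ V then s * (S v - S v0) else 0) := by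
    intro s
    refine ⟨?_, ?_, ?_, ?_⟩
    · intro p n
      simp only [hV.mem_sh, hS1 p n]
    · intro p i j hij h0 h1 h2 h3 ht
      have hP := grad_gr hV hg hinv hij h0 h1 h3
      obtain ⟨m0, m1, m3⟩ := grad_mem hV hg hinv hij h0 h1 h3
      have m2 := rhomb_mem hV hg hinv hij h0 h1 h2 h3 ht
      simp only [h0, h1, h2, h3, if_true]
      have e1 := hS3 _ hP _ _ m0 m2
      have e2 := hS3 _ hP _ _ m1 m3
      apply le_of_eq
      have : S (p + ee i) + S (p + ee j) = S p + S (p + ee i + ee j) := by linarith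
      linear_combination s * this
    · intro u k h0 h1 hz ht
      obtain ⟨j, hkj, h2⟩ := hV.tri_edge h0 h1
      obtain ⟨i, hki, hji⟩ := exists_third hkj
      have hP := grad_gr hV hg hinv hkj h0 h1 h2
      obtain ⟨m0, m1, m2⟩ := grad_mem hV hg hinv hkj h0 h1 h2
      have hnot : u + ee k + ee i ∉ QQ V g (grad g u k j) := fun m3 =>
        ht (tt_of_mem hP.1 hji.symm hki.symm hkj.symm m0 m1 m3 m2)
      have hn : nu (grad g u k j) k = 0 := by rw [nu_zero, grad_i]; exact hz
      have e := hS3 _ hP _ _ m0 m1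
      rw [hval _ hP u i j k hji.symm hki.symm hkj.symm m0 m1 hnot] at e
      simp only [hn, ne_eq, not_true_eq_false, if_false] at e
      simp only [h0, h1, if_true]
      linear_combination s * e
    · intro u i j hij h0 h1 h2 hz hz'
      obtain ⟨k, hik, hjk⟩ := exists_third hij
      have hP := grad_gr hV hg hinv hij h0 h1 h2
      obtain ⟨m0, m1, m2⟩ := grad_mem hV hg hinv hij h0 h1 h2
      have hi : nu (grad g u i j) i = 0 := by rw [nu_zero, grad_i]; exact hz
      have hj : nu (grad g u i j) j = 0 := by rw [nu_zero, grad_j' _ _ hij]; exact hz'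
      have hn : ∀ l, nu (grad g u i j) l = 0 := by
        intro l
        rcases fin3_cases hij hik hjk l with rfl | rfl | rfl
        · exact hi
        · exact hj
        · exact nu_two hP.1 hij hik hjk hi hj
      have e1 := hS3 _ hP _ _ m0 m1
      have e2 := hS3 _ hP _ _ m1 m2
      rw [(hθ _ hP).2.2 hn] at e1 e2
      simp only [h0, h1, h2, if_true]
      constructor
      · linear_combination s * e1
      · linear_combination s * e1 + s * e2
  have hzero := hmax _ (hgood 1) (fun v hv => by simp [hv]) (by simp) (Or.inr (by
    have := hgood (-1)
    convert this using 2 with v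
    split_ifs <;> ring))
  obtain ⟨hij, hik, hjk⟩ := sij k0 b0
  have hQ := hP0.dom hV hg hinv
  have h0 := hQ.side_mem hij hik hjk
  have h1 := side_edge hQ hij hik hjk hw0
  have e := hS3 _ hP0 _ _ h0 h1
  rw [(hθ _ hP0).2.1 k0 b0 hw0] at e
  simp only [hk0, ne_eq, not_false_eq_true, if_true] at e
  have z0 := hzero (side (QQ V g P0) (si k0 b0) (sj k0 b0) k0)
  have z1 := hzero (side (QQ V g P0) (si k0 b0) (sj k0 b0) k0 + ee k0)
  simp only [h0.1, h1.1, if_true, one_mul] at z0 z1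
  apply hT0
  rw [← e]; linarith

lemma all_int (hV : Dom V) (hg : Rh V g) (hinv : DInv g)
    (hY : ¬ ∃ P k b, Gr V g P ∧ nu P k ≠ 0 ∧ 0 < wP (QQ V g P) k b) {P : Fin 3 → ℝ}
    (hP : Gr V g P) (k : Fin 3) : nu P k = 0 := by
  by_contra hk
  have hQ := hP.dom hV hg hinv
  push Not at hY
  obtain ⟨k', hkk', hk'⟩ : ∃ k', k' ≠ k ∧ nu P k' ≠ 0 := by
    by_contra hcon
    push Not at hcon
    obtain ⟨k1, h01⟩ : ∃ k1, k ≠ k1 := exists_ne k |>.imp fun _ h => h.symm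
    obtain ⟨k2, h02, h12⟩ := exists_third h01
    exact hk (nu_two hP.1 h12 h01.symm h02.symm (hcon k1 h01.symm) (hcon k2 h02.symm))
  have h1 := hY P k true hP hk
  have h2 := hY P k' false hP hk'
  have h3 := w_pair hQ hkk'.symm true
  simp only [Bool.not_true] at h3
  omega

theorem theoremD (hV : Dom V) {g0 : Z3 → ℝ} (hg0 : Rh V g0) (hinv0 : DInv g0) :
    ∃ g, Rh V g ∧ DInv g ∧ (∀ u k, u ∈ V → u + ee k ∈ V → ∃ z : ℤ, g (u + ee k) - g u = z) ∧
    (∀ u k, u ∈ V → u + ee k ∈ V → Bd V u k → (∃ z : ℤ, g0 (u + ee k) - g0 u = z) →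
      g (u + ee k) - g u = g0 (u + ee k) - g0 u) ∧
    (∀ u i j, i ≠ j → u ∈ V → u + ee i ∈ V → u + ee i + ee j ∈ V →
    (∃ z : ℤ, g0 (u + ee i) - g0 u = z) → (∃ z : ℤ, g0 (u + ee i + ee j) - g0 (u + ee i) = z) →
    g (u + ee i) - g u = g0 (u + ee i) - g0 u ∧
    g (u + ee i + ee j) - g (u + ee i) = g0 (u + ee i + ee j) - g0 (u + ee i)) := by
  obtain ⟨v0, hv0, hc, g, hg, hinv, h1, h2, hmax⟩ := exists_max hV hg0 hinv0
  refine ⟨g, hg, hinv, ?_, h1, h2⟩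
  have hY := step2 hV hg hinv hv0 hmax (fun P hP v hv => step1 hV hg hinv hv0 hc hmax hP hv)
  intro u k hu hk
  obtain ⟨j, hkj, hj⟩ := hV.tri_edge hu hk
  have := all_int hV hg hinv hY (grad_gr hV hg hinv hkj hu hk hj) k
  rw [nu_zero, grad_i] at this
  exact this
end Part10

section Part11
set_option linter.unusedSimpArgs false

/-- lattice coordinates to the plane -/
def ptr (b : Pt) (x : Fin 3 → ℝ) : Pt := b + (x 0 - x 2) • xiv 0 + (x 1 - x 2) • xiv 1
def pti (b : Pt) (p : Z3) : Pt := ptr b (fun l => (p l : ℝ))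

def cx : Pt →ₗ[ℝ] ℝ := LinearMap.fst ℝ ℝ ℝ + (1 / Real.sqrt 3) • LinearMap.snd ℝ ℝ ℝ
def cy : Pt →ₗ[ℝ] ℝ := (2 / Real.sqrt 3) • LinearMap.snd ℝ ℝ ℝ

lemma sqrt3_ne : Real.sqrt 3 ≠ 0 := by positivity
lemma cx0 : cx (xiv 0) = 1 := by simp [cx, xiv]
lemma cx1 : cx (xiv 1) = 0 := by
  have := sqrt3_ne
  simp [cx, xiv]; field_simp; norm_num
lemma cy0 : cy (xiv 0) = 0 := by simp [cy, xiv]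
lemma cy1 : cy (xiv 1) = 1 := by
  have := sqrt3_ne
  simp [cy, xiv]
lemma xiv2 : xiv 2 = - xiv 0 - xiv 1 := by
  ext <;> simp [xiv] <;> norm_num
lemma cx2 : cx (xiv 2) = -1 := by rw [xiv2]; simp [cx0, cx1]
lemma cy2 : cy (xiv 2) = -1 := by rw [xiv2]; simp [cy0, cy1]

lemma cx_ptr (b : Pt) (x : Fin 3 → ℝ) : cx (ptr b x) = cx b + (x 0 - x 2) := by
  simp [ptr, cx0, cx1]
lemma cy_ptr (b : Pt) (x : Fin 3 → ℝ) : cy (ptr b x) = cy b + (x 1 - x 2) := by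
  simp [ptr, cy0, cy1]
lemma cx_pti (b : Pt) (x : Z3) : cx (pti b x) = cx b + (x 0 - x 2) := cx_ptr _ _
lemma cy_pti (b : Pt) (x : Z3) : cy (pti b x) = cy b + (x 1 - x 2) := cy_ptr _ _

lemma pti_ee (b : Pt) (p : Z3) (i : Fin 3) : pti b (p + ee i) = pti b p + xiv i := by
  have : i = 0 ∨ i = 1 ∨ i = 2 := by omega
  rcases this with rfl | rfl | rfl
  · simp [pti, ptr, ee]; module
  · simp [pti, ptr, ee]; module
  · simp [pti, ptr, ee, xiv2]; module

lemma pti_sh (b : Pt) (p : Z3) (n : ℤ) : pti b (p + sh n) = pti b p := by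
  simp [pti, ptr, sh]

lemma pti_eq {b : Pt} {p q : Z3} (h : pti b p = pti b q) : q = p + sh (q 2 - p 2) := by
  have hx := congrArg cx h
  have hy := congrArg cy h
  rw [cx_pti, cx_pti] at hx
  rw [cy_pti, cy_pti] at hy
  have hx' : (p 0 - p 2 : ℤ) = q 0 - q 2 := by exact_mod_cast add_left_cancel hx
  have hy' : (p 1 - p 2 : ℤ) = q 1 - q 2 := by exact_mod_cast add_left_cancel hy
  funext l
  have : l = 0 ∨ l = 1 ∨ l = 2 := by omega
  rcases this with rfl | rfl | rfl <;> simp [sh] <;> omega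

/-- the second direction of a triangle -/
def GridTriangle.dir (T : GridTriangle) : Fin 3 := if T.up then 1 else 2
def GridTriangle.dir3 (T : GridTriangle) : Fin 3 := if T.up then 2 else 1

lemma GridTriangle.dir_ne (T : GridTriangle) : (0 : Fin 3) ≠ T.dir := by
  unfold GridTriangle.dir; split <;> decide
lemma GridTriangle.dir3_ne (T : GridTriangle) : (0 : Fin 3) ≠ T.dir3 := by
  unfold GridTriangle.dir3; split <;> decide
lemma GridTriangle.dir_ne3 (T : GridTriangle) : T.dir ≠ T.dir3 := by
  unfold GridTriangle.dir3 GridTriangle.dir; split <;> decide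

section
variable {b : Pt} {T : GridTriangle} {r : Z3}
lemma tv0 (hr : T.base = pti b r) : T.v0 = pti b r := hr
lemma tv1 (hr : T.base = pti b r) : T.v1 = pti b (r + ee 0) := by
  rw [pti_ee, ← hr]; rfl
lemma tv2 (hr : T.base = pti b r) : T.v2 = pti b (r + ee 0 + ee T.dir) := by
  rw [pti_ee, pti_ee, ← hr]
  unfold GridTriangle.v2 GridTriangle.dir; split <;> rfl
lemma tv3 (hr : T.base = pti b r) : T.v0 = pti b (r + ee 0 + ee T.dir + ee T.dir3) := by
  rw [tv0 hr, add_assoc, add_assoc, ← add_assoc (ee 0),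
    ee_sum T.dir_ne T.dir3_ne T.dir_ne3, pti_sh]

lemma v0_mem (T : GridTriangle) : T.v0 ∈ T.region := subset_convexHull _ _ (by simp)
lemma v1_mem (T : GridTriangle) : T.v1 ∈ T.region := subset_convexHull _ _ (by simp)
lemma v2_mem (T : GridTriangle) : T.v2 ∈ T.region := subset_convexHull _ _ (by simp)

lemma edge_mem {e : Ed} (he : e ∈ T.edgeFinset) : e.1 ∈ T.region ∧ e.2 ∈ T.region := by
  simp [GridTriangle.edgeFinset] at he
  rcases he with rfl | rfl | rfl
  · exact ⟨v0_mem T, v1_mem T⟩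
  · exact ⟨v1_mem T, v2_mem T⟩
  · exact ⟨v2_mem T, v0_mem T⟩

lemma mem_region {z : Pt} (hz : z ∈ T.region) : ∃ a c d : ℝ, 0 ≤ a ∧ 0 ≤ c ∧ 0 ≤ d ∧ a + c + d = 1 ∧
    z = a • T.v0 + c • T.v1 + d • T.v2 := by
  unfold GridTriangle.region at hz
  rw [convexHull_insert (by simp), convexHull_pair] at hz
  simp only [convexJoin_singleton_left, Set.mem_iUnion] at hz
  obtain ⟨w, ⟨a, c, ha, hc, hac, rfl⟩, ⟨s, t, hs, ht, hst, rfl⟩⟩ := hz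
  refine ⟨s, t * a, t * c, hs, by positivity, by positivity, ?_, ?_⟩
  · rw [add_assoc, ← mul_add, hac, mul_one, hst]
  · rw [smul_add, smul_smul, smul_smul, add_assoc]

lemma region_ineq (hr : T.base = pti b r) {x : Fin 3 → ℝ} (hx : ptr b x ∈ T.region) :
    x T.dir3 - r T.dir3 ≤ x T.dir - r T.dir ∧ x T.dir - r T.dir ≤ x 0 - r 0 ∧
     x 0 - r 0 ≤ x T.dir3 - r T.dir3 + 1 := by
  obtain ⟨a, c, d, ha, hc, hd, hs, h⟩ := mem_region hx
  have h1 := congrArg cx h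
  have h2 := congrArg cy h
  rw [tv0 hr, tv1 hr, tv2 hr, cx_ptr] at h1
  rw [tv0 hr, tv1 hr, tv2 hr, cy_ptr] at h2
  simp only [map_add, map_smul, smul_eq_mul, cx_pti, cy_pti] at h1 h2
  have ha' : a = 1 - c - d := by linarith
  subst ha'
  unfold GridTriangle.dir3 GridTriangle.dir at *
  split at h1
  · simp_all [ee]
    refine ⟨?_, ?_, ?_⟩ <;> nlinarith
  · simp_all [ee]
    refine ⟨?_, ?_, ?_⟩ <;> nlinarith

lemma pti_congr {p q : Z3} (n : ℤ) (h : ∀ l, p l = q l + n) : pti b p = pti b q := by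
  have : p = q + sh n := by funext l; simp [sh, h l]
  rw [this, pti_sh]

lemma tri_edges (hr : T.base = pti b r) {u : Z3} {i j k : Fin 3} (hij : i ≠ j) (hik : i ≠ k)
    (hjk : j ≠ k)
    (h : ∃ n, (u = r + sh n ∧ i = 0 ∧ j = T.dir) ∨ (u = r + ee 0 + sh n ∧ i = T.dir ∧ j = T.dir3) ∨
      (u = r + ee 0 + ee T.dir + sh n ∧ i = T.dir3 ∧ j = 0)) :
    (pti b u, pti b (u + ee i)) ∈ T.edgeFinset ∧
    (pti b (u + ee i), pti b (u + ee i + ee j)) ∈ T.edgeFinset ∧ 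
    (pti b (u + ee i + ee j), pti b u) ∈ T.edgeFinset := by
  have key : pti b u = pti b (u + ee i + ee j + ee k) := by
    rw [add_assoc, add_assoc, ← add_assoc (ee i), ee_sum hij hik hjk, pti_sh]
  have e0 := pti_ee b u i
  have e1 := pti_ee b (u + ee i) j
  have h0 := tv0 hr
  have h1 := tv1 hr
  have h2 := tv2 hr
  have h3 := tv3 hr
  rw [pti_ee] at h1
  rw [pti_ee, pti_ee] at h2
  rw [pti_ee, pti_ee, pti_ee] at h3
  rw [e1, e0]
  have h4 := h0.symm.trans h3
  simp only [GridTriangle.edgeFinset, GridTriangle.e0, GridTriangle.e1, GridTriangle.e2,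
    Finset.mem_insert, Finset.mem_singleton, Prod.mk.injEq]
  obtain ⟨n, ⟨rfl, rfl, rfl⟩ | ⟨rfl, rfl, rfl⟩ | ⟨rfl, rfl, rfl⟩⟩ := h
  · rw [pti_sh, h1, h2, h0]; simp
  · rw [pti_sh, pti_ee, h1, h2, h0, ← h4]; simp
  · rw [pti_sh, pti_ee, pti_ee, h1, h2, h0, ← h4]; simp

/-- orientation -/
def cyc (i j : Fin 3) : Prop := j = i + 1

lemma tri_of_center (hr : T.base = pti b r) {u : Z3} {i j : Fin 3} (hij : i ≠ j)
    (hx : ptr b (fun l => (u l : ℝ) + (2 / 3) * (ee i l : ℝ) + (1 / 3) * (ee j l : ℝ)) ∈ T.region) :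
    (pti b u, pti b (u + ee i)) ∈ T.edgeFinset ∧
    (pti b (u + ee i), pti b (u + ee i + ee j)) ∈ T.edgeFinset ∧ 
    (pti b (u + ee i + ee j), pti b u) ∈ T.edgeFinset ∧ (T.up = true ↔ cyc i j) := by
  obtain ⟨k, hik, hjk⟩ := exists_third hij
  obtain ⟨h1, h2, h3⟩ := region_ineq hr hx
  have H : (T.up = true ↔ cyc i j) ∧ 
    ∃ n, (u = r + sh n ∧ i = 0 ∧ j = T.dir) ∨ (u = r + ee 0 + sh n ∧ i = T.dir ∧ j = T.dir3) ∨
      (u = r + ee 0 + ee T.dir + sh n ∧ i = T.dir3 ∧ j = 0) := by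
    have a1 : 3 * u T.dir3 + 2 * ee i T.dir3 + ee j T.dir3 - 3 * r T.dir3 ≤
        3 * u T.dir + 2 * ee i T.dir + ee j T.dir - 3 * r T.dir := by
      have : (3 * u T.dir3 + 2 * ee i T.dir3 + ee j T.dir3 - 3 * r T.dir3 : ℝ) ≤
        3 * u T.dir + 2 * ee i T.dir + ee j T.dir - 3 * r T.dir := by linarith
      exact_mod_cast this
    have a2 : 3 * u T.dir + 2 * ee i T.dir + ee j T.dir - 3 * r T.dir ≤
        3 * u 0 + 2 * ee i 0 + ee j 0 - 3 * r 0 := by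
      have : (3 * u T.dir + 2 * ee i T.dir + ee j T.dir - 3 * r T.dir : ℝ) ≤
        3 * u 0 + 2 * ee i 0 + ee j 0 - 3 * r 0 := by linarith
      exact_mod_cast this
    have a3 : 3 * u 0 + 2 * ee i 0 + ee j 0 - 3 * r 0 ≤
        3 * u T.dir3 + 2 * ee i T.dir3 + ee j T.dir3 - 3 * r T.dir3 + 3 := by
      have : (3 * u 0 + 2 * ee i 0 + ee j 0 - 3 * r 0 : ℝ) ≤
        3 * u T.dir3 + 2 * ee i T.dir3 + ee j T.dir3 - 3 * r T.dir3 + 3 := by linarith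
      exact_mod_cast this
    clear h1 h2 h3 hx hik hjk
    have d1 := T.dir_ne
    have d2 := T.dir3_ne
    have d3 := T.dir_ne3
    have hc : ∀ i j : Fin 3, i ≠ j → ((T.up = true ↔ cyc i j) ↔
       ((i = 0 ∧ j = T.dir) ∨ (i = T.dir ∧ j = T.dir3) ∨ (i = T.dir3 ∧ j = 0))) := by
      unfold cyc GridTriangle.dir GridTriangle.dir3
      cases T.up <;> simp <;> decide
    rw [hc i j hij]
    generalize T.dir = x at *
    generalize T.dir3 = y at *
    clear hc
    obtain ⟨n, hn⟩ : ∃ n, n = u y - r y := ⟨_, rfl⟩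
    rcases fin3_cases d1 d2 d3 i with rfl | rfl | rfl <;>
    rcases fin3_cases d1 d2 d3 j with rfl | rfl | rfl <;>
    first
    | exact absurd rfl hij
    | (exfalso; simp [ee_self, ee_ne, d1, d2, d3, d1.symm, d2.symm, d3.symm] at a1 a2 a3; omega)
    | (refine ⟨by simp, n, ?_⟩
       simp [ee_self, ee_ne, d1, d2, d3, d1.symm, d2.symm, d3.symm] at a1 a2 a3
       simp only [d1, d2, d3, d1.symm, d2.symm, d3.symm, and_true, and_false, false_or, or_false, true_and]
       apply ext3 d1 d2 d3 <;>
        simp [ee_self, ee_ne, sh_apply, d1, d2, d3, d1.symm, d2.symm, d3.symm] <;> omega)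
  obtain ⟨t1, t2, t3⟩ := tri_edges hr hij hik hjk H.2
  exact ⟨t1, t2, t3, H.1⟩

lemma vtx_of_ineq (hr : T.base = pti b r) (p : Z3) 
    (h1 : p T.dir3 - r T.dir3 ≤ p T.dir - r T.dir) (h2 : p T.dir - r T.dir ≤ p 0 - r 0)
    (h3 : p 0 - r 0 ≤ p T.dir3 - r T.dir3 + 1) :
    pti b p = T.v0 ∨ pti b p = T.v1 ∨ pti b p = T.v2 := by
  have d1 := T.dir_ne
  have d2 := T.dir3_ne
  have d3 := T.dir_ne3
  rw [tv0 hr, tv1 hr, tv2 hr]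
  generalize T.dir = x at *
  generalize T.dir3 = y at *
  by_cases c1 : p 0 - r 0 = p y - r y
  · left
    rw [← pti_sh b r (p y - r y)]; congr 1
    apply ext3 d1 d2 d3 <;> simp [sh_apply] <;> omega
  by_cases c2 : p x - r x = p y - r y
  · right; left
    rw [← pti_sh b (r + ee 0) (p y - r y)]; congr 1
    apply ext3 d1 d2 d3 <;> 
      simp [sh_apply, ee_self, ee_ne, d1, d2, d3, d1.symm, d2.symm, d3.symm] <;> omega
  · right; right
    rw [← pti_sh b (r + ee 0 + ee x) (p y - r y)]; congr 1
    apply ext3 d1 d2 d3 <;> 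
      simp [sh_apply, ee_self, ee_ne, d1, d2, d3, d1.symm, d2.symm, d3.symm] <;> omega

lemma int_le_of {a c : ℤ} (h : (a : ℝ) < c + 1) : a ≤ c := by
  have : a < c + 1 := by exact_mod_cast h
  omega

lemma floor_of_mem (hr : T.base = pti b r) {x : Fin 3 → ℝ} (hx : ptr b x ∈ T.region) (p : Z3)
    (h1 : ∀ l, (p l : ℝ) ≤ x l) (h2 : ∀ l, x l < p l + 1) :
    pti b p = T.v0 ∨ pti b p = T.v1 ∨ pti b p = T.v2 := by
  obtain ⟨a1, a2, a3⟩ := region_ineq hr hx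
  apply vtx_of_ineq hr <;> apply int_le_of <;> push_cast <;>
  linarith [h1 0, h1 T.dir, h1 T.dir3, h2 0, h2 T.dir, h2 T.dir3]

lemma ceil_of_mem (hr : T.base = pti b r) {x : Fin 3 → ℝ} (hx : ptr b x ∈ T.region) (p : Z3)
    (h1 : ∀ l, x l ≤ p l) (h2 : ∀ l, (p l : ℝ) < x l + 1) :
    pti b p = T.v0 ∨ pti b p = T.v1 ∨ pti b p = T.v2 := by
  obtain ⟨a1, a2, a3⟩ := region_ineq hr hx
  apply vtx_of_ineq hr <;> apply int_le_of <;> push_cast <;>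
  linarith [h1 0, h1 T.dir, h1 T.dir3, h2 0, h2 T.dir, h2 T.dir3]

end
end Part11

section Part12

def GV (G : ConvexGrid) (b : Pt) : Set Z3 :=
  {p | ∃ T ∈ G.tris, pti b p = T.v0 ∨ pti b p = T.v1 ∨ pti b p = T.v2}

section
variable {G : ConvexGrid} {b : Pt}

lemma base_pti {T0 T : GridTriangle} (h0 : T0 ∈ G.tris) (hT : T ∈ G.tris) :
    ∃ r : Z3, T.base = pti T0.base r := by
  obtain ⟨m, n, h⟩ := G.aligned T hT T0 h0
  refine ⟨![m, n, 0], ?_⟩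
  have : T.base = T0.base + ((m : ℝ) • xiv 0 + (n : ℝ) • xiv 1) := by rw [← h]; abel
  simp [pti, ptr, this, add_assoc]

/-- all triangles are aligned with the base point -/
def Al (G : ConvexGrid) (b : Pt) : Prop := ∀ T ∈ G.tris, ∃ r : Z3, T.base = pti b r

lemma tri_mem {T : GridTriangle} (hT : T ∈ G.tris) {r : Z3} (hr : T.base = pti b r) :
    r ∈ GV G b ∧ r + ee 0 ∈ GV G b ∧ r + ee 0 + ee T.dir ∈ GV G b :=
  ⟨⟨T, hT, Or.inl (tv0 hr).symm⟩, ⟨T, hT, Or.inr (Or.inl (tv1 hr).symm)⟩,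
    ⟨T, hT, Or.inr (Or.inr (tv2 hr).symm)⟩⟩

lemma region_sub {T : GridTriangle} (hT : T ∈ G.tris) {z : Pt} (hz : z ∈ T.region) :
    z ∈ G.region := Set.mem_biUnion hT hz

lemma exists_tri {z : Pt} (hz : z ∈ G.region) : ∃ T ∈ G.tris, z ∈ T.region := by
  simpa [ConvexGrid.region] using hz

lemma GV_region {p : Z3} (hp : p ∈ GV G b) : pti b p ∈ G.region := by
  obtain ⟨T, hT, h | h | h⟩ := hp <;> rw [h]
  · exact region_sub hT (v0_mem T)
  · exact region_sub hT (v1_mem T)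
  · exact region_sub hT (v2_mem T)

lemma GV_floor (ha : Al G b) {x : Fin 3 → ℝ} (hx : ptr b x ∈ G.region) (p : Z3)
    (h1 : ∀ l, (p l : ℝ) ≤ x l) (h2 : ∀ l, x l < p l + 1) : p ∈ GV G b := by
  obtain ⟨T, hT, h⟩ := exists_tri hx
  obtain ⟨r, hr⟩ := ha T hT
  exact ⟨T, hT, floor_of_mem hr h p h1 h2⟩

lemma GV_ceil (ha : Al G b) {x : Fin 3 → ℝ} (hx : ptr b x ∈ G.region) (p : Z3)
    (h1 : ∀ l, x l ≤ p l) (h2 : ∀ l, (p l : ℝ) < x l + 1) : p ∈ GV G b := by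
  obtain ⟨T, hT, h⟩ := exists_tri hx
  obtain ⟨r, hr⟩ := ha T hT
  exact ⟨T, hT, ceil_of_mem hr h p h1 h2⟩

lemma mid_eq (p q : Z3) : ptr b (fun l => ((p l : ℝ) + q l) / 2) =
    (1 / 2 : ℝ) • pti b p + (1 / 2 : ℝ) • pti b q := by
  simp only [pti, ptr]; module

lemma GV_mid {p q : Z3} (hp : p ∈ GV G b) (hq : q ∈ GV G b) :
    ptr b (fun l => ((p l : ℝ) + q l) / 2) ∈ G.region := by
  rw [mid_eq]
  exact G.convex (GV_region hp) (GV_region hq) (by norm_num) (by norm_num) (by norm_num)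

lemma GV_mid_floor (ha : Al G b) {p q : Z3} (hp : p ∈ GV G b) (hq : q ∈ GV G b) :
    (fun l => (p l + q l) / 2 : Z3) ∈ GV G b := by
  apply GV_floor ha (GV_mid hp hq)
  · intro l
    have : 2 * ((p l + q l) / 2) ≤ p l + q l := by omega
    have : (2 * ((p l + q l) / 2 : ℤ) : ℝ) ≤ p l + q l := by exact_mod_cast this
    linarith
  · intro l
    have : p l + q l < 2 * ((p l + q l) / 2) + 2 := by omega
    have : (p l + q l : ℝ) < 2 * ((p l + q l) / 2 : ℤ) + 2 := by exact_mod_cast this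
    linarith

lemma GV_mid_ceil (ha : Al G b) {p q : Z3} (hp : p ∈ GV G b) (hq : q ∈ GV G b) :
    (fun l => (p l + q l + 1) / 2 : Z3) ∈ GV G b := by
  apply GV_ceil ha (GV_mid hp hq)
  · intro l
    have : p l + q l ≤ 2 * ((p l + q l + 1) / 2) := by omega
    have : (p l + q l : ℝ) ≤ 2 * ((p l + q l + 1) / 2 : ℤ) := by exact_mod_cast this
    linarith
  · intro l
    have : 2 * ((p l + q l + 1) / 2) < p l + q l + 2 := by omega
    have : (2 * ((p l + q l + 1) / 2 : ℤ) : ℝ) < p l + q l + 2 := by exact_mod_cast this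
    linarith

lemma GV_inf (ha : Al G b) (N : ℕ) : ∀ p q : Z3, p ∈ GV G b → q ∈ GV G b →
    (∀ l, p l - q l ≤ N ∧ q l - p l ≤ N) → p ⊓ q ∈ GV G b := by
  induction N using Nat.strong_induction_on with
  | _ N ih =>
  intro p q hp hq h
  have hm := GV_mid_floor ha hp hq
  by_cases hN : N ≤ 1
  · convert hm using 1
    funext l
    have := h l
    simp only [Pi.inf_apply]
    omega
  · have h1 := ih (N - 1) (by omega) p _ hp hm (by intro l; have := h l; omega)
    have h2 := ih (N - 1) (by omega) q _ hq hm (by intro l; have := h l; omega)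
    have h3 := ih (N - 1) (by omega) _ _ h1 h2 (by
      intro l; have := h l; simp only [Pi.inf_apply]; omega)
    convert h3 using 1
    funext l
    have := h l
    simp only [Pi.inf_apply]
    omega

lemma GV_sup (ha : Al G b) (N : ℕ) : ∀ p q : Z3, p ∈ GV G b → q ∈ GV G b →
    (∀ l, p l - q l ≤ N ∧ q l - p l ≤ N) → p ⊔ q ∈ GV G b := by
  induction N using Nat.strong_induction_on with
  | _ N ih =>
  intro p q hp hq h
  have hm := GV_mid_ceil ha hp hq
  by_cases hN : N ≤ 1
  · convert hm using 1
    funext l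
    have := h l
    simp only [Pi.sup_apply]
    omega
  · have h1 := ih (N - 1) (by omega) p _ hp hm (by intro l; have := h l; omega)
    have h2 := ih (N - 1) (by omega) q _ hq hm (by intro l; have := h l; omega)
    have h3 := ih (N - 1) (by omega) _ _ h1 h2 (by
      intro l; have := h l; simp only [Pi.sup_apply]; omega)
    convert h3 using 1
    funext l
    have := h l
    simp only [Pi.sup_apply]
    omega

lemma exists_bd (p q : Z3) : ∃ N : ℕ, ∀ l, p l - q l ≤ N ∧ q l - p l ≤ N := by
  refine ⟨(nrm (p - q)).toNat, fun l => ?_⟩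
  have := le_nrm (p - q) l
  rw [Pi.sub_apply, abs_le] at this
  omega

lemma GV_dom (ha : Al G b) : Dom (GV G b) where
  diag p n hp := by
    obtain ⟨T, hT, h⟩ := hp
    exact ⟨T, hT, by rwa [pti_sh]⟩
  inf p q hp hq := by
    obtain ⟨N, h⟩ := exists_bd p q
    exact GV_inf ha N p q hp hq h
  sup p q hp hq := by
    obtain ⟨N, h⟩ := exists_bd p q
    exact GV_sup ha N p q hp hq h
  tri := by
    obtain ⟨T, hT⟩ := G.nonempty
    obtain ⟨r, hr⟩ := ha T hT
    obtain ⟨h0, h1, h2⟩ := tri_mem hT hr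
    exact ⟨r, 0, T.dir, T.dir_ne, h0, h1, h2⟩
  fin := by
    have hf : (⋃ T ∈ G.tris, ({T.v0, T.v1, T.v2} : Set Pt)).Finite :=
      Set.Finite.biUnion G.tris.finite_toSet (fun T _ => by simp)
    refine Set.Finite.of_injOn (f := pti b) ?_ ?_ hf
    · rintro p ⟨⟨T, hT, h⟩, -⟩
      exact Set.mem_biUnion hT (by simpa using h)
    · rintro p ⟨-, hp⟩ q ⟨-, hq⟩ h
      have := pti_eq h
      rw [this, hp, hq]; funext l; simp [sh]

lemma GV_tri (ha : Al G b) {u : Z3} {i j : Fin 3} (hij : i ≠ j) (h0 : u ∈ GV G b)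
    (h1 : u + ee i ∈ GV G b) (h2 : u + ee i + ee j ∈ GV G b) :
    ∃ T ∈ G.tris, (pti b u, pti b (u + ee i)) ∈ T.edgeFinset ∧
    (pti b (u + ee i), pti b (u + ee i + ee j)) ∈ T.edgeFinset ∧ 
    (pti b (u + ee i + ee j), pti b u) ∈ T.edgeFinset ∧ (T.up = true ↔ cyc i j) := by
  have hc : ptr b (fun l => (u l : ℝ) + (2 / 3) * (ee i l : ℝ) + (1 / 3) * (ee j l : ℝ)) ∈ G.region := by
    have hm := G.convex (G.convex (GV_region h0) (GV_region h1) (by norm_num : (0 : ℝ) ≤ 1 / 2)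
      (by norm_num : (0 : ℝ) ≤ 1 / 2) (by norm_num)) (GV_region h2) (by norm_num : (0 : ℝ) ≤ 2 / 3)
      (by norm_num : (0 : ℝ) ≤ 1 / 3) (by norm_num)
    have heq : ptr b (fun l => (u l : ℝ) + (2 / 3) * (ee i l : ℝ) + (1 / 3) * (ee j l : ℝ)) =
      (2 / 3 : ℝ) • ((1 / 2 : ℝ) • pti b u + (1 / 2 : ℝ) • pti b (u + ee i)) +
        (1 / 3 : ℝ) • pti b (u + ee i + ee j) := by
      simp only [pti, ptr, Pi.add_apply, Int.cast_add]; module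
    rw [heq]; exact hm
  obtain ⟨T, hT, h⟩ := exists_tri hc
  obtain ⟨r, hr⟩ := ha T hT
  exact ⟨T, hT, tri_of_center hr hij h⟩

lemma GV_edge (ha : Al G b) {e : Ed} (he : e ∈ G.edges) :
    ∃ u k, u ∈ GV G b ∧ u + ee k ∈ GV G b ∧ e = (pti b u, pti b (u + ee k)) := by
  simp only [ConvexGrid.edges, Finset.mem_biUnion] at he
  obtain ⟨T, hT, he⟩ := he
  obtain ⟨r, hr⟩ := ha T hT
  obtain ⟨h0, h1, h2⟩ := tri_mem hT hr
  simp [GridTriangle.edgeFinset] at he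
  rcases he with rfl | rfl | rfl
  · exact ⟨r, 0, h0, h1, by rw [GridTriangle.e0, ← tv0 hr, ← tv1 hr]⟩
  · exact ⟨r + ee 0, T.dir, h1, h2, by rw [GridTriangle.e1, ← tv1 hr, ← tv2 hr]⟩
  · refine ⟨r + ee 0 + ee T.dir, T.dir3, h2, ?_, by rw [GridTriangle.e2, ← tv2 hr, ← tv3 hr]⟩
    exact ⟨T, hT, Or.inl (tv3 hr).symm⟩

lemma bd_of_boundary (ha : Al G b) {u : Z3} {k : Fin 3} (h0 : u ∈ GV G b) (h1 : u + ee k ∈ GV G b)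
    (he : (pti b u, pti b (u + ee k)) ∈ G.boundary) : Bd (GV G b) u k := by
  by_contra hb
  unfold Bd at hb
  push Not at hb
  have n1 : k + 1 ≠ k := by omega
  have n2 : k + 2 ≠ k := by omega
  obtain ⟨T1, hT1, a1, -, -, c1⟩ := GV_tri ha n1.symm h0 h1 (hb _ n1)
  obtain ⟨T2, hT2, a2, -, -, c2⟩ := GV_tri ha n2.symm h0 h1 (hb _ n2)
  have hne : T1 ≠ T2 := by
    rintro rfl
    have := c2.1 (c1.2 rfl)
    unfold cyc at this
    omega
  simp only [ConvexGrid.boundary, Finset.mem_filter] at he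
  have := Finset.card_le_one.1 he.2.le T1 (by simp [hT1, a1]) T2 (by simp [hT2, a2])
  exact hne this

lemma Rh_of_concave (ha : Al G b) {g : Pt → ℝ} (hg : ConcaveOn ℝ G.region g)
    (haf : ∀ T ∈ G.tris, AffineOn g T.region) : Rh (GV G b) (fun p => g (pti b p)) := by
  intro p i j hij h0 h1 h2 h3
  obtain ⟨T, hT, -, -, e, -⟩ := GV_tri ha hij h0 h1 h3
  obtain ⟨m1, m2⟩ := edge_mem e
  obtain ⟨φ, hφ⟩ := haf T hT
  have hc := hg.2 (GV_region h1) (GV_region h2) (by norm_num : (0 : ℝ) ≤ 1 / 2)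
      (by norm_num : (0 : ℝ) ≤ 1 / 2) (by norm_num)
  have hmid : (1 / 2 : ℝ) • pti b (p + ee i) + (1 / 2 : ℝ) • pti b (p + ee j) = 
     (1 / 2 : ℝ) • pti b p + (1 / 2 : ℝ) • pti b (p + ee i + ee j) := by
    simp only [pti_ee]; module
  have hmr : (1 / 2 : ℝ) • pti b p + (1 / 2 : ℝ) • pti b (p + ee i + ee j) ∈ T.region :=
    convex_convexHull ℝ _ m2 m1 (by norm_num) (by norm_num) (by norm_num)
  have hL := Convex.combo_affine_apply (x := pti b p) (y := pti b (p + ee i + ee j)) (f := φ)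
     (by norm_num : (1 / 2 : ℝ) + 1 / 2 = 1)
  rw [hmid, hφ _ hmr, hL, ← hφ _ m1, ← hφ _ m2] at hc
  simp only [smul_eq_mul] at hc
  show g _ + g _ ≤ g _ + g _
  linarith

/-- supporting affine functions -/
lemma support (ha : Al G b) {f : Z3 → ℝ} (hf : Rh (GV G b) f) (hinv : DInv f) {T : GridTriangle}
    (hT : T ∈ G.tris) : ∃ φ : Pt →ᵃ[ℝ] ℝ, (∀ v ∈ GV G b, f v ≤ φ (pti b v)) ∧
    ∀ v ∈ GV G b, pti b v = T.v0 ∨ pti b v = T.v1 ∨ pti b v = T.v2 → φ (pti b v) = f v := by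
  obtain ⟨r, hr⟩ := ha T hT
  obtain ⟨h0, h1, h2⟩ := tri_mem hT hr
  obtain ⟨q0, q1, q2⟩ := grad_mem (GV_dom ha) hf hinv T.dir_ne h0 h1 h2
  have hs := grad_sum f r T.dir_ne
  generalize grad f r 0 T.dir = P at *
  let L : Pt →ₗ[ℝ] ℝ := P 0 • cx + P 1 • cy
  have hL : ∀ v : Z3, L (pti b v) = L b + dot P v := by
    intro v
    have : P 2 = - P 0 - P 1 := by rw [Fin.sum_univ_three] at hs; linarith
    simp only [L, LinearMap.add_apply, LinearMap.smul_apply, cx_pti, cy_pti, dot,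
      Fin.sum_univ_three, smul_eq_mul, this]
    ring
  let φ : Pt →ᵃ[ℝ] ℝ := L.toAffineMap + AffineMap.const ℝ Pt (f r - dot P r - L b)
  have hφ : ∀ v : Z3, φ (pti b v) = f r - dot P r + dot P v := by
    intro v
    have : φ (pti b v) = L (pti b v) + (f r - dot P r - L b) := rfl
    rw [this, hL]; ring
  have hle : ∀ v ∈ GV G b, f v ≤ φ (pti b v) := by
    intro v hv
    rw [hφ]
    linarith [q0.2 v hv]
  refine ⟨φ, hle, ?_⟩
  have eqv : ∀ w, w ∈ QQ (GV G b) f P → ∀ v, pti b v = pti b w → φ (pti b v) = f v := by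
    intro w hw v hvw
    have hfe : f v = f w := by
      have := pti_eq hvw
      rw [this, hinv]
    rw [hvw, hfe, hφ]
    linarith [q0.2 w hw.1, hw.2 r h0]
  rintro v - (h | h | h)
  · exact eqv _ q0 v (h.trans (tv0 hr))
  · exact eqv _ q1 v (h.trans (tv1 hr))
  · exact eqv _ q2 v (h.trans (tv2 hr))

lemma extend (ha : Al G b) {f : Z3 → ℝ} (hf : Rh (GV G b) f) (hinv : DInv f) :
    ∃ g : Pt → ℝ, ConcaveOn ℝ G.region g ∧ (∀ T ∈ G.tris, AffineOn g T.region) ∧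
      ∀ v ∈ GV G b, g (pti b v) = f v := by
  have hs : ∀ T : GridTriangle, ∃ φ : Pt →ᵃ[ℝ] ℝ, T ∈ G.tris → (∀ v ∈ GV G b, f v ≤ φ (pti b v)) ∧
    ∀ v ∈ GV G b, pti b v = T.v0 ∨ pti b v = T.v1 ∨ pti b v = T.v2 → φ (pti b v) = f v := by
    intro T
    by_cases hT : T ∈ G.tris
    · obtain ⟨φ, h⟩ := support ha hf hinv hT
      exact ⟨φ, fun _ => h⟩
    · exact ⟨0, fun h => absurd h hT⟩
  choose φ hφ using hs
  let g : Pt → ℝ := fun x => G.tris.inf' G.nonempty (fun T => φ T x)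
  have hgle : ∀ T ∈ G.tris, ∀ x, g x ≤ φ T x := fun T hT x => Finset.inf'_le _ hT
  have hgT : ∀ T ∈ G.tris, ∀ x ∈ T.region, g x = φ T x := by
    intro T hT x hx
    apply le_antisymm (hgle T hT x)
    apply Finset.le_inf'
    intro T' hT'
    have hconv : Convex ℝ {y | φ T y ≤ φ T' y} := by
      intro y hy z hz s t hs ht hst
      simp only [Set.mem_ofPred_eq] at *
      rw [Convex.combo_affine_apply hst, Convex.combo_affine_apply hst]
      simp only [smul_eq_mul]
      nlinarith
    refine convexHull_min ?_ hconv hx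
    obtain ⟨r, hr⟩ := ha T hT
    obtain ⟨h0, h1, h2⟩ := tri_mem hT hr
    have key : ∀ v ∈ GV G b, pti b v = T.v0 ∨ pti b v = T.v1 ∨ pti b v = T.v2 →
        φ T (pti b v) ≤ φ T' (pti b v) := by
      intro v hv h
      rw [(hφ T hT).2 v hv h]
      exact (hφ T' hT').1 v hv
    rintro y (rfl | rfl | rfl)
    · have := key r h0 (Or.inl (tv0 hr).symm)
      rwa [← tv0 hr] at this
    · have := key _ h1 (Or.inr (Or.inl (tv1 hr).symm))
      rwa [← tv1 hr] at this
    · have := key _ h2 (Or.inr (Or.inr (tv2 hr).symm))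
      rwa [← tv2 hr] at this
  refine ⟨g, ⟨G.convex, ?_⟩, fun T hT => ⟨φ T, hgT T hT⟩, ?_⟩
  · intro x _ y _ s t hs ht hst
    obtain ⟨T, hT, h⟩ := Finset.exists_mem_eq_inf' G.nonempty (fun T => φ T (s • x + t • y))
    have h' : g (s • x + t • y) = φ T (s • x + t • y) := h
    rw [h', Convex.combo_affine_apply hst]
    simp only [smul_eq_mul]
    have := hgle T hT x
    have := hgle T hT y
    gcongr
  · rintro v ⟨T, hT, h⟩
    have hm : pti b v ∈ T.region := by
      rcases h with h | h | h <;> rw [h]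
      exacts [v0_mem T, v1_mem T, v2_mem T]
    rw [hgT T hT _ hm]
    exact (hφ T hT).2 v ⟨T, hT, h⟩ h

end

end Part12

/-- Let F be the union of a set B' of boundary edges and the edge
sets of a set T of little triangles, and h₀ : F → ℤ.  If C(G,h₀) is nonempty then it
contains an integer point. -/
theorem stmt2 (G : ConvexGrid) (B' : Finset Ed) (T : Finset GridTriangle)
    (hB' : B' ⊆ G.boundary) (hT : T ⊆ G.tris)
    (F : Finset Ed) (hF : F = B' ∪ T.biUnion GridTriangle.edgeFinset)
    (h₀ : Ed → ℤ)
    (hne : (CC G (↑F) fun e => (h₀ e : ℝ)).Nonempty) :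
    ∃ h ∈ CC G (↑F) fun e => (h₀ e : ℝ), ∀ e ∈ G.edges, ∃ z : ℤ, h e = (z : ℝ) := by
  obtain ⟨h, ⟨-, g, hg, hga, hge⟩, hh⟩ := hne
  obtain ⟨T0, hT0⟩ := G.nonempty
  have ha : Al G T0.base := fun T hT => base_pti hT0 hT
  generalize T0.base = b at ha
  obtain ⟨g1, r1, i1, z1, bd1, t1⟩ := theoremD (GV_dom ha) (Rh_of_concave ha hg hga)
    (fun p n => by simp only [pti_sh])
  obtain ⟨g2, c2, a2, v2⟩ := extend ha r1 i1
  have htri : ∀ S ∈ G.tris, ∀ e ∈ S.edgeFinset, e ∈ G.edges := by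
    intro S hS e he
    exact Finset.mem_biUnion.2 ⟨S, hS, he⟩
  refine ⟨fun e => g2 e.2 - g2 e.1, ⟨⟨?_, g2, c2, a2, fun e _ => rfl⟩, ?_⟩, ?_⟩
  · intro S hS
    simp only [GridTriangle.e0, GridTriangle.e1, GridTriangle.e2]
    ring
  · intro e he
    have hhe := hh e he
    simp only at hhe ⊢
    rw [← hhe]
    rw [hF] at he
    simp only [Finset.coe_union, Set.mem_union, Finset.mem_coe, Finset.mem_biUnion] at he
    rcases he with he | ⟨S, hS, he⟩
    · have heb := hB' he
      have hee : e ∈ G.edges := (Finset.mem_filter.1 heb).1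
      obtain ⟨u, k, hu, hk, rfl⟩ := GV_edge ha hee
      rw [hge _ hee] at hhe ⊢
      simp only at hhe ⊢
      rw [v2 _ hu, v2 _ hk]
      exact bd1 u k hu hk (bd_of_boundary ha hu hk heb) ⟨_, hhe⟩
    · have hSG := hT hS
      obtain ⟨r, hr⟩ := ha S hSG
      obtain ⟨m0, m1, m2⟩ := tri_mem hSG hr
      have hSF : ∀ e ∈ S.edgeFinset, g e.2 - g e.1 = h₀ e := by
        intro e he
        rw [← hge e (htri S hSG e he)]
        apply hh
        rw [hF]
        simp only [Finset.coe_union, Set.mem_union, Finset.mem_coe, Finset.mem_biUnion]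
        exact Or.inr ⟨S, hS, he⟩
      have E0 := hSF S.e0 (by simp [GridTriangle.edgeFinset])
      have E1 := hSF S.e1 (by simp [GridTriangle.edgeFinset])
      simp only [GridTriangle.e0, GridTriangle.e1, tv0 hr, tv1 hr, tv2 hr] at E0 E1
      obtain ⟨A0, A1⟩ := t1 r 0 S.dir S.dir_ne m0 m1 m2 ⟨_, E0⟩ ⟨_, E1⟩
      rw [hge e (htri S hSG e he)]
      simp only [GridTriangle.edgeFinset, Finset.mem_insert, Finset.mem_singleton] at he
      rcases he with rfl | rfl | rfl <;>
      simp only [GridTriangle.e0, GridTriangle.e1, GridTriangle.e2, tv0 hr, tv1 hr, tv2 hr,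
        v2 _ m0, v2 _ m1, v2 _ m2] <;> linarith
  · intro e he
    obtain ⟨u, k, hu, hk, rfl⟩ := GV_edge ha he
    simp only
    rw [v2 _ hu, v2 _ hk]
    exact z1 u k hu hk
end
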